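/- arXiv:1603.04462 — 3 statements merged into one kernel-verified Lean document; each statement's English description precedes it below -/
import Mathlib

section
/- For every γ > 0 there exists n₀ such that the following holds: every 3-uniform hypergraph H on n > n₀ vertices with n even and minimum vertex degree δ₁(H) > (7/16 + γ)·C(n,2) contains a loose Hamilton cycle. -/
open Finset

/-- `H` (a `3`-uniform hypergraph on a vertex type `V` with `n` vertices) contains a loose
Hamilton cycle: there is a cyclic ordering `f : ZMod n → V` of the vertices such that the
`n/2` triples of consecutive vertices `{f (2j), f (2j+1), f (2j+2)}` are all edges of `H`. -/
def HasLooseHamCycle {V : Type} [DecidableEq V] (H : Finset (Finset V)) (n : ℕ) : Prop :=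
  ∃ f : ZMod n → V, Function.Bijective f ∧
    ∀ j : ℕ, j < n / 2 →
      ({f ((2 * j : ℕ) : ZMod n), f ((2 * j + 1 : ℕ) : ZMod n),
        f ((2 * j + 2 : ℕ) : ZMod n)} : Finset V) ∈ H


structure Sym3 {V : Type} (E : V → V → V → Prop) : Prop where
  s12 : ∀ {a b c}, E a b c → E b a c
  s23 : ∀ {a b c}, E a b c → E a c b
  ne : ∀ {a b c}, E a b c → a ≠ b

theorem Sym3.ne23 {V : Type} {E : V → V → V → Prop} (h : Sym3 E) {a b c : V} (e : E a b c) :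
    b ≠ c := h.ne (h.s23 (h.s12 e))

theorem Sym3.ne13 {V : Type} {E : V → V → V → Prop} (h : Sym3 E) {a b c : V} (e : E a b c) :
    a ≠ c := h.ne (h.s23 e)

theorem Sym3.rev {V : Type} {E : V → V → V → Prop} (h : Sym3 E) {a b c : V} (e : E a b c) :
    E c b a := h.s12 (h.s23 (h.s12 e))

inductive LPath {V : Type} [DecidableEq V] (E : V → V → V → Prop) : V → V → Finset V → Prop
  | nil (u : V) : LPath E u u {u}
  | cons {u m v w : V} {S : Finset V} : E u m v → u ∉ S → m ∉ S → LPath E v w S →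
      LPath E u w (insert u (insert m S))

namespace LPath
variable {V : Type} [DecidableEq V] {E : V → V → V → Prop}

theorem left_mem {u v : V} {S : Finset V} (h : LPath E u v S) : u ∈ S := by
  cases h <;> simp

theorem right_mem {u v : V} {S : Finset V} (h : LPath E u v S) : v ∈ S := by
  induction h with
  | nil u => simp
  | cons _ _ _ _ ih => simp [ih]

theorem odd_card (hE : Sym3 E) {u v : V} {S : Finset V} (h : LPath E u v S) : Odd S.card := by
  induction h with
  | nil u => simp
  | cons e hu hm _ ih =>
    rw [card_insert_of_notMem, card_insert_of_notMem hm]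
    · obtain ⟨k, hk⟩ := ih
      exact ⟨k + 1, by omega⟩
    · simp [hE.ne e, hu]

theorem trans {u v w : V} {S T : Finset V} (h : LPath E u v S) (h2 : LPath E v w T)
    (hd : ∀ x ∈ S, x ∈ T → x = v) : LPath E u w (S ∪ T) := by
  induction h with
  | nil u =>
    have := h2.left_mem
    rwa [singleton_union, insert_eq_of_mem this]
  | @cons u m v' w' S e hu hm hp ih =>
    have h3 := ih h2 (fun x hx hxT => hd x (by simp [hx]) hxT)
    have hw := hp.right_mem
    have e1 : insert u (insert m S) ∪ T = insert u (insert m (S ∪ T)) := by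
      simp [insert_union]
    rw [e1]
    refine cons e ?_ ?_ h3
    · intro h
      rcases mem_union.1 h with h | h
      · exact hu h
      · have := hd u (by simp) h
        exact hu (this ▸ hw)
    · intro h
      rcases mem_union.1 h with h | h
      · exact hm h
      · have := hd m (by simp) h
        exact hm (this ▸ hw)

theorem edge (hE : Sym3 E) {u m v : V} (e : E u m v) : LPath E u v {u, m, v} :=
  cons e (by simp [hE.ne13 e]) (by simp [hE.ne23 e]) (nil v)

theorem toFun {u v : V} {S : Finset V} (hE : Sym3 E) (h : LPath E u v S) :
    ∃ (k : ℕ) (l : ℕ → V), l 0 = u ∧ l (2 * k) = v ∧ S = (range (2 * k + 1)).image l ∧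
      Set.InjOn l (range (2 * k + 1)) ∧
      ∀ j < k, E (l (2 * j)) (l (2 * j + 1)) (l (2 * j + 2)) := by
  induction h with
  | nil u => exact ⟨0, fun _ => u, by simp⟩
  | @cons u m v w S e hu hm hp ih =>
    obtain ⟨k, l, h0, h1, h2, h3, h4⟩ := ih
    let l' : ℕ → V := fun i => match i with
      | 0 => u
      | 1 => m
      | (i + 2) => l i
    have hl2 : ∀ i, l' (i + 2) = l i := fun i => rfl
    have hmem : ∀ i, i < 2 * k + 1 → l i ∈ S := by
      intro i hi; rw [h2]; exact mem_image_of_mem _ (mem_range.2 hi)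
    refine ⟨k + 1, l', rfl, h1, ?_, ?_, ?_⟩
    · ext x
      simp only [mem_insert, mem_image, mem_range]
      constructor
      · rintro (rfl | rfl | hx)
        · exact ⟨0, by omega, rfl⟩
        · exact ⟨1, by omega, rfl⟩
        · rw [h2] at hx
          obtain ⟨i, hi, rfl⟩ := mem_image.1 hx
          exact ⟨i + 2, by have := mem_range.1 hi; omega, rfl⟩
      · rintro ⟨i, hi, rfl⟩
        match i, hi with
        | 0, _ => left; rfl
        | 1, _ => right; left; rfl
        | i + 2, hi => right; right; exact hmem i (by omega)
    · intro i hi j hj hij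
      have hi := mem_range.1 (mem_coe.1 hi)
      have hj := mem_range.1 (mem_coe.1 hj)
      match i, hi, j, hj, hij with
      | 0, _, 0, _, _ => rfl
      | 1, _, 1, _, _ => rfl
      | 0, _, 1, _, h => exact absurd h (hE.ne e)
      | 1, _, 0, _, h => exact absurd h.symm (hE.ne e)
      | 0, _, j + 2, hj, h => exact absurd ((show u = l j from h) ▸ hmem j (by omega)) hu
      | j + 2, hj, 0, _, h => exact absurd ((show l j = u from h) ▸ hmem j (by omega)) hu
      | 1, _, j + 2, hj, h => exact absurd ((show m = l j from h) ▸ hmem j (by omega)) hm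
      | j + 2, hj, 1, _, h => exact absurd ((show l j = m from h) ▸ hmem j (by omega)) hm
      | i + 2, hi, j + 2, hj, h =>
        have := h3 (mem_coe.2 (mem_range.2 (by omega : i < 2 * k + 1)))
          (mem_coe.2 (mem_range.2 (by omega : j < 2 * k + 1))) h
        omega
    · intro j hj
      match j, hj with
      | 0, _ =>
        show E u m (l 0)
        rw [h0]; exact e
      | j + 1, hj => exact h4 j (by omega)

end LPath

theorem cycle_of_path {V : Type} [Fintype V] [DecidableEq V] {E : V → V → V → Prop} (hE : Sym3 E)
    {u v m : V} {S : Finset V} (h : LPath E u v S) (hm : m ∉ S) (e : E v m u)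
    (hS : insert m S = univ) {n : ℕ} (hn : Fintype.card V = n) :
    ∃ f : ZMod n → V, Function.Bijective f ∧ ∀ j : ℕ, j < n / 2 →
      E (f ((2 * j : ℕ) : ZMod n)) (f ((2 * j + 1 : ℕ) : ZMod n))
        (f ((2 * j + 2 : ℕ) : ZMod n)) := by
  obtain ⟨k, l, h0, h1, h2, h3, h4⟩ := h.toFun hE
  have hc : S.card = 2 * k + 1 := by rw [h2, card_image_of_injOn h3, card_range]
  have hn2 : n = 2 * k + 2 := by
    rw [← hn, ← card_univ, ← hS, card_insert_of_notMem hm, hc]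
  have hne : NeZero n := ⟨by omega⟩
  let g : ℕ → V := fun i => if i = 2 * k + 1 then m else l i
  have hval : ∀ i : ℕ, i < n → (((i : ℕ) : ZMod n)).val = i := fun i hi => ZMod.val_cast_of_lt hi
  refine ⟨fun x => g x.val, ?_, ?_⟩
  · rw [Fintype.bijective_iff_surjective_and_card]
    refine ⟨?_, by rw [hn, ZMod.card]⟩
    intro x
    have hx : x ∈ insert m S := by rw [hS]; exact mem_univ x
    rcases mem_insert.1 hx with rfl | hx
    · refine ⟨((2 * k + 1 : ℕ) : ZMod n), ?_⟩
      simp only [hval (2 * k + 1) (by omega), g, if_true]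
    · rw [h2] at hx
      obtain ⟨i, hi, rfl⟩ := mem_image.1 hx
      have hi := mem_range.1 hi
      refine ⟨((i : ℕ) : ZMod n), ?_⟩
      simp only [hval i (by omega), g]
      rw [if_neg (by omega)]
  · intro j hj
    have hjk : j < k + 1 := by omega
    simp only [hval (2 * j) (by omega), hval (2 * j + 1) (by omega)]
    rcases Nat.lt_or_ge j k with hjk | hjk
    · rw [hval (2 * j + 2) (by omega)]
      simp only [g]
      rw [if_neg (by omega), if_neg (by omega), if_neg (by omega)]
      exact h4 j hjk
    · have : j = k := by omega
      subst this
      have : ((2 * j + 2 : ℕ) : ZMod n) = 0 := by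
        rw [← hn2]; exact ZMod.natCast_self n
      rw [this, ZMod.val_zero]
      simp only [g, if_true]
      rw [if_neg (by omega), if_neg (by omega), h0, h1]
      exact e


/-- connectors inside `W` robustly available -/
def Supply {V : Type} (E : V → V → V → Prop) (W : Finset V) (M : ℕ) : Prop :=
  ∀ (u v : V) (F : Finset V), F.card ≤ M → ∃ a x b, a ∈ W ∧ x ∈ W ∧ b ∈ W ∧
    a ∉ F ∧ x ∉ F ∧ b ∉ F ∧ a ≠ b ∧ E u a x ∧ E x b v

theorem conn_path {V : Type} [DecidableEq V] {E : V → V → V → Prop} (hE : Sym3 E)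
    {u v a x b : V} (h1 : E u a x) (h2 : E x b v) (hab : a ≠ b) (huv : u ≠ v) (hub : u ≠ b)
    (hva : v ≠ a) : LPath E u v {u, a, x, b, v} := by
  have := (LPath.edge hE h1).trans (LPath.edge hE h2) (by
    intro y hy hy2
    simp only [mem_insert, mem_singleton] at hy hy2
    have := hE.ne h1; have := hE.ne13 h1; have := hE.ne h2
    rcases hy with rfl | rfl | rfl
    · rcases hy2 with rfl | rfl | rfl <;> simp_all
    · rcases hy2 with rfl | rfl | rfl <;> simp_all
    · rfl)
  convert this using 1
  ext y; simp; tauto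

theorem chain {V σ : Type} [DecidableEq V] [DecidableEq σ] {E : V → V → V → Prop} (hE : Sym3 E)
    {W : Finset V} {M : ℕ} (hs : Supply E W M) (u v : σ → V) (J : Finset σ) (hJ : J.Nonempty)
    (hM : 3 * J.card ≤ M) :
    ∃ (C : Finset V) (p q : V), C ⊆ W ∧ C.card ≤ 3 * J.card ∧
      ∀ S : σ → Finset V, (∀ i ∈ J, LPath E (u i) (v i) (S i)) →
        (∀ i ∈ J, ∀ j ∈ J, i ≠ j → Disjoint (S i) (S j)) → (∀ i ∈ J, Disjoint (S i) C) →
        LPath E p q (C ∪ J.biUnion S) := by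
  induction hJ using Finset.Nonempty.cons_induction with
  | singleton i =>
    refine ⟨∅, u i, v i, by simp, by simp, ?_⟩
    intro S h _ _
    simpa using h i (by simp)
  | cons i J hi hJ ih =>
    rw [card_cons] at hM
    obtain ⟨C, p, q, hCW, hCc, hC⟩ := ih (by omega)
    obtain ⟨a, x, b, ha, hx, hb, ha', hx', hb', hab, e1, e2⟩ := hs (v i) p C (by omega)
    refine ⟨{a, x, b} ∪ C, u i, q, ?_, ?_, ?_⟩
    · intro y hy
      simp only [mem_union, mem_insert, mem_singleton] at hy
      rcases hy with (rfl | rfl | rfl) | hy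
      · exact ha
      · exact hx
      · exact hb
      · exact hCW hy
    · rw [card_cons]
      refine (card_union_le _ _).trans ?_
      have := card_le_three (a := a) (b := x) (c := b)
      omega
    · intro S h1 h2 h3
      have hT := hC S (fun j hj => h1 j (mem_cons_of_mem hj))
        (fun j hj k hk => h2 j (mem_cons_of_mem hj) k (mem_cons_of_mem hk))
        (fun j hj => (h3 j (mem_cons_of_mem hj)).mono_right subset_union_right)
      have hP := h1 i (mem_cons_self i J)
      have hdi := h3 i (mem_cons_self i J)
      have hdi2 : Disjoint (S i) (C ∪ J.biUnion S) := by
        rw [disjoint_union_right, disjoint_biUnion_right]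
        exact ⟨hdi.mono_right subset_union_right, fun j hj => h2 i (mem_cons_self i J) j
          (mem_cons_of_mem hj) (fun h => hi (h ▸ hj))⟩
      have hk : ∀ y, y = a ∨ y = x ∨ y = b → y ∉ S i ∧ y ∉ C ∪ J.biUnion S := by
        intro y hy
        have hyC : y ∈ ({a, x, b} : Finset V) ∪ C := by simp; tauto
        refine ⟨fun h => disjoint_left.1 hdi h hyC, fun h => ?_⟩
        rcases mem_union.1 h with h | h
        · rcases hy with rfl | rfl | rfl <;> contradiction
        · obtain ⟨j, hj, hy'⟩ := mem_biUnion.1 h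
          exact disjoint_left.1 (h3 j (mem_cons_of_mem hj)) hy' hyC
      have hvS := hP.right_mem
      have hpT := hT.left_mem
      have hvT : v i ∉ C ∪ J.biUnion S := disjoint_left.1 hdi2 hvS
      have hpS : p ∉ S i := fun h => disjoint_left.1 hdi2 h hpT
      have hc := conn_path hE e1 e2 hab (fun h => hvT (h ▸ hpT))
        (fun h => (hk b (by simp)).1 (h ▸ hvS)) (fun h => (hk a (by simp)).2 (h ▸ hpT))
      have r1 := hc.trans hT (by
        intro y hy hyT
        simp only [mem_insert, mem_singleton] at hy
        rcases hy with rfl | hy | hy | hy | rfl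
        · exact absurd hyT hvT
        · exact absurd hyT (hk y (by simp [hy])).2
        · exact absurd hyT (hk y (by simp [hy])).2
        · exact absurd hyT (hk y (by simp [hy])).2
        · rfl)
      have r2 := hP.trans r1 (by
        intro y hy hyT
        simp only [mem_union, mem_insert, mem_singleton] at hyT
        rcases hyT with (rfl | h | h | h | rfl) | h
        · rfl
        · exact absurd hy (hk y (by simp [h])).1
        · exact absurd hy (hk y (by simp [h])).1
        · exact absurd hy (hk y (by simp [h])).1
        · exact absurd hy hpS
        · exact absurd (mem_union.2 h) (disjoint_left.1 hdi2 hy))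
      have e0 : ({a, x, b} ∪ C) ∪ (cons i J hi).biUnion S
          = S i ∪ ({v i, a, x, b, p} ∪ (C ∪ J.biUnion S)) := by
        rw [cons_eq_insert, biUnion_insert]
        generalize J.biUnion S = B at *
        clear r1 r2 hc hC hT hk h1 h2 h3 hdi2 hvT hpS hP hs
        ext y
        simp only [mem_union, mem_insert, mem_singleton] at hpT ⊢
        constructor
        · rintro ((h | h) | h | h)
          · right; left; right
            rcases h with h | h | h
            · exact Or.inl h
            · exact Or.inr (Or.inl h)
            · exact Or.inr (Or.inr (Or.inl h))
          · exact Or.inr (Or.inr (Or.inl h))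
          · exact Or.inl h
          · exact Or.inr (Or.inr (Or.inr h))
        · rintro (h | (rfl | h | h | h | rfl) | h | h)
          · exact Or.inr (Or.inl h)
          · exact Or.inr (Or.inl hvS)
          · exact Or.inl (Or.inl (Or.inl h))
          · exact Or.inl (Or.inl (Or.inr (Or.inl h)))
          · exact Or.inl (Or.inl (Or.inr (Or.inr h)))
          · rcases hpT with h | h
            · exact Or.inl (Or.inr h)
            · exact Or.inr (Or.inr h)
          · exact Or.inl (Or.inr h)
          · exact Or.inr (Or.inr h)
      rw [e0]; exact r2


theorem count_hit {V : Type} [Fintype V] [DecidableEq V] {m : ℕ} (Y : Finset V) (j : Fin m) :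
    (univ.filter (fun t : Fin m → V => t j ∈ Y)).card * Fintype.card V
      ≤ Y.card * Fintype.card V ^ m := by
  have h := card_le_card_of_injOn (s := (univ.filter (fun t : Fin m → V => t j ∈ Y)) ×ˢ
    (univ : Finset V)) (t := Y ×ˢ (univ : Finset (Fin m → V)))
    (fun p => (p.1 j, Function.update p.1 j p.2)) (by
      rintro ⟨t, v⟩ h
      simp at h ⊢; exact h) (by
      rintro ⟨t, v⟩ _ ⟨t', v'⟩ _ h
      simp only [Prod.mk.injEq] at h
      obtain ⟨h1, h2⟩ := h
      have hv : v = v' := by simpa using congrFun h2 j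
      have ht : t = t' := by
        funext k
        by_cases hk : k = j
        · rw [hk]; exact h1
        · simpa [hk] using congrFun h2 k
      rw [hv, ht])
  simpa [card_product] using h

theorem count_eq {V : Type} [Fintype V] [DecidableEq V] {m : ℕ} {i j : Fin m} (hij : i ≠ j) :
    (univ.filter (fun t : Fin m → V => t i = t j)).card * Fintype.card V
      ≤ Fintype.card V ^ m := by
  have h := card_le_card_of_injOn (s := (univ.filter (fun t : Fin m → V => t i = t j)) ×ˢ
    (univ : Finset V)) (t := (univ : Finset (Fin m → V)))
    (fun p => Function.update p.1 j p.2) (by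
      rintro ⟨t, v⟩ h
      simp) (by
      rintro ⟨t, v⟩ ht ⟨t', v'⟩ ht' h2
      simp only [coe_product, coe_filter, mem_univ, true_and, coe_univ, Set.mem_prod,
        Set.mem_ofPred_eq, Set.mem_univ, and_true] at ht ht'
      simp only at h2
      have hv : v = v' := by simpa using congrFun h2 j
      have hne : ∀ k, k ≠ j → t k = t' k := by
        intro k hk
        simpa [hk] using congrFun h2 k
      have ht : t = t' := by
        funext k
        by_cases hk : k = j
        · rw [hk, ← ht, ← ht']; exact hne i hij
        · exact hne k hk
      rw [hv, ht])
  simpa [card_product] using h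

theorem count_bad {V : Type} [Fintype V] [DecidableEq V] {m : ℕ} (Y : Finset V) :
    (univ.filter (fun t : Fin m → V => ¬ (Function.Injective t ∧ ∀ j, t j ∉ Y))).card *
      Fintype.card V ≤ (m * m + m * Y.card) * Fintype.card V ^ m := by
  have hsub : univ.filter (fun t : Fin m → V => ¬ (Function.Injective t ∧ ∀ j, t j ∉ Y)) ⊆
      (((univ : Finset (Fin m × Fin m)).filter (fun p => p.1 ≠ p.2)).biUnion
        (fun p => univ.filter (fun t : Fin m → V => t p.1 = t p.2))) ∪
      (univ : Finset (Fin m)).biUnion (fun j => univ.filter (fun t : Fin m → V => t j ∈ Y)) := by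
    intro t ht
    simp only [mem_filter, mem_univ, true_and, mem_union, mem_biUnion] at ht ⊢
    by_contra hcon
    push Not at hcon
    apply ht
    refine ⟨?_, hcon.2⟩
    intro i j hij
    by_contra hne
    exact hcon.1 (i, j) hne hij
  have h1 : (((univ : Finset (Fin m × Fin m)).filter (fun p => p.1 ≠ p.2)).biUnion
        (fun p => univ.filter (fun t : Fin m → V => t p.1 = t p.2))).card * Fintype.card V
        ≤ m * m * Fintype.card V ^ m := by
    calc _ ≤ (∑ p ∈ (univ : Finset (Fin m × Fin m)).filter (fun p => p.1 ≠ p.2),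
        (univ.filter (fun t : Fin m → V => t p.1 = t p.2)).card) * Fintype.card V :=
          Nat.mul_le_mul_right _ card_biUnion_le
      _ = ∑ p ∈ (univ : Finset (Fin m × Fin m)).filter (fun p => p.1 ≠ p.2),
        (univ.filter (fun t : Fin m → V => t p.1 = t p.2)).card * Fintype.card V := sum_mul _ _ _
      _ ≤ ∑ p ∈ (univ : Finset (Fin m × Fin m)).filter (fun p => p.1 ≠ p.2),
          Fintype.card V ^ m := sum_le_sum (fun p hp => count_eq (mem_filter.1 hp).2)
      _ ≤ ∑ p ∈ (univ : Finset (Fin m × Fin m)), Fintype.card V ^ m :=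
          sum_le_sum_of_subset (filter_subset _ _)
      _ = _ := by simp
  have h2 : ((univ : Finset (Fin m)).biUnion
      (fun j => univ.filter (fun t : Fin m → V => t j ∈ Y))).card * Fintype.card V
        ≤ m * Y.card * Fintype.card V ^ m := by
    calc _ ≤ (∑ j : Fin m, (univ.filter (fun t : Fin m → V => t j ∈ Y)).card) * Fintype.card V :=
          Nat.mul_le_mul_right _ card_biUnion_le
      _ = ∑ j : Fin m, (univ.filter (fun t : Fin m → V => t j ∈ Y)).card * Fintype.card V :=
          sum_mul _ _ _
      _ ≤ ∑ j : Fin m, Y.card * Fintype.card V ^ m := sum_le_sum (fun p hp => count_hit Y p)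
      _ = _ := by simp [mul_assoc]
  calc _ ≤ (_ + _) * Fintype.card V :=
        Nat.mul_le_mul_right _ ((card_le_card hsub).trans (card_union_le _ _))
    _ ≤ _ := by rw [add_mul, add_mul]; exact Nat.add_le_add h1 h2

theorem sel_step {α ι : Type} [DecidableEq α] (A : Finset α) (hA : A.Nonempty) (I : Finset ι)
    (good : ι → Finset α) (c : ℝ) (w : ι → ℝ) (hw : ∀ i ∈ I, 0 ≤ w i)
    (h : ∀ i ∈ I, c * A.card ≤ ((A.filter (· ∈ good i)).card : ℝ)) :
    ∃ t ∈ A, ∑ i ∈ I, w i * (if t ∈ good i then (1 / 2 : ℝ) else 1)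
      ≤ (1 - c / 2) * ∑ i ∈ I, w i := by
  apply exists_le_of_sum_le hA
  rw [sum_comm, sum_const, nsmul_eq_mul, ← mul_assoc, mul_sum]
  apply sum_le_sum
  intro i hi
  rw [← mul_sum, mul_comm]
  apply mul_le_mul_of_nonneg_right _ (hw i hi)
  have h1 : ∀ t, (if t ∈ good i then (1 / 2 : ℝ) else 1)
    = 1 - (1 / 2) * (if t ∈ good i then (1 : ℝ) else 0) := by
    intro t; split_ifs <;> norm_num
  simp only [h1]
  rw [sum_sub_distrib, ← mul_sum, sum_boole]
  have := h i hi
  simp only [sum_const, nsmul_eq_mul, mul_one]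
  nlinarith

theorem exp_beats (δ : ℝ) (hδ : 0 < δ) : ∃ n0 : ℕ, ∀ n : ℕ, n0 ≤ n →
    1 + 2 * Real.log n ≤ δ * n := by
  have h1 : Filter.Tendsto (fun n : ℕ => (1 + 2 * Real.log n) / (n : ℝ)) Filter.atTop (nhds 0) := by
    have h2 : Filter.Tendsto (fun x : ℝ => (1 + 2 * Real.log x) / x) Filter.atTop (nhds 0) := by
      have h3 := Real.isLittleO_log_id_atTop.tendsto_div_nhds_zero
      have h4 : Filter.Tendsto (fun x : ℝ => x⁻¹ + 2 * (Real.log x / id x)) Filter.atTop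
          (nhds (0 + 2 * 0)) := tendsto_inv_atTop_zero.add (h3.const_mul 2)
      simp only [mul_zero, add_zero] at h4
      refine h4.congr (fun x => ?_)
      simp only [id]; ring
    exact h2.comp tendsto_natCast_atTop_atTop
  have h2 := (h1.eventually (gt_mem_nhds hδ)).and (Filter.eventually_ge_atTop 1)
  obtain ⟨n0, h⟩ := Filter.eventually_atTop.1 h2
  refine ⟨n0, fun n hn => ?_⟩
  obtain ⟨ha, hb⟩ := h n hn
  have : (0 : ℝ) < n := by exact_mod_cast hb
  rw [div_lt_iff₀ this] at ha
  exact ha.le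

theorem selection (m : ℕ) (hm : 0 < m) (c : ℝ) (hc : 0 < c) (hc1 : c ≤ 1) (β : ℝ) (hβ : 0 < β)
    (hβ' : 8 * (m * m) * β ≤ c) : ∃ n0 : ℕ, ∀ (V : Type) [Fintype V] [DecidableEq V] (n : ℕ),
    Fintype.card V = n → n0 ≤ n → ∀ (I : Finset (V × V)) (good : V × V → Finset (Fin m → V)),
    (∀ i ∈ I, c * (n : ℝ) ^ m ≤ ((good i).card : ℝ)) →
    ∀ X : Finset V, 8 * m * (X.card : ℝ) ≤ c * n →
    ∃ F : Finset (Fin m → V), (F.card : ℝ) ≤ β * n ∧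
      (∀ t ∈ F, Function.Injective t ∧ (∀ j, t j ∉ X) ∧ ∃ i ∈ I, t ∈ good i) ∧
      (∀ t ∈ F, ∀ t' ∈ F, t ≠ t' → ∀ j j', t j ≠ t' j') ∧
      ∀ i ∈ I, c * β / 8 * n ≤ ((F.filter (· ∈ good i)).card : ℝ) := by
  obtain ⟨n1, hn1⟩ := exp_beats (c * β / 8) (by positivity)
  obtain ⟨n2, hn2⟩ := exists_nat_gt (8 * (m * m) / c)
  refine ⟨n1 + n2 + 1, ?_⟩
  intro V _ _ n hn hn0 I good hgood X hX
  have hnpos : (0 : ℝ) < n := by exact_mod_cast (by omega : 0 < n)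
  have hnm : 8 * ((m : ℝ) * m) ≤ c * n := by
    rw [div_lt_iff₀ hc] at hn2
    have : (n2 : ℝ) ≤ n := by exact_mod_cast (by omega : n2 ≤ n)
    nlinarith
  rcases I.eq_empty_or_nonempty with hI | hI
  · subst hI
    exact ⟨∅, by simp; positivity, by simp, by simp, by simp⟩
  obtain ⟨i0, hi0⟩ := hI
  -- main induction
  have key : ∀ k : ℕ, (k : ℝ) ≤ β * n → ∃ F : Finset (Fin m → V), F.card ≤ k ∧
      (∀ t ∈ F, Function.Injective t ∧ (∀ j, t j ∉ X)) ∧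
      (∀ t ∈ F, ∀ t' ∈ F, t ≠ t' → ∀ j j', t j ≠ t' j') ∧
      ∑ i ∈ I, (1 / 2 : ℝ) ^ (F.filter (· ∈ good i)).card ≤ (1 - c / 4) ^ k * I.card := by
    intro k
    induction k with
    | zero => intro _; exact ⟨∅, by simp, by simp, by simp, by simp⟩
    | succ k ih =>
      intro hk
      push_cast at hk
      obtain ⟨F, hF1, hF2, hF3, hF4⟩ := ih (by linarith)
      set Y := X ∪ F.biUnion (fun t => univ.image t) with hY
      have hYc : (Y.card : ℝ) ≤ X.card + m * (β * n) := by
        have h1 : Y.card ≤ X.card + F.card * m := by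
          refine (card_union_le _ _).trans (Nat.add_le_add_left ?_ _)
          refine card_biUnion_le_card_mul _ _ _ (fun t _ => ?_)
          refine card_image_le.trans ?_
          simp
        have h2 : (F.card : ℝ) ≤ β * n := by
          have : (F.card : ℝ) ≤ k := by exact_mod_cast hF1
          linarith
        have h3 : (Y.card : ℝ) ≤ X.card + F.card * m := by exact_mod_cast h1
        have : (0 : ℝ) < m := by exact_mod_cast hm
        nlinarith
      set A := univ.filter (fun t : Fin m → V => Function.Injective t ∧ ∀ j, t j ∉ Y) with hAdef
      have hbad := count_bad (m := m) Y
      rw [hn] at hbad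
      set Bd := univ.filter (fun t : Fin m → V => ¬ (Function.Injective t ∧ ∀ j, t j ∉ Y)) with hBd
      have hbad2 : (Bd.card : ℝ) ≤ c / 2 * n ^ m := by
        have h1 : (Bd.card : ℝ) * n ≤ (m * m + m * Y.card) * n ^ m := by exact_mod_cast hbad
        have h2 : ((m : ℝ) * m + m * Y.card) ≤ c / 2 * n := by
          have : (0 : ℝ) < m := by exact_mod_cast hm
          have h3 : (m : ℝ) * Y.card ≤ m * (X.card + m * (β * n)) :=
            mul_le_mul_of_nonneg_left hYc this.le
          have h4 : 8 * (m * m) * β * n ≤ c * n := mul_le_mul_of_nonneg_right hβ' hnpos.le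
          nlinarith
        have h5 : (Bd.card : ℝ) * n ≤ (c / 2 * n ^ m) * n := by
          have : (0 : ℝ) ≤ (n : ℝ) ^ m := by positivity
          nlinarith
        exact le_of_mul_le_mul_right h5 hnpos
      have hAn : (A.card : ℝ) ≤ n ^ m := by
        have : A.card ≤ n ^ m := by
          refine (card_le_univ A).trans ?_
          simp [hn]
        exact_mod_cast this
      have hAi : ∀ i ∈ I, c / 2 * n ^ m ≤ ((A.filter (· ∈ good i)).card : ℝ) := by
        intro i hi
        have h1 : (good i).card ≤ (A.filter (· ∈ good i)).card + Bd.card := by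
          refine le_trans (card_le_card ?_) (card_union_le _ _)
          intro t ht
          by_cases h : Function.Injective t ∧ ∀ j, t j ∉ Y
          · exact mem_union_left _ (by simp [hAdef, h.1, ht]; exact h.2)
          · exact mem_union_right _ (by rw [hBd]; exact mem_filter.2 ⟨mem_univ _, h⟩)
        have h2 : ((good i).card : ℝ) ≤ (A.filter (· ∈ good i)).card + Bd.card := by
          exact_mod_cast h1
        have := hgood i hi
        linarith
      have hAne : A.Nonempty := by
        have h1 := hAi i0 hi0
        have h2 : (0 : ℝ) < ((A.filter (· ∈ good i0)).card : ℝ) :=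
          lt_of_lt_of_le (by positivity) h1
        have h3 : 0 < (A.filter (· ∈ good i0)).card := by exact_mod_cast h2
        exact (card_pos.1 h3).mono (filter_subset _ _)
      obtain ⟨t, htA, ht⟩ := sel_step A hAne I good (c / 2)
        (fun i => (1 / 2 : ℝ) ^ (F.filter (· ∈ good i)).card) (fun i _ => by positivity)
        (fun i hi => (mul_le_mul_of_nonneg_left hAn (by positivity)).trans (hAi i hi))
      obtain ⟨htinj, htY⟩ := (mem_filter.1 htA).2
      have hdisj : ∀ t' ∈ F, ∀ j j', t j ≠ t' j' := by
        intro t' ht' j j' he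
        apply htY j
        rw [hY, he]
        exact mem_union_right _ (mem_biUnion.2 ⟨t', ht', mem_image_of_mem _ (mem_univ _)⟩)
      have htF : t ∉ F := fun h => hdisj t h ⟨0, hm⟩ ⟨0, hm⟩ rfl
      refine ⟨insert t F, ?_, ?_, ?_, ?_⟩
      · rw [card_insert_of_notMem htF]; omega
      · intro t' ht'
        rcases mem_insert.1 ht' with rfl | ht'
        · exact ⟨htinj, fun j h => htY j (mem_union_left _ h)⟩
        · exact hF2 t' ht'
      · intro t1 h1 t2 h2 hne j j'
        rcases mem_insert.1 h1 with rfl | h1a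
        · rcases mem_insert.1 h2 with rfl | h2a
          · exact absurd rfl hne
          · exact hdisj t2 h2a j j'
        · rcases mem_insert.1 h2 with rfl | h2a
          · exact (hdisj t1 h1a j' j).symm
          · exact hF3 t1 h1a t2 h2a hne j j'
      · calc _ = ∑ i ∈ I, (1 / 2 : ℝ) ^ (F.filter (· ∈ good i)).card *
              (if t ∈ good i then (1 / 2 : ℝ) else 1) := by
              apply sum_congr rfl
              intro i _
              rw [filter_insert]
              split_ifs with h
              · rw [card_insert_of_notMem (fun h => htF (mem_filter.1 h).1), pow_succ]
              · rw [mul_one]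
          _ ≤ _ := ht
          _ ≤ (1 - c / 2 / 2) * ((1 - c / 4) ^ k * I.card) :=
              mul_le_mul_of_nonneg_left hF4 (by linarith)
          _ = _ := by ring
  obtain ⟨F, hF1, hF2, hF3, hF4⟩ := key ⌊β * n⌋₊ (Nat.floor_le (by positivity))
  refine ⟨F.filter (fun t => ∃ i ∈ I, t ∈ good i), ?_, ?_, ?_, ?_⟩
  · have h1 : ((F.filter (fun t => ∃ i ∈ I, t ∈ good i)).card : ℝ) ≤ (⌊β * n⌋₊ : ℝ) := by
      exact_mod_cast (card_le_card (filter_subset _ _)).trans hF1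
    exact h1.trans (Nat.floor_le (by positivity))
  · intro t ht
    obtain ⟨h1, h2⟩ := mem_filter.1 ht
    exact ⟨(hF2 t h1).1, (hF2 t h1).2, h2⟩
  · intro t ht t' ht'
    exact hF3 t (mem_filter.1 ht).1 t' (mem_filter.1 ht').1
  · intro i hi
    have e1 : (F.filter (fun t => ∃ i ∈ I, t ∈ good i)).filter (· ∈ good i)
        = F.filter (· ∈ good i) := by
      ext t; simp only [mem_filter]
      exact ⟨fun h => ⟨h.1.1, h.2⟩, fun h => ⟨⟨h.1, i, hi, h.2⟩, h.2⟩⟩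
    rw [e1]
    set f := (F.filter (· ∈ good i)).card
    have h1 : (1 / 2 : ℝ) ^ f ≤ (1 - c / 4) ^ ⌊β * n⌋₊ * I.card :=
      (single_le_sum (f := fun i => (1 / 2 : ℝ) ^ (F.filter (· ∈ good i)).card)
        (fun i _ => by positivity) hi).trans hF4
    have hIc : (I.card : ℝ) ≤ n ^ 2 := by
      have : I.card ≤ n ^ 2 := by
        refine (card_le_univ I).trans ?_
        rw [Fintype.card_prod, hn, sq]
      exact_mod_cast this
    have h2 : Real.exp (-f) ≤ (1 / 2 : ℝ) ^ f := by
      have : Real.exp (-1) ≤ 1 / 2 := by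
        rw [Real.exp_neg, inv_le_comm₀ (Real.exp_pos _) (by norm_num)]
        have := Real.add_one_le_exp (1 : ℝ)
        norm_num at this ⊢; linarith
      calc Real.exp (-f) = Real.exp (-1) ^ f := by
            rw [← Real.exp_nat_mul]; congr 1; ring
        _ ≤ _ := pow_le_pow_left₀ (Real.exp_pos _).le this f
    have h3 : (1 - c / 4) ^ ⌊β * n⌋₊ ≤ Real.exp (-(c / 4) * (β * n - 1)) := by
      calc (1 - c / 4) ^ ⌊β * n⌋₊ ≤ Real.exp (-(c / 4)) ^ ⌊β * n⌋₊ := by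
            apply pow_le_pow_left₀ (by linarith)
            have := Real.add_one_le_exp (-(c / 4)); linarith
        _ = Real.exp (-(c / 4) * ⌊β * n⌋₊) := by
            rw [← Real.exp_nat_mul]; congr 1; ring
        _ ≤ _ := by
            apply Real.exp_le_exp.2
            have := Nat.lt_floor_add_one (β * n)
            nlinarith
    have h4 : (n : ℝ) ^ 2 = Real.exp (2 * Real.log n) := by
      rw [mul_comm, Real.exp_mul, Real.exp_log hnpos]; norm_cast
    have h5 : Real.exp (-f) ≤ Real.exp (-(c / 4) * (β * n - 1) + 2 * Real.log n) := by
      rw [Real.exp_add, ← h4]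
      exact h2.trans (h1.trans (mul_le_mul h3 hIc (by positivity) (Real.exp_pos _).le))
    have h6 := Real.exp_le_exp.1 h5
    have h7 := hn1 n (by omega)
    nlinarith

section
open scoped Classical

def Deg {V : Type} [Fintype V] (E : V → V → V → Prop) (d : ℝ) (n : ℕ) : Prop :=
  ∀ v, d * (n : ℝ) ^ 2 ≤ ((univ.filter (fun p : V × V => E v p.1 p.2)).card : ℝ)

theorem card_pairs {α β : Type} [Fintype α] [Fintype β] (R : α → β → Prop)
    [DecidablePred fun p : α × β => R p.1 p.2] :
    (univ.filter (fun p : α × β => R p.1 p.2)).card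
      = ∑ a, (univ.filter (fun b => R a b)).card := by
  simp only [card_filter]
  rw [Fintype.sum_prod_type]
  apply sum_congr rfl; intro a _; apply sum_congr rfl; intro b _
  congr

theorem big_nbr {V : Type} [Fintype V] {n : ℕ}
    (R : V → V → Prop) (hR : ∀ a b, R a b → R b a)
    (hT : (7 / 16 : ℝ) * n ^ 2 ≤ ((univ.filter (fun p : V × V => R p.1 p.2)).card : ℝ))
    (G : Finset V)
    (hb : ((univ.filter (fun p : V × V => R p.1 p.2 ∧ p.1 ∉ G)).card : ℝ) ≤ (n : ℝ) ^ 2 / 64) :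
    (5 / 8 : ℝ) * n ≤ G.card := by
  have h1 : (univ.filter (fun p : V × V => R p.1 p.2)) ⊆
      G ×ˢ G ∪ (univ.filter (fun p : V × V => R p.1 p.2 ∧ p.1 ∉ G) ∪
        (univ.filter (fun p : V × V => R p.1 p.2 ∧ p.1 ∉ G)).image Prod.swap) := by
    rintro ⟨a, b⟩ h
    simp only [mem_filter, mem_univ, true_and] at h
    by_cases ha : a ∈ G
    · by_cases hb : b ∈ G
      · exact mem_union_left _ (mem_product.2 ⟨ha, hb⟩)
      · refine mem_union_right _ (mem_union_right _ ?_)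
        exact mem_image.2 ⟨(b, a), by simp [hR _ _ h, hb], rfl⟩
    · exact mem_union_right _ (mem_union_left _ (by simp [h, ha]))
  have h2 := (card_le_card h1).trans ((card_union_le _ _).trans
    (Nat.add_le_add_left ((card_union_le _ _).trans (Nat.add_le_add_left card_image_le _)) _))
  rw [card_product] at h2
  have h3 : ((univ.filter (fun p : V × V => R p.1 p.2)).card : ℝ) ≤ G.card * G.card +
    (((univ.filter (fun p : V × V => R p.1 p.2 ∧ p.1 ∉ G)).card : ℝ) +
    ((univ.filter (fun p : V × V => R p.1 p.2 ∧ p.1 ∉ G)).card : ℝ)) := by exact_mod_cast h2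
  have h4 : (0 : ℝ) ≤ G.card := by positivity
  have h5 : (0 : ℝ) ≤ n := by positivity
  by_contra hcon
  push Not at hcon
  nlinarith

theorem two_big {V : Type} [Fintype V] {n : ℕ} (hn : Fintype.card V = n)
    {G1 G2 : Finset V} (h1 : (5 / 8 : ℝ) * n ≤ G1.card) (h2 : (5 / 8 : ℝ) * n ≤ G2.card) :
    (n : ℝ) / 4 ≤ (G1 ∩ G2).card := by
  have h3 := card_union_add_card_inter G1 G2
  have h4 : (G1 ∪ G2).card ≤ n := hn ▸ card_le_univ _
  have h5 : ((G1 ∪ G2).card : ℝ) + (G1 ∩ G2).card = G1.card + G2.card := by exact_mod_cast h3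
  have h6 : ((G1 ∪ G2).card : ℝ) ≤ n := by exact_mod_cast h4
  linarith

theorem conn_nbr {V : Type} [Fintype V] {E : V → V → V → Prop} (hE : Sym3 E)
    {n : ℕ} (hn : Fintype.card V = n) (hd : Deg E (7 / 16) n) (u : V) :
    (5 / 8 : ℝ) * n ≤ (univ.filter (fun x =>
      (n : ℝ) / 64 ≤ ((univ.filter (fun a => E u x a)).card : ℝ))).card := by
  refine big_nbr (E u) (fun a b h => hE.s23 h) (hd u) _ ?_
  rw [card_pairs (fun a b => E u a b ∧ a ∉ (univ.filter (fun x =>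
      (n : ℝ) / 64 ≤ ((univ.filter (fun a => E u x a)).card : ℝ))))]
  push_cast
  calc _ ≤ ∑ a : V, (n : ℝ) / 64 := by
        apply sum_le_sum
        intro a _
        by_cases ha : (n : ℝ) / 64 ≤ ((univ.filter (fun b => E u a b)).card : ℝ)
        · simp [ha]; positivity
        · simp only [mem_filter, mem_univ, true_and, ha, not_false_eq_true, and_true]
          linarith
    _ = _ := by
        rw [sum_const, card_univ, hn, nsmul_eq_mul]; ring

theorem conn_count {V : Type} [Fintype V] {E : V → V → V → Prop} (hE : Sym3 E)
    {n : ℕ} (hn : Fintype.card V = n) (hd : Deg E (7 / 16) n) (u v : V) :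
    (1 / 16384 : ℝ) * n ^ 3 ≤
      ((univ.filter (fun t : Fin 3 → V => E u (t 0) (t 1) ∧ E (t 1) (t 2) v)).card : ℝ) := by
  set G := (univ.filter (fun x =>
      (n : ℝ) / 64 ≤ ((univ.filter (fun a => E u x a)).card : ℝ))) ∩ (univ.filter (fun x =>
      (n : ℝ) / 64 ≤ ((univ.filter (fun a => E v x a)).card : ℝ))) with hG
  have h1 : (n : ℝ) / 4 ≤ G.card := two_big hn (conn_nbr hE hn hd u) (conn_nbr hE hn hd v)
  have h2 : (G.sigma (fun x => (univ.filter (fun a => E u x a)) ×ˢ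
      (univ.filter (fun a => E v x a)))).card ≤
      (univ.filter (fun t : Fin 3 → V => E u (t 0) (t 1) ∧ E (t 1) (t 2) v)).card := by
    apply card_le_card_of_injOn (fun s => ![s.2.1, s.1, s.2.2])
    · rintro ⟨x, a, b⟩ h
      simp only [coe_sigma, Set.mem_sigma_iff, mem_coe, mem_product, mem_filter, mem_univ,
        true_and] at h
      simp only [coe_filter, mem_univ, true_and, Set.mem_ofPred_eq]
      exact ⟨hE.s23 h.2.1, hE.s12 (hE.s23 (hE.s12 (h.2.2))) |> hE.s23 |> hE.s12 |> hE.s23 |>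
        fun h => (by first | exact h | exact hE.s23 h | exact hE.s12 h | exact hE.rev h |
          exact hE.s12 (hE.s23 h) | exact hE.s23 (hE.s12 h))⟩
    · rintro ⟨x, a, b⟩ _ ⟨x', a', b'⟩ _ h
      simp at h
      obtain ⟨rfl, rfl, rfl⟩ := h
      rfl
  rw [card_sigma] at h2
  have h3 : ∑ x ∈ G, ((n : ℝ) / 64) * (n / 64) ≤ ∑ x ∈ G, (((univ.filter (fun a => E u x a)) ×ˢ
      (univ.filter (fun a => E v x a))).card : ℝ) := by
    apply sum_le_sum
    intro x hx
    rw [hG] at hx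
    simp only [mem_inter, mem_filter, mem_univ, true_and] at hx
    rw [card_product]; push_cast
    exact mul_le_mul hx.1 hx.2 (by positivity) (by positivity)
  have h4 : (∑ x ∈ G, (((univ.filter (fun a => E u x a)) ×ˢ
      (univ.filter (fun a => E v x a))).card : ℝ)) ≤
      ((univ.filter (fun t : Fin 3 → V => E u (t 0) (t 1) ∧ E (t 1) (t 2) v)).card : ℝ) := by
    exact_mod_cast h2
  rw [sum_const, nsmul_eq_mul] at h3
  have h5 : (0 : ℝ) ≤ (n : ℝ) / 64 * (n / 64) := by positivity
  nlinarith [mul_le_mul_of_nonneg_right h1 h5]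

theorem c4_count {α : Type} [Fintype α] (f : α → α → ℝ)
    (hs : ∀ a b, f a b = f b a) {n : ℕ} (hn : Fintype.card α = n) :
    (∑ x, ∑ y, f x y) ^ 4 ≤ (n : ℝ) ^ 4 *
      ∑ x, ∑ y, ∑ u, ∑ v, f x u * f u v * f v y * f x y := by
  have e1 : ∑ x, ∑ y, ∑ u, ∑ v, f x u * f u v * f v y * f x y
      = ∑ p : α × α, (∑ u, f p.1 u * f u p.2) ^ 2 := by
    rw [Fintype.sum_prod_type]
    apply sum_congr rfl; intro x _
    calc _ = ∑ y, ∑ v, ∑ u, f x u * f u v * f v y * f x y := by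
          apply sum_congr rfl; intro y _; exact sum_comm
      _ = ∑ v, ∑ y, ∑ u, f x u * f u v * f v y * f x y := sum_comm
      _ = _ := by
          apply sum_congr rfl; intro v _
          rw [sq, sum_mul_sum, sum_comm]
          apply sum_congr rfl; intro u _
          apply sum_congr rfl; intro y _
          rw [hs y v]; ring
  have e2 : ∑ p : α × α, (∑ u, f p.1 u * f u p.2) = ∑ u, (∑ x, f x u) ^ 2 := by
    rw [sum_comm]
    apply sum_congr rfl; intro u _
    rw [Fintype.sum_prod_type, sq, sum_mul_sum]
    apply sum_congr rfl; intro x _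
    apply sum_congr rfl; intro v _
    simp only [hs u v]
  have e3 : ∑ u, (∑ x, f x u) = ∑ x, ∑ y, f x y := sum_comm
  have i1 := sq_sum_le_card_mul_sum_sq (s := (univ : Finset (α × α)))
    (f := fun p => ∑ u, f p.1 u * f u p.2)
  have i2 := sq_sum_le_card_mul_sum_sq (s := (univ : Finset α)) (f := fun u => ∑ x, f x u)
  rw [e2, ← e1] at i1
  rw [e3] at i2
  rw [card_univ, Fintype.card_prod, hn] at i1
  rw [card_univ, hn] at i2
  set N := ∑ x, ∑ y, f x y
  set D := ∑ u, (∑ x, f x u) ^ 2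
  set Q := ∑ x, ∑ y, ∑ u, ∑ v, f x u * f u v * f v y * f x y
  push_cast at i1
  have hD : 0 ≤ D := sum_nonneg (fun _ _ => sq_nonneg _)
  calc N ^ 4 = (N ^ 2) ^ 2 := by ring
    _ ≤ (n * D) ^ 2 := pow_le_pow_left₀ (sq_nonneg _) i2 2
    _ = n ^ 2 * D ^ 2 := by ring
    _ ≤ n ^ 2 * (n * n * Q) := mul_le_mul_of_nonneg_left i1 (by positivity)
    _ = _ := by ring

/-- triples `(t,u,v)` with `x-u-v-y` a walk in the link of `t`. -/
noncomputable def W3 {V : Type} [Fintype V] (E : V → V → V → Prop) (x y : V) :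
    Finset (V × V × V) :=
  univ.filter (fun q => E x q.2.1 q.1 ∧ E q.2.1 q.2.2 q.1 ∧ E q.2.2 y q.1)

theorem W3_symm {V : Type} [Fintype V] {E : V → V → V → Prop} (hE : Sym3 E) (x y : V) :
    (W3 E x y).card = (W3 E y x).card := by
  apply card_bij (fun q _ => (q.1, q.2.2, q.2.1))
  · rintro ⟨t, u, v⟩ h
    simp only [W3, mem_filter, mem_univ, true_and] at h ⊢
    exact ⟨hE.s12 h.2.2, hE.s12 h.2.1, hE.s12 h.1⟩
  · rintro ⟨t, u, v⟩ _ ⟨t', u', v'⟩ _ h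
    simp at h ⊢; tauto
  · rintro ⟨t, u, v⟩ h
    simp only [W3, mem_filter, mem_univ, true_and] at h
    refine ⟨(t, v, u), ?_, rfl⟩
    simp only [W3, mem_filter, mem_univ, true_and]
    exact ⟨hE.s12 h.2.2, hE.s12 h.2.1, hE.s12 h.1⟩

theorem few_nonS {V : Type} [Fintype V] {E : V → V → V → Prop} (hE : Sym3 E)
    {n : ℕ} (hn : Fintype.card V = n) (η : ℝ) (hη : 0 < η) :
    ((∑ x, (univ.filter (fun p : V × V => E x p.1 p.2 ∧
      ¬ η ^ 4 * n ^ 3 ≤ ((W3 E x p.1).card : ℝ))).card : ℕ) : ℝ) ≤ η * n ^ 3 := by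
  rcases Nat.eq_zero_or_pos n with h0 | hnpos
  · subst h0
    have : IsEmpty V := Fintype.card_eq_zero_iff.1 hn
    simp
  have hnR : (0 : ℝ) < n := by exact_mod_cast hnpos
  set P : V → V → Prop := fun x y => ¬ η ^ 4 * n ^ 3 ≤ ((W3 E x y).card : ℝ) with hP
  have hPs : ∀ x y, P x y ↔ P y x := by
    intro x y; simp only [hP, W3_symm hE x y]
  let f : V → V → V → ℝ := fun t x y => if E x y t ∧ P x y then 1 else 0
  have hfs : ∀ t x y, f t x y = f t y x := by
    intro t x y
    simp only [f]
    congr 1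
    rw [hPs x y]
    simp only [eq_iff_iff]
    exact ⟨fun h => ⟨hE.s12 h.1, h.2⟩, fun h => ⟨hE.s12 h.1, h.2⟩⟩
  have hf0 : ∀ t x y, 0 ≤ f t x y := by intro t x y; simp only [f]; split_ifs <;> norm_num
  have hf1 : ∀ t x y, f t x y ≤ if E x y t then 1 else 0 := by
    intro t x y; simp only [f]
    split_ifs with h1 h2 h2
    · exact le_rfl
    · exact absurd h1.1 h2
    · norm_num
    · norm_num
  set N : V → ℝ := fun t => ∑ x, ∑ y, f t x y with hN
  set Q : V → ℝ := fun t => ∑ x, ∑ y, ∑ u, ∑ v, f t x u * f t u v * f t v y * f t x y with hQ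
  have hc4 : ∀ t, N t ^ 4 ≤ (n : ℝ) ^ 4 * Q t := fun t => c4_count (f t) (hfs t) hn
  have hQsum : ∑ t, Q t ≤ η ^ 4 * n ^ 5 := by
    have e1 : ∑ t, Q t = ∑ x, ∑ y, ∑ t, ∑ u, ∑ v, f t x u * f t u v * f t v y * f t x y := by
      simp only [hQ]
      rw [sum_comm]
      apply sum_congr rfl; intro x _
      rw [sum_comm]
    rw [e1]
    calc _ ≤ ∑ x : V, ∑ y : V, η ^ 4 * (n : ℝ) ^ 3 := by
          apply sum_le_sum; intro x _; apply sum_le_sum; intro y _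
          by_cases hxy : P x y
          · have hb : ∑ t, ∑ u, ∑ v, f t x u * f t u v * f t v y * f t x y
                ≤ ((W3 E x y).card : ℝ) := by
              rw [W3, card_filter]; push_cast
              rw [Fintype.sum_prod_type]
              apply sum_le_sum; intro t _
              rw [Fintype.sum_prod_type]
              apply sum_le_sum; intro u _
              apply sum_le_sum; intro v _
              simp only
              have a1 := hf1 t x u; have a2 := hf1 t u v; have a3 := hf1 t v y
              have b1 := hf0 t x u; have b2 := hf0 t u v; have b3 := hf0 t v y
              have a4 : f t x y ≤ 1 := (hf1 t x y).trans (by split_ifs <;> norm_num)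
              have b4 := hf0 t x y
              have : f t x u * f t u v * f t v y * f t x y ≤
                (if E x u t then 1 else 0) * (if E u v t then 1 else 0) *
                (if E v y t then 1 else 0) * 1 := by gcongr
              refine this.trans (le_of_eq ?_)
              by_cases h1 : E x u t <;> by_cases h2 : E u v t <;> by_cases h3 : E v y t <;>
                simp [h1, h2, h3]
            have : ((W3 E x y).card : ℝ) < η ^ 4 * n ^ 3 := not_le.1 hxy
            linarith
          · have : ∀ t, f t x y = 0 := by intro t; simp [f, hxy]
            simp only [this, mul_zero, sum_const_zero]
            positivity
      _ = _ := by simp [hn]; ring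
  have hsum4 : (∑ t, N t) ^ 4 ≤ (n : ℝ) ^ 3 * ∑ t, N t ^ 4 := by
    have i1 := sq_sum_le_card_mul_sum_sq (s := (univ : Finset V)) (f := N)
    have i2 := sq_sum_le_card_mul_sum_sq (s := (univ : Finset V)) (f := fun t => N t ^ 2)
    rw [card_univ, hn] at i1 i2
    have hD : 0 ≤ ∑ t, N t ^ 2 := sum_nonneg (fun _ _ => sq_nonneg _)
    have e : ∑ t, (N t ^ 2) ^ 2 = ∑ t, N t ^ 4 := by
      apply sum_congr rfl; intro t _; ring
    rw [e] at i2
    calc (∑ t, N t) ^ 4 = ((∑ t, N t) ^ 2) ^ 2 := by ring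
      _ ≤ (n * ∑ t, N t ^ 2) ^ 2 := pow_le_pow_left₀ (sq_nonneg _) i1 2
      _ = n ^ 2 * (∑ t, N t ^ 2) ^ 2 := by ring
      _ ≤ n ^ 2 * (n * ∑ t, N t ^ 4) := mul_le_mul_of_nonneg_left i2 (by positivity)
      _ = _ := by ring
  have hfin : (∑ t, N t) ^ 4 ≤ (η * n ^ 3) ^ 4 := by
    calc (∑ t, N t) ^ 4 ≤ (n : ℝ) ^ 3 * ∑ t, N t ^ 4 := hsum4
      _ ≤ (n : ℝ) ^ 3 * ∑ t, (n : ℝ) ^ 4 * Q t := by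
          gcongr with t _; exact hc4 t
      _ = (n : ℝ) ^ 7 * ∑ t, Q t := by rw [← mul_sum]; ring
      _ ≤ (n : ℝ) ^ 7 * (η ^ 4 * n ^ 5) := by gcongr
      _ = _ := by ring
  have hfin2 := le_of_pow_le_pow_left₀ (by norm_num) (by positivity) hfin
  refine le_trans (le_of_eq ?_) hfin2
  simp only [hN, f]
  push_cast
  rw [sum_comm]
  apply sum_congr rfl; intro x _
  rw [sum_comm, card_filter]
  push_cast
  rw [Fintype.sum_prod_type]


def ACond {V : Type} (E : V → V → V → Prop) (x y : V) (t : Fin 8 → V) : Prop :=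
  E x (t 3) (t 1) ∧ E (t 3) (t 2) (t 1) ∧ E (t 2) (t 0) (t 1) ∧ E (t 3) (t 2) (t 4) ∧
  E (t 0) (t 5) (t 6) ∧ E (t 5) (t 7) (t 6) ∧ E (t 7) y (t 6)

noncomputable def W4 {V : Type} [Fintype V] (E : V → V → V → Prop) (x w : V) :
    Finset ((V × V) × V × V) :=
  univ.filter (fun q => (E x q.1.1 q.2.1 ∧ E q.1.1 q.1.2 q.2.1 ∧ E q.1.2 w q.2.1) ∧
    E q.1.1 q.1.2 q.2.2)

theorem W4_card {V : Type} [Fintype V] (E : V → V → V → Prop)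
    {n : ℕ} (hn : Fintype.card V = n) (x w : V) :
    ((W3 E x w).card : ℝ) ^ 2 ≤ (n : ℝ) ^ 2 * (W4 E x w).card := by
  set a : V × V → ℝ := fun p => ∑ t, if (E x p.1 t ∧ E p.1 p.2 t ∧ E p.2 w t) then 1 else 0
    with ha
  set b : V × V → ℝ := fun p => ∑ t, if (E p.1 p.2 t) then 1 else 0 with hb
  have h1 : ((W3 E x w).card : ℝ) = ∑ p, a p := by
    rw [W3, card_filter]; push_cast
    rw [Fintype.sum_prod_type, sum_comm]
  have h2 : ((W4 E x w).card : ℝ) = ∑ p, a p * b p := by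
    rw [W4, card_filter]; push_cast
    rw [Fintype.sum_prod_type]
    apply sum_congr rfl; intro p _
    rw [Fintype.sum_prod_type, ha, hb, sum_mul_sum]
    apply sum_congr rfl; intro t _
    apply sum_congr rfl; intro t' _
    by_cases hA : E x p.1 t ∧ E p.1 p.2 t ∧ E p.2 w t <;> by_cases hB : E p.1 p.2 t' <;>
      simp [hA, hB]
  have h3 := sq_sum_le_card_mul_sum_sq (s := (univ : Finset (V × V))) (f := a)
  rw [card_univ, Fintype.card_prod, hn] at h3
  push_cast at h3
  have ha0 : ∀ p, 0 ≤ a p := fun p => sum_nonneg (fun t _ => by split_ifs <;> norm_num)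
  have hab : ∀ p, a p ≤ b p := by
    intro p
    apply sum_le_sum; intro t _
    split_ifs with h1 h2 h2
    · exact le_rfl
    · exact absurd h1.2.1 h2
    · norm_num
    · norm_num
  rw [h1, h2]
  calc _ ≤ _ := h3
    _ ≤ (n : ℝ) ^ 2 * ∑ p, a p * b p := by
      rw [← sq]
      gcongr with p _
      rw [sq]
      exact mul_le_mul_of_nonneg_left (hab p) (ha0 p)

theorem absorb_count {V : Type} [Fintype V] {E : V → V → V → Prop} (hE : Sym3 E)
    {n : ℕ} (hn : Fintype.card V = n) (hd : Deg E (7 / 16) n) (η : ℝ) (hη : 0 < η) :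
    ∃ X : Finset V, (X.card : ℝ) ≤ 64 * η * n ∧ ∀ x y, x ∉ X → y ∉ X →
      η ^ 12 / 4 * (n : ℝ) ^ 8 ≤ ((univ.filter (fun t : Fin 8 → V => ACond E x y t)).card : ℝ) := by
  rcases Nat.eq_zero_or_pos n with h0 | hnpos
  · subst h0
    have : IsEmpty V := Fintype.card_eq_zero_iff.1 hn
    exact ⟨∅, by simp, fun x => isEmptyElim x⟩
  have hnR : (0 : ℝ) < n := by exact_mod_cast hnpos
  set B : V → Finset (V × V) := fun x => (univ.filter (fun p : V × V => E x p.1 p.2 ∧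
      ¬ η ^ 4 * n ^ 3 ≤ ((W3 E x p.1).card : ℝ))) with hB
  refine ⟨univ.filter (fun x => (n : ℝ) ^ 2 / 64 < (B x).card), ?_, ?_⟩
  · have h1 := few_nonS hE hn η hη
    push_cast at h1
    have h2 : ∑ x ∈ univ.filter (fun x => (n : ℝ) ^ 2 / 64 < (B x).card), (n : ℝ) ^ 2 / 64 ≤
        ∑ x, ((B x).card : ℝ) := by
      refine le_trans (sum_le_sum (g := fun x => ((B x).card : ℝ)) ?_)
        (sum_le_sum_of_subset_of_nonneg (filter_subset _ _) (fun _ _ _ => by positivity))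
      intro x hx
      exact (mem_filter.1 hx).2.le
    rw [sum_const, nsmul_eq_mul] at h2
    have h3 := h2.trans h1
    have h4 : (0 : ℝ) < n ^ 2 / 64 := by positivity
    refine le_of_mul_le_mul_right ?_ h4
    calc _ ≤ _ := h3
      _ = _ := by ring
  · intro x y hx hy
    set S : V → Finset V := fun x => univ.filter (fun w => η ^ 4 * n ^ 3 ≤ ((W3 E x w).card : ℝ))
      with hS
    have hbig : ∀ x, x ∉ univ.filter (fun x => (n : ℝ) ^ 2 / 64 < (B x).card) →
        (5 / 8 : ℝ) * n ≤ (S x).card := by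
      intro x hx
      refine big_nbr (E x) (fun a b h => hE.s23 h) (hd x) _ ?_
      simp only [mem_filter, mem_univ, true_and, not_lt] at hx
      refine le_trans (le_of_eq ?_) hx
      simp only [hB, hS, mem_filter, mem_univ, true_and]
    have hG := two_big hn (hbig x hx) (hbig y hy)
    have h2 : ((S x ∩ S y).sigma (fun w => W4 E x w ×ˢ W3 E w y)).card ≤
        (univ.filter (fun t : Fin 8 → V => ACond E x y t)).card := by
      apply card_le_card_of_injOn (fun s => ![s.1, s.2.1.2.1, s.2.1.1.2, s.2.1.1.1, s.2.1.2.2,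
        s.2.2.2.1, s.2.2.1, s.2.2.2.2])
      · rintro ⟨w, ⟨⟨u, v⟩, t, t'⟩, ⟨p, q, r⟩⟩ h
        simp only [coe_sigma, Set.mem_sigma_iff, mem_coe, mem_product, mem_filter, mem_univ,
          true_and, W3, W4] at h
        simp only [coe_filter, mem_univ, true_and, Set.mem_ofPred_eq]
        obtain ⟨_, ⟨⟨a, b, c⟩, d⟩, e, f, g⟩ := h
        exact ⟨a, b, c, d, e, f, g⟩
      · rintro ⟨w, ⟨⟨u, v⟩, t, t'⟩, ⟨p, q, r⟩⟩ _ ⟨w', ⟨⟨u', v'⟩, s, s'⟩, ⟨p', q', r'⟩⟩ _ h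
        have h0 := congrFun h 0
        have h1 := congrFun h 1
        have h2 := congrFun h 2
        have h3 := congrFun h 3
        have h4 := congrFun h 4
        have h5 := congrFun h 5
        have h6 := congrFun h 6
        have h7 := congrFun h 7
        simp at h0 h1 h2 h3 h4 h5 h6 h7
        subst h0 h1 h2 h3 h4 h5 h6 h7
        rfl
    rw [card_sigma] at h2
    have h3 : ∑ w ∈ S x ∩ S y, (η ^ 8 * (n : ℝ) ^ 4) * (η ^ 4 * n ^ 3) ≤
        ∑ w ∈ S x ∩ S y, ((W4 E x w ×ˢ W3 E w y).card : ℝ) := by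
      apply sum_le_sum
      intro w hw
      simp only [hS, mem_inter, mem_filter, mem_univ, true_and] at hw
      rw [card_product]; push_cast
      refine mul_le_mul ?_ ?_ (by positivity) (by positivity)
      · have h5 := W4_card E hn x w
        have h6 := pow_le_pow_left₀ (by positivity) hw.1 2
        have h7 : (0 : ℝ) < n ^ 2 := by positivity
        refine le_of_mul_le_mul_left ?_ h7
        calc _ = (η ^ 4 * (n : ℝ) ^ 3) ^ 2 := by ring
          _ ≤ _ := h6.trans h5
      · rw [W3_symm hE]; exact hw.2
    have h4 : ∑ w ∈ S x ∩ S y, ((W4 E x w ×ˢ W3 E w y).card : ℝ) ≤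
        ((univ.filter (fun t : Fin 8 → V => ACond E x y t)).card : ℝ) := by
      exact_mod_cast h2
    rw [sum_const, nsmul_eq_mul] at h3
    refine le_trans ?_ (h3.trans h4)
    have h5 : (0 : ℝ) ≤ (η ^ 8 * (n : ℝ) ^ 4) * (η ^ 4 * n ^ 3) := by positivity
    calc _ = (n : ℝ) / 4 * ((η ^ 8 * (n : ℝ) ^ 4) * (η ^ 4 * n ^ 3)) := by ring
      _ ≤ _ := mul_le_mul_of_nonneg_right hG h5


theorem gen_supply {V : Type} [Fintype V] {E : V → V → V → Prop} (hE : Sym3 E)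
    {n : ℕ} (hn : Fintype.card V = n) (hd : Deg E (7 / 16) n) (X : Finset V) (M : ℕ)
    (h : 16384 * (9 + 3 * ((X.card : ℝ) + M)) < n) : Supply E (univ \ X) M := by
  intro u v F hF
  have hnR : (0 : ℝ) < n := lt_of_le_of_lt (by positivity) h
  have h1 := conn_count hE hn hd u v
  have h2 := count_bad (V := V) (m := 3) (X ∪ F)
  rw [hn] at h2
  have h3 : ((univ.filter (fun t : Fin 3 → V =>
      ¬ (Function.Injective t ∧ ∀ j, t j ∉ X ∪ F))).card : ℝ) * n ≤
      (3 * 3 + 3 * (X ∪ F).card) * (n : ℝ) ^ 3 := by exact_mod_cast h2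
  have h4 : ((X ∪ F).card : ℝ) ≤ X.card + M := by
    exact_mod_cast (card_union_le _ _).trans (Nat.add_le_add_left hF _)
  have h5 : (univ.filter (fun t : Fin 3 → V =>
      ¬ (Function.Injective t ∧ ∀ j, t j ∉ X ∪ F))).card <
      (univ.filter (fun t : Fin 3 → V => E u (t 0) (t 1) ∧ E (t 1) (t 2) v)).card := by
    have : ((univ.filter (fun t : Fin 3 → V =>
      ¬ (Function.Injective t ∧ ∀ j, t j ∉ X ∪ F))).card : ℝ) * n <
      (1 / 16384 : ℝ) * n ^ 3 * n := by
      refine h3.trans_lt ?_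
      have h6 : (3 * 3 + 3 * ((X ∪ F).card : ℝ)) < 1 / 16384 * n := by linarith
      calc _ < 1 / 16384 * (n : ℝ) * n ^ 3 := by gcongr
        _ = _ := by ring
    have := lt_of_mul_lt_mul_right this hnR.le
    exact_mod_cast this.trans_le h1
  obtain ⟨t, ht, ht2⟩ := exists_mem_notMem_of_card_lt_card h5
  simp only [mem_filter, mem_univ, true_and, not_not] at ht ht2
  obtain ⟨hi, hX⟩ := ht2
  simp only [mem_union, not_or] at hX
  exact ⟨t 0, t 1, t 2, by simp [hX], by simp [hX], by simp [hX], (hX 0).2, (hX 1).2, (hX 2).2,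
    fun h => by simpa using hi h, ht.1, ht.2⟩

theorem abs_base {V : Type} {E : V → V → V → Prop} (hE : Sym3 E) {t : Fin 8 → V} {x y : V}
    (ht : Function.Injective t) (h : ACond E x y t) :
    LPath E (t 1) (t 4) {t 1, t 0, t 2, t 3, t 4} ∧ LPath E (t 5) (t 7) {t 5, t 6, t 7} := by
  obtain ⟨h1, h2, h3, h4, h5, h6, h7⟩ := h
  have ne : ∀ i j : Fin 8, i ≠ j → t i ≠ t j := fun i j hij h => hij (ht h)
  refine ⟨?_, LPath.edge hE (hE.s23 h6)⟩
  refine LPath.cons (v := t 2) (hE.rev h3) ?_ ?_ (LPath.edge hE (hE.s12 h4))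
  · simp [ne 1 2, ne 1 3, ne 1 4]
  · simp [ne 0 2, ne 0 3, ne 0 4]

theorem abs_act {V : Type} {E : V → V → V → Prop} (hE : Sym3 E) {t : Fin 8 → V} {x y : V}
    (ht : Function.Injective t) (h : ACond E x y t) (hx : ∀ j, t j ≠ x) (hy : ∀ j, t j ≠ y) :
    LPath E (t 1) (t 4) {t 1, x, t 3, t 2, t 4} ∧
      LPath E (t 5) (t 7) {t 5, t 0, t 6, y, t 7} := by
  obtain ⟨h1, h2, h3, h4, h5, h6, h7⟩ := h
  have ne : ∀ i j : Fin 8, i ≠ j → t i ≠ t j := fun i j hij h => hij (ht h)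
  have hx' : ∀ j, x ≠ t j := fun j h => hx j h.symm
  constructor
  · refine LPath.cons (v := t 3) (hE.s12 (hE.s23 h1)) ?_ ?_ (LPath.edge hE h4)
    · simp [ne 1 2, ne 1 3, ne 1 4]
    · simp [hx']
  · refine LPath.cons (v := t 6) (hE.s12 h5) ?_ ?_ (LPath.edge hE (hE.rev h7))
    · simp [ne 5 6, ne 5 7, hy]
    · simp [ne 0 6, ne 0 7, hy]

def Absrb {V : Type} (E : V → V → V → Prop) (t : Fin 8 → V) (A : Finset V) : Prop :=
  ∃ S1 S2, LPath E (t 1) (t 4) S1 ∧ LPath E (t 5) (t 7) S2 ∧ Disjoint S1 S2 ∧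
    S1 ∪ S2 = univ.image t ∪ A

theorem image8 {V : Type} (t : Fin 8 → V) :
    univ.image t = {t 0, t 1, t 2, t 3, t 4, t 5, t 6, t 7} := by
  ext a
  simp only [mem_image, mem_univ, true_and, mem_insert, mem_singleton]
  constructor
  · rintro ⟨j, rfl⟩; fin_cases j <;> simp
  · rintro (h | h | h | h | h | h | h | h) <;> exact ⟨_, h.symm⟩

theorem absorbs_empty {V : Type} {E : V → V → V → Prop} (hE : Sym3 E) {t : Fin 8 → V} {x y : V}
    (ht : Function.Injective t) (h : ACond E x y t) : Absrb E t ∅ := by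
  have ne : ∀ i j : Fin 8, i ≠ j → t i ≠ t j := fun i j hij h => hij (ht h)
  refine ⟨_, _, (abs_base hE ht h).1, (abs_base hE ht h).2, ?_, ?_⟩
  · simp [ne 1 5, ne 1 6, ne 1 7, ne 0 5, ne 0 6, ne 0 7, ne 2 5, ne 2 6, ne 2 7,
      ne 3 5, ne 3 6, ne 3 7, ne 4 5, ne 4 6, ne 4 7, ne 5 1, ne 5 0, ne 5 2, ne 5 3, ne 5 4,
      ne 6 1, ne 6 0, ne 6 2, ne 6 3, ne 6 4, ne 7 1, ne 7 0, ne 7 2, ne 7 3, ne 7 4]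
  · rw [image8]; ext a; simp; tauto

theorem absorbs_pair {V : Type} {E : V → V → V → Prop} (hE : Sym3 E) {t : Fin 8 → V} {x y : V}
    (ht : Function.Injective t) (h : ACond E x y t) (hx : ∀ j, t j ≠ x) (hy : ∀ j, t j ≠ y)
    (hxy : x ≠ y) : Absrb E t {x, y} := by
  have ne : ∀ i j : Fin 8, i ≠ j → t i ≠ t j := fun i j hij h => hij (ht h)
  refine ⟨_, _, (abs_act hE ht h hx hy).1, (abs_act hE ht h hx hy).2, ?_, ?_⟩
  · have hx' : ∀ j, x ≠ t j := fun j h => hx j h.symm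
    have hy' : ∀ j, y ≠ t j := fun j h => hy j h.symm
    simp [ne 1 5, ne 1 6, ne 1 7, ne 1 0, ne 2 5, ne 2 6, ne 2 7, ne 2 0, ne 3 5, ne 3 6, ne 3 7,
      ne 3 0, ne 4 5, ne 4 6, ne 4 7, ne 4 0, hx, hy, hx', hy', hxy, hxy.symm,
      ne 5 1, ne 5 2, ne 5 3, ne 5 4,
      ne 6 1, ne 6 2, ne 6 3, ne 6 4, ne 7 1, ne 7 2, ne 7 3, ne 7 4,
      ne 0 1, ne 0 2, ne 0 3, ne 0 4]
  · rw [image8]; ext a; simp; tauto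

theorem assign {V τ : Type} (F : Finset τ) (good : V → V → Finset τ) (K : ℕ) (k : ℕ) :
    ∀ (U : Finset V), U.card = 2 * k → k ≤ K →
    (∀ x ∈ U, ∀ y ∈ U, x ≠ y → K ≤ (F.filter (· ∈ good x y)).card) →
    ∃ A : τ → Finset V, (∀ t ∈ F, A t = ∅ ∨ ∃ x y, x ≠ y ∧ A t = {x, y} ∧ t ∈ good x y) ∧
      (∀ t ∈ F, ∀ t' ∈ F, t ≠ t' → Disjoint (A t) (A t')) ∧ F.biUnion A = U ∧
      (F.filter (fun t => A t ≠ ∅)).card ≤ k := by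
  induction k with
  | zero =>
    intro U hU _ _
    refine ⟨fun _ => ∅, by simp, by simp, ?_, by simp⟩
    rw [mul_zero, card_eq_zero] at hU
    subst hU
    ext; simp
  | succ k ih =>
    intro U hU hk hg
    obtain ⟨x, hx, y, hy, hxy⟩ := one_lt_card.1 (by omega : 1 < U.card)
    have hc : ((U.erase x).erase y).card = 2 * k := by
      rw [card_erase_of_mem (mem_erase.2 ⟨hxy.symm, hy⟩), card_erase_of_mem hx]; omega
    have hsub : (U.erase x).erase y ⊆ U := (erase_subset _ _).trans (erase_subset _ _)
    obtain ⟨A, h1, h2, h3, h4⟩ := ih _ hc (by omega)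
      (fun a ha b hb => hg a (hsub ha) b (hsub hb))
    have h5 := hg x hx y hy hxy
    obtain ⟨t, ht, ht2⟩ := exists_mem_notMem_of_card_lt_card
      (lt_of_le_of_lt h4 (by omega : k < (F.filter (· ∈ good x y)).card))
    simp only [mem_filter, not_and, not_not] at ht ht2
    have hAt := ht2 ht.1
    have hdis : ∀ t' ∈ F, x ∉ A t' ∧ y ∉ A t' := by
      intro t' ht'
      have : A t' ⊆ (U.erase x).erase y := h3 ▸ subset_biUnion_of_mem A ht'
      exact ⟨fun h => by simpa using this h, fun h => by simpa using this h⟩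
    refine ⟨Function.update A t {x, y}, ?_, ?_, ?_, ?_⟩
    · intro t' ht'
      by_cases h : t' = t
      · subst h; right; exact ⟨x, y, hxy, by simp, ht.2⟩
      · simpa [Function.update_of_ne h] using h1 t' ht'
    · intro a ha b hb hab
      by_cases h : a = t
      · subst h
        rw [Function.update_self, Function.update_of_ne (Ne.symm hab)]
        simp [hdis b hb]
      · rw [Function.update_of_ne h]
        by_cases h' : b = t
        · subst h'
          rw [Function.update_self]
          simp [hdis a ha]
        · rw [Function.update_of_ne h']; exact h2 a ha b hb hab
    · ext z
      have h3z : (∃ a ∈ F, z ∈ A a) ↔ z ∈ (U.erase x).erase y := by rw [← h3]; simp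
      rw [mem_biUnion]
      constructor
      · rintro ⟨a, ha, hz⟩
        by_cases h : a = t
        · subst h
          rw [Function.update_self] at hz
          simp at hz
          rcases hz with rfl | rfl <;> assumption
        · rw [Function.update_of_ne h] at hz
          exact hsub (h3z.1 ⟨a, ha, hz⟩)
      · intro hz
        by_cases hzx : z = x ∨ z = y
        · exact ⟨t, ht.1, by simpa using hzx⟩
        · push Not at hzx
          obtain ⟨a, ha, hza⟩ := h3z.2 (by simp [hz, hzx])
          refine ⟨a, ha, ?_⟩
          by_cases h : a = t
          · subst h; rw [hAt] at hza; simp at hza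
          · rwa [Function.update_of_ne h]
    · refine (card_le_card (t := insert t (F.filter (fun t => A t ≠ ∅))) ?_).trans
        ((card_insert_le _ _).trans (Nat.add_le_add_right h4 1))
      intro a ha
      simp only [mem_filter] at ha
      by_cases h : a = t
      · simp [h]
      · rw [Function.update_of_ne h] at ha
        exact mem_insert_of_mem (mem_filter.2 ha)


theorem absorbing_path (α : ℝ) (hα : 0 < α) : ∃ a : ℝ, 0 < a ∧ ∃ n0 : ℕ,
    ∀ (V : Type) [Fintype V] (E : V → V → V → Prop) (n : ℕ), Sym3 E → Fintype.card V = n →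
    n0 ≤ n → Deg E (7 / 16) n →
    ∃ (p q : V) (P : Finset V), (P.card : ℝ) ≤ α * n ∧
      ∀ U : Finset V, Disjoint U P → Even U.card → (U.card : ℝ) ≤ a * n →
        LPath E p q (P ∪ U) := by
  obtain ⟨η, hη, hη1, hη2⟩ : ∃ η : ℝ, 0 < η ∧ η ≤ 1 / 10 ^ 8 ∧ η ≤ α / 10 ^ 8 :=
    ⟨min (1 / 10 ^ 8) (α / 10 ^ 8), by positivity, min_le_left _ _, min_le_right _ _⟩
  have hη12 : η ^ 12 ≤ η := pow_le_of_le_one hη.le (by linarith) (by norm_num)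
  set β : ℝ := η ^ 12 / 2048 with hβ
  have hβ0 : 0 < β := by positivity
  have hβη : β ≤ η := by rw [hβ]; linarith
  set c : ℝ := η ^ 12 / 4 with hc
  have hc0 : 0 < c := by positivity
  obtain ⟨n1, hsel⟩ := selection 8 (by norm_num) c hc0 (by rw [hc]; linarith) β hβ0
    (by rw [hc, hβ]; push_cast; linarith)
  refine ⟨c * β / 8, by positivity, max n1 300000, ?_⟩
  intro V _ E n hE hn hn0 hd
  have hn1 : n1 ≤ n := (le_max_left _ _).trans hn0
  have hn2 : (300000 : ℝ) ≤ n := by exact_mod_cast (le_max_right _ _).trans hn0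
  obtain ⟨X0, hX0, habs⟩ := absorb_count hE hn hd η hη
  obtain ⟨F, hF1, hF2, hF3, hF4⟩ := hsel V n hn hn1 ((univ \ X0) ×ˢ (univ \ X0))
    (fun i => univ.filter (fun t : Fin 8 → V => ACond E i.1 i.2 t)) (by
      rintro ⟨x, y⟩ h
      simp only [mem_product, mem_sdiff, mem_univ, true_and] at h
      exact habs x y h.1 h.2) ∅ (by simp; positivity)
  simp only [mem_product, mem_sdiff, mem_univ, true_and, mem_filter] at hF2 hF4
  set Y : Finset V := F.biUnion (fun t => univ.image t) with hY
  have hYc : (Y.card : ℝ) ≤ 8 * η * n := by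
    have : Y.card ≤ F.card * 8 := card_biUnion_le_card_mul _ _ _ (fun t _ =>
      card_image_le.trans (by simp))
    have h2 : (Y.card : ℝ) ≤ F.card * 8 := by exact_mod_cast this
    nlinarith
  set J : Finset (((Fin 8 → V) × Bool) ⊕ V) := (F ×ˢ univ).disjSum (X0 \ Y) with hJ
  have hJc : (J.card : ℝ) ≤ 66 * η * n := by
    have h1 : J.card ≤ F.card * 2 + X0.card := by
      rw [hJ, card_disjSum, card_product]
      simp only [card_univ, Fintype.card_bool]
      exact Nat.add_le_add_left (card_le_card sdiff_subset) _
    have h2 : (J.card : ℝ) ≤ F.card * 2 + X0.card := by exact_mod_cast h1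
    nlinarith
  have hFne : F.Nonempty := by
    have : X0.card < (univ : Finset V).card := by
      rw [card_univ, hn]
      have : (X0.card : ℝ) < n := by nlinarith
      exact_mod_cast this
    obtain ⟨x, _, hx⟩ := exists_mem_notMem_of_card_lt_card this
    have h1 := hF4 (x, x) ⟨hx, hx⟩
    have h2 : (0 : ℝ) < c * β / 8 * n := by positivity
    have h3 : 0 < (F.filter (fun t => ACond E x x t)).card := by exact_mod_cast h2.trans_le h1
    exact (card_pos.1 h3).mono (filter_subset _ _)
  have hJne : J.Nonempty := by
    obtain ⟨t, ht⟩ := hFne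
    exact ⟨Sum.inl (t, true), by simp [hJ, ht]⟩
  have hZc : ((Y ∪ X0).card : ℝ) ≤ 72 * η * n := by
    have : ((Y ∪ X0).card : ℝ) ≤ Y.card + X0.card := by exact_mod_cast card_union_le _ _
    linarith
  have hηn : η * n ≤ 1 / 10 ^ 8 * n := by gcongr
  have hsup := gen_supply hE hn hd (Y ∪ X0) (3 * J.card) (by push_cast; nlinarith)
  obtain ⟨C, p, q, hCW, hCc, hch⟩ := chain hE hsup
    (Sum.elim (fun i => if i.2 then i.1 5 else i.1 1) id)
    (Sum.elim (fun i => if i.2 then i.1 7 else i.1 4) id) J hJne le_rfl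
  refine ⟨p, q, C ∪ (Y ∪ X0), ?_, ?_⟩
  · have h1 : ((C ∪ (Y ∪ X0)).card : ℝ) ≤ C.card + (Y ∪ X0).card := by
      exact_mod_cast card_union_le _ _
    have h2 : (C.card : ℝ) ≤ 3 * J.card := by exact_mod_cast hCc
    have : η * n ≤ α / 10 ^ 8 * n := by gcongr
    nlinarith
  · intro U hUP hUe hUc
    rw [disjoint_union_right, disjoint_union_right] at hUP
    obtain ⟨hUC, hUY, hUX⟩ := hUP
    obtain ⟨k, hk⟩ := hUe
    obtain ⟨A, hA1, hA2, hA3, -⟩ := assign F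
      (fun x y => univ.filter (fun t : Fin 8 → V => ACond E x y t)) k k U (by omega) le_rfl (by
        intro x hx y hy _
        have h1 := hF4 (x, y) ⟨disjoint_left.1 hUX hx, disjoint_left.1 hUX hy⟩
        have h2 : (k : ℝ) ≤ U.card := by exact_mod_cast (by omega : k ≤ U.card)
        simp only [mem_filter, mem_univ, true_and]
        exact_mod_cast h2.trans (hUc.trans h1))
    have hAU : ∀ t ∈ F, A t ⊆ U := fun t ht => hA3 ▸ subset_biUnion_of_mem A ht
    have himY : ∀ t ∈ F, univ.image t ⊆ Y := fun t ht =>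
      subset_biUnion_of_mem (fun t => univ.image t) ht
    have habsb : ∀ t, ∃ S1 S2, t ∈ F → LPath E (t 1) (t 4) S1 ∧ LPath E (t 5) (t 7) S2 ∧
        Disjoint S1 S2 ∧ S1 ∪ S2 = univ.image t ∪ A t := by
      intro t
      by_cases ht : t ∈ F
      · have : Absrb E t (A t) := by
          rcases hA1 t ht with h | ⟨x, y, hxy, hA, hg⟩
          · rw [h]
            obtain ⟨hi, -, i, -, hi2⟩ := hF2 t ht
            exact absorbs_empty hE hi hi2
          · rw [hA]
            have h1 : ∀ z ∈ A t, ∀ j, t j ≠ z := by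
              intro z hz j hj
              exact disjoint_left.1 hUY (hAU t ht hz) (himY t ht (by simp [← hj]))
            exact absorbs_pair hE (hF2 t ht).1 (mem_filter.1 hg).2 (h1 x (by simp [hA]))
              (h1 y (by simp [hA])) hxy
        obtain ⟨S1, S2, h⟩ := this
        exact ⟨S1, S2, fun _ => h⟩
      · exact ⟨∅, ∅, fun h => absurd h ht⟩
    choose S1 S2 hS using habsb
    have hsub : ∀ t ∈ F, ∀ b : Bool, (if b then S2 t else S1 t) ⊆ univ.image t ∪ A t := by
      intro t ht b
      rw [← (hS t ht).2.2.2]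
      cases b <;> simp
    have hCZ : Disjoint C (Y ∪ X0) := by
      rw [disjoint_left]
      intro z hz
      have := hCW hz
      simpa using this
    rw [disjoint_union_right] at hCZ
    have hdj : ∀ t ∈ F, ∀ T : Finset V, Disjoint Y T → Disjoint U T →
        Disjoint (univ.image t ∪ A t) T := by
      intro t ht T h1 h2
      rw [disjoint_union_left]
      exact ⟨h1.mono_left (himY t ht), h2.mono_left (hAU t ht)⟩
    have key := hch (Sum.elim (fun i => if i.2 then S2 i.1 else S1 i.1) (fun x => {x})) ?_ ?_ ?_
    · convert key using 1
      ext z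
      simp only [mem_union, mem_biUnion, hJ]
      have hz1 : z ∈ Y ∨ z ∈ U ↔ ∃ t ∈ F, z ∈ S1 t ∨ z ∈ S2 t := by
        rw [← hA3, hY]
        simp only [mem_biUnion]
        constructor
        · rintro (⟨t, ht, hz⟩ | ⟨t, ht, hz⟩)
          · exact ⟨t, ht, by rw [← mem_union, (hS t ht).2.2.2]; exact mem_union_left _ hz⟩
          · exact ⟨t, ht, by rw [← mem_union, (hS t ht).2.2.2]; exact mem_union_right _ hz⟩
        · rintro ⟨t, ht, hz⟩
          rw [← mem_union, (hS t ht).2.2.2, mem_union] at hz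
          rcases hz with hz | hz
          · exact Or.inl ⟨t, ht, hz⟩
          · exact Or.inr ⟨t, ht, hz⟩
      constructor
      · intro h
        by_cases hzC : z ∈ C
        · exact Or.inl hzC
        right
        by_cases hz : z ∈ Y ∨ z ∈ U
        · obtain ⟨t, ht, h1 | h1⟩ := hz1.1 hz
          · exact ⟨Sum.inl (t, false), by simp [ht], by simpa using h1⟩
          · exact ⟨Sum.inl (t, true), by simp [ht], by simpa using h1⟩
        · refine ⟨Sum.inr z, ?_, by simp⟩
          simp only [inr_mem_disjSum, mem_sdiff]
          tauto
      · rintro (h | ⟨i, hi, hz⟩)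
        · exact Or.inl (Or.inl h)
        · rcases i with ⟨t, b⟩ | x
          · have ht : t ∈ F := by simpa using hi
            have : z ∈ Y ∨ z ∈ U := hz1.2 ⟨t, ht, by cases b <;> simp at hz <;> simp [hz]⟩
            tauto
          · simp at hi hz
            subst hz
            tauto
    · rintro (⟨t, b⟩ | x) hi
      · have ht : t ∈ F := by simpa [hJ] using hi
        cases b
        · simpa using (hS t ht).1
        · simpa using (hS t ht).2.1
      · simpa using LPath.nil x
    · have hmix : ∀ t ∈ F, ∀ b : Bool, ∀ x ∈ X0 \ Y,
          Disjoint (if b then S2 t else S1 t) {x} := by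
        intro t ht b x hx
        refine (hdj t ht {x} ?_ ?_).mono_left (hsub t ht b)
        · simpa using (mem_sdiff.1 hx).2
        · rw [disjoint_singleton_right]
          exact fun h => disjoint_left.1 hUX h (mem_sdiff.1 hx).1
      rintro (⟨t, b⟩ | x) hi (⟨t', b'⟩ | x') hi' hne
      · have ht : t ∈ F := by simpa [hJ] using hi
        have ht' : t' ∈ F := by simpa [hJ] using hi'
        simp only [Sum.elim_inl]
        by_cases h : t = t'
        · subst h
          have := (hS t ht).2.2.1
          cases b <;> cases b'
          · simp at hne
          · simpa using this
          · simpa using this.symm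
          · simp at hne
        · refine ((?_ : Disjoint (univ.image t ∪ A t) (univ.image t' ∪ A t')).mono_left
            (hsub t ht b)).mono_right (hsub t' ht' b')
          rw [disjoint_union_left, disjoint_union_right, disjoint_union_right]
          refine ⟨⟨?_, ?_⟩, ?_, hA2 t ht t' ht' h⟩
          · rw [disjoint_left]
            simp only [mem_image, mem_univ, true_and]
            rintro z ⟨j, rfl⟩ ⟨j', hj'⟩
            exact hF3 t ht t' ht' h j j' hj'.symm
          · exact (hUY.mono_left (hAU t' ht')).symm.mono_left (himY t ht)
          · exact (hUY.mono_left (hAU t ht)).mono_right (himY t' ht')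
      · exact hmix t (by simpa [hJ] using hi) b x' (by simpa [hJ] using hi')
      · exact (hmix t' (by simpa [hJ] using hi') b' x (by simpa [hJ] using hi)).symm
      · simp only [Sum.elim_inr, disjoint_singleton]
        exact fun h => hne (by rw [h])
    · rintro (⟨t, b⟩ | x) hi
      · have ht : t ∈ F := by simpa [hJ] using hi
        exact (hdj t ht C hCZ.1.symm hUC).mono_left (hsub t ht b)
      · have hx : x ∈ X0 \ Y := by simpa [hJ] using hi
        simp only [Sum.elim_inr, disjoint_singleton_left]
        exact fun h => disjoint_left.1 hCZ.2 h (mem_sdiff.1 hx).1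


theorem reservoir (ρ : ℝ) (hρ : 0 < ρ) : ∃ κ : ℝ, 0 < κ ∧ ∃ n0 : ℕ,
    ∀ (V : Type) [Fintype V] (E : V → V → V → Prop) (n : ℕ), Sym3 E → Fintype.card V = n →
    n0 ≤ n → Deg E (7 / 16) n → ∀ X : Finset V, 10 ^ 6 * (X.card : ℝ) ≤ n →
    ∃ (R : Finset V) (M : ℕ), Disjoint R X ∧ (R.card : ℝ) ≤ ρ * n ∧ κ * n ≤ M ∧
      Supply E R M := by
  obtain ⟨β, hβ, hβ1, hβ2⟩ : ∃ β : ℝ, 0 < β ∧ β ≤ ρ / 3 ∧ β ≤ 1 / 16384 / 72 :=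
    ⟨min (ρ / 3) (1 / 16384 / 72), by positivity, min_le_left _ _, min_le_right _ _⟩
  obtain ⟨n1, hsel⟩ := selection 3 (by norm_num) (1 / 16384) (by norm_num) (by norm_num) β hβ
    (by push_cast; linarith)
  obtain ⟨n2, hn2⟩ := exists_nat_gt (1 / (1 / 16384 * β / 16))
  refine ⟨1 / 16384 * β / 16, by positivity, max n1 n2, ?_⟩
  intro V _ E n hE hn hn0 hd X hX
  obtain ⟨F, hF1, hF2, hF3, hF4⟩ := hsel V n hn ((le_max_left _ _).trans hn0) univ
    (fun i => univ.filter (fun t : Fin 3 → V => E i.1 (t 0) (t 1) ∧ E (t 1) (t 2) i.2)) (by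
      rintro ⟨x, y⟩ _
      exact conn_count hE hn hd x y) X (by push_cast; linarith)
  refine ⟨F.biUnion (fun t => univ.image t), ⌈1 / 16384 * β / 16 * n⌉₊, ?_, ?_, Nat.le_ceil _, ?_⟩
  · rw [disjoint_biUnion_left]
    intro t ht
    rw [disjoint_left]
    simp only [mem_image, mem_univ, true_and]
    rintro z ⟨j, rfl⟩
    exact (hF2 t ht).2.1 j
  · have : (F.biUnion (fun t => univ.image t)).card ≤ F.card * 3 :=
      card_biUnion_le_card_mul _ _ _ (fun t _ => card_image_le.trans (by simp))
    have h2 : ((F.biUnion (fun t => univ.image t)).card : ℝ) ≤ F.card * 3 := by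
      exact_mod_cast this
    have h3 : (0 : ℝ) ≤ n := by positivity
    nlinarith
  · intro u v Y hY
    have hnR : (n2 : ℝ) ≤ n := by exact_mod_cast (le_max_right _ _).trans hn0
    have hk : (0 : ℝ) < 1 / 16384 * β / 16 := by positivity
    have h1 : 1 < 1 / 16384 * β / 16 * n := by
      have := hn2.trans_le hnR
      rwa [div_lt_iff₀' hk] at this
    have h2 := hF4 (u, v) (mem_univ _)
    have h3 : (⌈1 / 16384 * β / 16 * n⌉₊ : ℝ) < 1 / 16384 * β / 16 * n + 1 :=
      Nat.ceil_lt_add_one (by positivity)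
    have h4 : (Y.card : ℝ) ≤ ⌈1 / 16384 * β / 16 * n⌉₊ := by exact_mod_cast hY
    set G := F.filter (fun t => t ∈ univ.filter
      (fun t : Fin 3 → V => E (u, v).1 (t 0) (t 1) ∧ E (t 1) (t 2) (u, v).2)) with hG
    have h5 : Y.card < G.card := by
      have : (Y.card : ℝ) < G.card := by linarith
      exact_mod_cast this
    obtain ⟨t, ht, htY⟩ : ∃ t ∈ G, ∀ j, t j ∉ Y := by
      by_contra hcon
      push Not at hcon
      have : ∀ t, ∃ j, t ∈ G → t j ∈ Y := by
        intro t
        by_cases ht : t ∈ G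
        · obtain ⟨j, hj⟩ := hcon t ht; exact ⟨j, fun _ => hj⟩
        · exact ⟨0, fun h => absurd h ht⟩
      choose j hj using this
      have := card_le_card_of_injOn (s := G) (t := Y) (fun t => t (j t)) (fun t ht => hj t ht) (by
        intro t ht t' ht' h
        by_contra hne
        exact hF3 t (mem_filter.1 ht).1 t' (mem_filter.1 ht').1 hne _ _ h)
      omega
    simp only [hG, mem_filter, mem_univ, true_and] at ht
    have hm : ∀ j, t j ∈ F.biUnion (fun t => univ.image t) := fun j =>
      mem_biUnion.2 ⟨t, ht.1, by simp⟩
    exact ⟨t 0, t 1, t 2, hm 0, hm 1, hm 2, htY 0, htY 1, htY 2,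
      fun h => by simpa using (hF2 t ht.1).1 h, ht.2.1, ht.2.2⟩


/-- many dense sets: some `s` of them have a large common intersection -/
theorem common_inter0 (d : ℝ) (hd : 0 < d) (s : ℕ) : ∃ (N : ℕ) (d' : ℝ), 0 < d' ∧
    ∀ {ι β : Type} (I : Finset ι) (B : Finset β) (S : ι → Finset β) (T : ℝ), 0 ≤ T →
    (B.card : ℝ) ≤ T → N ≤ I.card → (∀ i ∈ I, S i ⊆ B ∧ d * T ≤ (S i).card) →
    ∃ I' ⊆ I, I'.card = s ∧ d' * T ≤ ((B.filter (fun b => ∀ i ∈ I', b ∈ S i)).card : ℝ) := by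
  obtain ⟨N, hN, hNs⟩ : ∃ N : ℕ, 2 * s < N * d ∧ s ≤ N := by
    obtain ⟨N, hN⟩ := exists_nat_gt (2 * s / d)
    rw [div_lt_iff₀ hd] at hN
    exact ⟨N + s, by push_cast; nlinarith [(by positivity : (0 : ℝ) ≤ s * d)], by omega⟩
  refine ⟨N, d / 2 / 2 ^ N, by positivity, ?_⟩
  intro ι β I B S T hT hB hI hS
  obtain ⟨J, hJI, hJ⟩ := exists_subset_card_eq hI
  have hN0 : (0 : ℝ) < N := by
    have : (0 : ℝ) ≤ 2 * s := by positivity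
    by_contra h
    push Not at h
    nlinarith
  set G := B.filter (fun b => s ≤ (J.filter (fun i => b ∈ S i)).card) with hG
  have h1 : ∑ i ∈ J, ((S i).card : ℝ) ≤ N * G.card + s * T := by
    have e1 : ∑ i ∈ J, (S i).card = ∑ b ∈ B, (J.filter (fun i => b ∈ S i)).card := by
      simp only [card_filter]
      rw [sum_comm]
      apply sum_congr rfl; intro i hi
      rw [← card_filter]
      congr 1
      ext b
      simp only [mem_filter]
      exact ⟨fun h => ⟨(hS i (hJI hi)).1 h, h⟩, fun h => h.2⟩
    have e2 : (∑ i ∈ J, ((S i).card : ℝ)) =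
        ∑ b ∈ B, ((J.filter (fun i => b ∈ S i)).card : ℝ) := by exact_mod_cast e1
    rw [e2]
    calc _ ≤ ∑ b ∈ B, ((if s ≤ (J.filter (fun i => b ∈ S i)).card then (N : ℝ) else 0) + s) := by
          apply sum_le_sum
          intro b _
          split_ifs with h
          · have : ((J.filter (fun i => b ∈ S i)).card : ℝ) ≤ N := by
              rw [← hJ]; exact_mod_cast card_filter_le _ _
            have : (0 : ℝ) ≤ s := by positivity
            linarith
          · push Not at h
            have : ((J.filter (fun i => b ∈ S i)).card : ℝ) ≤ s := by exact_mod_cast h.le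
            linarith
      _ = N * G.card + s * B.card := by
          rw [sum_add_distrib, ← sum_filter, sum_const, sum_const, nsmul_eq_mul, nsmul_eq_mul]
          ring
      _ ≤ _ := by gcongr
  have h2 : (N : ℝ) * (d * T) ≤ ∑ i ∈ J, ((S i).card : ℝ) := by
    rw [← hJ, ← nsmul_eq_mul, ← sum_const]
    exact sum_le_sum (fun i hi => (hS i (hJI hi)).2)
  have h3 : d / 2 * T ≤ G.card := by
    have h4 : s * T ≤ N * (d / 2 * T) := by nlinarith
    have : N * (d / 2 * T) ≤ N * G.card := by linarith
    exact le_of_mul_le_mul_left this hN0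
  have hch : ∀ b, ∃ Q : Finset ι, b ∈ G → Q ⊆ J ∧ Q.card = s ∧ ∀ i ∈ Q, b ∈ S i := by
    intro b
    by_cases hb : b ∈ G
    · obtain ⟨Q, hQ, hQs⟩ := exists_subset_card_eq (mem_filter.1 hb).2
      exact ⟨Q, fun _ => ⟨hQ.trans (filter_subset _ _), hQs, fun i hi => (mem_filter.1 (hQ hi)).2⟩⟩
    · exact ⟨∅, fun h => absurd h hb⟩
  choose Q hQ using hch
  by_cases hGe : G.Nonempty
  · have hmaps : ∀ b ∈ G, Q b ∈ J.powerset := fun b hb => mem_powerset.2 (hQ b hb).1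
    have hp : (J.powerset).card • ((G.card : ℝ) / 2 ^ N) ≤ G.card := by
      rw [card_powerset, hJ, nsmul_eq_mul]; push_cast
      rw [mul_div_cancel₀]; positivity
    obtain ⟨I', hI', hI'2⟩ := exists_le_card_fiber_of_nsmul_le_card_of_maps_to hmaps
      ⟨_, hmaps _ hGe.choose_spec⟩ hp
    have hne : (G.filter (fun b => Q b = I')).Nonempty := by
      rw [← card_pos]
      have : (0 : ℝ) < (G.card : ℝ) / 2 ^ N := by
        have := card_pos.2 hGe
        positivity
      exact_mod_cast this.trans_le hI'2
    obtain ⟨b, hb⟩ := hne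
    rw [mem_filter] at hb
    refine ⟨I', (mem_powerset.1 hI').trans hJI, hb.2 ▸ (hQ b hb.1).2.1, ?_⟩
    calc d / 2 / 2 ^ N * T = (d / 2 * T) / 2 ^ N := by ring
      _ ≤ (G.card : ℝ) / 2 ^ N := by gcongr
      _ ≤ _ := hI'2
      _ ≤ _ := by
        have : G.filter (fun b => Q b = I') ⊆ B.filter (fun b => ∀ i ∈ I', b ∈ S i) := by
          intro c hc
          rw [mem_filter] at hc
          exact mem_filter.2 ⟨(mem_filter.1 hc.1).1, hc.2 ▸ (hQ c hc.1).2.2⟩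
        exact_mod_cast card_le_card this
  · rw [not_nonempty_iff_eq_empty] at hGe
    rw [hGe] at h3
    have hT0 : T = 0 := by
      simp at h3; nlinarith
    have : s ≤ J.card := hJ ▸ hNs
    obtain ⟨I', hI', hc⟩ := exists_subset_card_eq this
    exact ⟨I', hI'.trans hJI, hc, by rw [hT0]; simp⟩

noncomputable def edges3 {V : Type} (E : V → V → V → Prop) (A B C : Finset V) :
    Finset (V × V × V) :=
  (A ×ˢ B ×ˢ C).filter (fun p => E p.1 p.2.1 p.2.2)

theorem many_rich0 {α β : Type} (A : Finset α) (B : Finset β) (G : Finset (α × β))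
    (hG : G ⊆ A ×ˢ B) (d t T : ℝ) (hT : 0 < T) (ht : 0 ≤ t) (hd : 0 ≤ d)
    (hA : (A.card : ℝ) ≤ t) (hB : (B.card : ℝ) ≤ T)
    (h : d * (t * T) ≤ (G.card : ℝ)) :
    d / 2 * t ≤ ((A.filter (fun a => d / 2 * T ≤
      ((B.filter (fun b => (a, b) ∈ G)).card : ℝ))).card : ℝ) := by
  have e1 : G.card = ∑ a ∈ A, (B.filter (fun b => (a, b) ∈ G)).card := by
    simp only [card_filter]
    rw [← sum_product' (f := fun a b => if (a, b) ∈ G then 1 else 0), ← card_filter]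
    congr 1
    ext p
    simp only [mem_filter]
    exact ⟨fun h => ⟨hG h, h⟩, fun h => h.2⟩
  have e2 : (G.card : ℝ) = ∑ a ∈ A, ((B.filter (fun b => (a, b) ∈ G)).card : ℝ) := by
    exact_mod_cast e1
  have e3 : (G.card : ℝ) ≤ ((A.filter (fun a => d / 2 * T ≤
      ((B.filter (fun b => (a, b) ∈ G)).card : ℝ))).card : ℝ) * T + t * (d / 2 * T) := by
    rw [e2]
    calc _ ≤ ∑ a ∈ A, ((if d / 2 * T ≤ ((B.filter (fun b => (a, b) ∈ G)).card : ℝ)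
            then T else 0) + d / 2 * T) := by
          apply sum_le_sum
          intro a _
          split_ifs with h
          · have : ((B.filter (fun b => (a, b) ∈ G)).card : ℝ) ≤ B.card := by
              exact_mod_cast card_filter_le _ _
            have : 0 ≤ d / 2 * T := by positivity
            linarith
          · linarith
      _ = ((A.filter (fun a => d / 2 * T ≤
            ((B.filter (fun b => (a, b) ∈ G)).card : ℝ))).card : ℝ) * T +
            A.card * (d / 2 * T) := by
          rw [sum_add_distrib, ← sum_filter, sum_const, sum_const, nsmul_eq_mul, nsmul_eq_mul]
      _ ≤ _ := by gcongr
  have : d / 2 * t * T ≤ ((A.filter (fun a => d / 2 * T ≤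
      ((B.filter (fun b => (a, b) ∈ G)).card : ℝ))).card : ℝ) * T := by nlinarith
  exact le_of_mul_le_mul_right this hT

theorem common_inter (d : ℝ) (hd : 0 < d) (s : ℕ) : ∃ (N : ℕ) (d' : ℝ), 0 < d' ∧
    ∀ {ι β : Type} (I : Finset ι) (B : Finset β) (S : ι → Finset β) (T : ℝ), 0 ≤ T →
    (B.card : ℝ) ≤ T → N ≤ I.card → (∀ i ∈ I, S i ⊆ B ∧ d * T ≤ (S i).card) →
    ∃ I' ⊆ I, I'.card = s ∧ ∃ Q ⊆ B, d' * T ≤ (Q.card : ℝ) ∧ ∀ i ∈ I', Q ⊆ S i := by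
  obtain ⟨N, d', hd', h⟩ := common_inter0 d hd s
  refine ⟨N, d', hd', ?_⟩
  intro ι β I B S T hT hB hI hS
  obtain ⟨I', h1, h2, h3⟩ := h I B S T hT hB hI hS
  exact ⟨I', h1, h2, _, filter_subset _ _, h3, fun i hi b hb => (mem_filter.1 hb).2 i hi⟩

theorem many_rich {α β : Type} (A : Finset α) (B : Finset β) (G : Finset (α × β))
    (hG : G ⊆ A ×ˢ B) (d t T : ℝ) (hT : 0 < T) (ht : 0 ≤ t) (hd : 0 ≤ d)
    (hA : (A.card : ℝ) ≤ t) (hB : (B.card : ℝ) ≤ T)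
    (h : d * (t * T) ≤ (G.card : ℝ)) :
    ∃ A' ⊆ A, ∃ S : α → Finset β, d / 2 * t ≤ (A'.card : ℝ) ∧
      (∀ a ∈ A', S a ⊆ B ∧ d / 2 * T ≤ ((S a).card : ℝ)) ∧ ∀ a ∈ A', ∀ b ∈ S a, (a, b) ∈ G :=
  ⟨_, filter_subset _ _, fun a => B.filter (fun b => (a, b) ∈ G),
    many_rich0 A B G hG d t T hT ht hd hA hB h,
    fun _ ha => ⟨filter_subset _ _, (mem_filter.1 ha).2⟩, fun _ _ _ hb => (mem_filter.1 hb).2⟩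

theorem bit_exists (d : ℝ) (hd : 0 < d) (s : ℕ) : ∃ t0 : ℕ, ∀ t : ℕ, t0 ≤ t →
    ∀ {V : Type} (E : V → V → V → Prop) (A B C : Finset V), A.card ≤ t → B.card ≤ t →
    C.card ≤ t → d * (t : ℝ) ^ 3 ≤ ((edges3 E A B C).card : ℝ) →
    ∃ A0 ⊆ A, ∃ B0 ⊆ B, ∃ C0 ⊆ C, A0.card = s ∧ B0.card = s ∧ C0.card = 2 * s ∧
      ∀ a ∈ A0, ∀ b ∈ B0, ∀ c ∈ C0, E a b c := by
  obtain ⟨N1, d1, hd1, h1⟩ := common_inter (d / 2) (by positivity) s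
  obtain ⟨N2, d2, hd2, h2⟩ := common_inter (d1 / 2) (by positivity) s
  obtain ⟨m1, hm1⟩ := exists_nat_gt (N1 / (d / 2))
  obtain ⟨m2, hm2⟩ := exists_nat_gt (N2 / (d1 / 2))
  obtain ⟨m3, hm3⟩ := exists_nat_gt (2 * s / d2)
  refine ⟨m1 + m2 + m3 + 1, ?_⟩
  intro t ht V E A B C hA hB hC hE
  have htm : (m1 : ℝ) + m2 + m3 + 1 ≤ t := by exact_mod_cast ht
  have p1 : (0 : ℝ) ≤ m1 := by positivity
  have p2 : (0 : ℝ) ≤ m2 := by positivity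
  have p3 : (0 : ℝ) ≤ m3 := by positivity
  have ht0 : (0 : ℝ) < t := by linarith
  rw [div_lt_iff₀ (by positivity)] at hm1 hm2 hm3
  have q1 : (N1 : ℝ) ≤ d / 2 * t := by
    have : (m1 : ℝ) * (d / 2) ≤ t * (d / 2) := by gcongr; linarith
    linarith
  have q2 : (N2 : ℝ) ≤ d1 / 2 * t := by
    have : (m2 : ℝ) * (d1 / 2) ≤ t * (d1 / 2) := by gcongr; linarith
    linarith
  have q3 : ((2 * s : ℕ) : ℝ) ≤ d2 * t := by
    have : (m3 : ℝ) * d2 ≤ t * d2 := by gcongr; linarith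
    push_cast
    linarith
  have hA' : (A.card : ℝ) ≤ t := by exact_mod_cast hA
  have hB' : (B.card : ℝ) ≤ t := by exact_mod_cast hB
  have hC' : (C.card : ℝ) ≤ t := by exact_mod_cast hC
  have hBC : ((B ×ˢ C).card : ℝ) ≤ t ^ 2 := by
    rw [card_product, sq]; push_cast
    exact mul_le_mul hB' hC' (by positivity) ht0.le
  obtain ⟨A', hA'A, SA, r1, r1', r1''⟩ := many_rich A (B ×ˢ C) (edges3 E A B C)
    (filter_subset _ _) d t (t ^ 2) (by positivity)
    ht0.le hd.le hA' hBC (by convert hE using 1; ring)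
  obtain ⟨A0, hA0, hA0c, G, hGs, hGc, hG⟩ := h1 A' (B ×ˢ C) SA ((t : ℝ) ^ 2) (by positivity) hBC
    (Nat.cast_le.1 (q1.trans r1)) r1'
  obtain ⟨B', hB'B, SB, r2, r2', r2''⟩ := many_rich B C G hGs d1 t t ht0 ht0.le hd1.le hB' hC'
    (by convert hGc using 1; ring)
  obtain ⟨B0, hB0, hB0c, Q, hQs, hQc, hQ⟩ := h2 B' C SB t ht0.le hC'
    (Nat.cast_le.1 (q2.trans r2)) r2'
  obtain ⟨C0, hC0, hC0c⟩ := exists_subset_card_eq ((Nat.cast_le (α := ℝ)).1 (q3.trans hQc))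
  refine ⟨A0, hA0.trans hA'A, B0, hB0.trans hB'B, C0, hC0.trans hQs, hA0c, hB0c, hC0c, ?_⟩
  intro a ha b hb c hc
  have h3 := r2'' b (hB0 hb) c (hQ b hb (hC0 hc))
  have h4 := r1'' a (hA0 ha) _ (hG a ha h3)
  exact (mem_filter.1 h4).2


theorem pair_count (η : ℝ) (hη : 0 < η) {κ : Type} [Fintype κ] (K : ℝ)
    (hK : (Fintype.card κ : ℝ) = K) (hK0 : 0 < K) (z : κ → ℝ) (hz : ∀ i, 0 ≤ z i)
    (hs : ∑ i, z i = K / 4) :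
    ((univ.filter (fun p : κ × κ => 1 < z p.1 + z p.2)).card : ℝ) < (7 / 16 + η) * K ^ 2 := by
  obtain ⟨M, hM⟩ := exists_nat_gt (max 1 (4 / η))
  have hM1 : (1 : ℝ) < M := (le_max_left _ _).trans_lt hM
  have hM2 : 4 / η < M := (le_max_right _ _).trans_lt hM
  have hM0 : 0 < M := by
    have : (0 : ℝ) < M := by linarith
    exact_mod_cast this
  set g : ℝ → ℝ := fun τ => ((univ.filter (fun i => τ < z i)).card : ℝ) with hg
  set f : ℕ → ℝ := fun m => g ((m + 1) / (M + 1)) with hf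
  have hsum : ∑ m ∈ range M, f m ≤ (M + 1) * (K / 4) := by
    simp only [hf, hg, card_filter]
    push_cast
    rw [sum_comm, ← hs, mul_sum]
    apply sum_le_sum
    intro i _
    have h1 : (range M).filter (fun m : ℕ => ((m : ℝ) + 1) / (M + 1) < z i) ⊆
        range ⌊(M + 1) * z i⌋₊ := by
      intro m hm
      rw [mem_filter, div_lt_iff₀ (by positivity)] at hm
      rw [mem_range, ← Nat.succ_le_iff]
      apply Nat.le_floor
      push_cast
      linarith [hm.2]
    have h2 := card_le_card h1
    rw [card_range] at h2
    calc _ = (((range M).filter (fun m : ℕ => ((m : ℝ) + 1) / (M + 1) < z i)).card : ℝ) := by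
          rw [card_filter]; push_cast; rfl
      _ ≤ (⌊(M + 1) * z i⌋₊ : ℝ) := by exact_mod_cast h2
      _ ≤ _ := Nat.floor_le (mul_nonneg (by positivity) (hz i))
  have hsum2 : ∑ m ∈ range M, (f m + f (M - 1 - m)) ≤
      ∑ m ∈ range M, ((M + 1) * K / (2 * M)) := by
    rw [sum_add_distrib, sum_range_reflect f M, sum_const, card_range, nsmul_eq_mul]
    have : (M : ℝ) * ((M + 1) * K / (2 * M)) = (M + 1) * K / 2 := by field_simp
    rw [this]; linarith
  obtain ⟨m, hm, hmf⟩ := exists_le_of_sum_le (by simpa using hM0.ne') hsum2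
  set δ : ℝ := 1 / (2 * M) with hδ
  have hθ : (M + 1) * K / (2 * M) = (1 / 2 + δ) * K := by rw [hδ]; field_simp
  have hδ0 : 0 < δ := by positivity
  have hδ1 : δ ≤ 1 := by rw [hδ, div_le_one (by positivity)]; linarith
  have hδη : 7 / 2 * δ < η := by
    rw [div_lt_iff₀ hη] at hM2
    rw [hδ, mul_one_div, div_lt_iff₀ (by positivity)]
    nlinarith
  have hτ : ∃ τ : ℝ, τ ≤ 1 / 2 ∧ g τ + g (1 - τ) ≤ (1 / 2 + δ) * K := by
    rw [mem_range] at hm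
    have e : f (M - 1 - m) = g (1 - (m + 1) / (M + 1)) := by
      simp only [hf]
      congr 1
      rw [Nat.cast_sub (by omega), Nat.cast_sub (by omega)]
      push_cast
      field_simp
      ring
    rw [e, hθ] at hmf
    rcases le_total (((m : ℝ) + 1) / (M + 1)) (1 / 2) with h | h
    · exact ⟨_, h, hmf⟩
    · exact ⟨1 - (m + 1) / (M + 1), by linarith, by rw [sub_sub_cancel, add_comm]; exact hmf⟩
  obtain ⟨τ, hτ2, hτg⟩ := hτ
  set A := univ.filter (fun i => 1 - τ < z i) with hA
  set B := univ.filter (fun i => τ < z i ∧ ¬ 1 - τ < z i) with hB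
  have hgA : g (1 - τ) = A.card := rfl
  have hgB : g τ = A.card + B.card := by
    simp only [hg]
    rw [← Nat.cast_add, ← card_union_of_disjoint]
    · congr 2
      ext i
      simp only [hA, hB, mem_filter, mem_univ, true_and, mem_union]
      constructor
      · intro h; tauto
      · rintro (h | h)
        · linarith
        · exact h.1
    · rw [disjoint_left]
      intro i h1 h2
      simp only [hA, hB, mem_filter, mem_univ, true_and] at h1 h2
      exact h2.2 h1
  have hsub : univ.filter (fun p : κ × κ => 1 < z p.1 + z p.2) ⊆
      A ×ˢ univ ∪ (Aᶜ ×ˢ A ∪ B ×ˢ B) := by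
    rintro ⟨j, l⟩ h
    simp only [hA, hB, mem_filter, mem_univ, true_and, mem_union, mem_product, mem_compl,
      and_true] at h ⊢
    by_cases h1 : 1 - τ < z j
    · exact Or.inl h1
    by_cases h2 : 1 - τ < z l
    · exact Or.inr (Or.inl ⟨h1, h2⟩)
    · push Not at h1 h2
      exact Or.inr (Or.inr ⟨⟨by linarith, not_lt.2 h1⟩, by linarith, not_lt.2 h2⟩)
  have hcard := (card_le_card hsub).trans ((card_union_le _ _).trans
    (Nat.add_le_add_left (card_union_le _ _) _))
  simp only [card_product, card_univ] at hcard
  have hAc : ((Aᶜ).card : ℝ) = K - A.card := by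
    rw [card_compl, Nat.cast_sub (card_le_univ _), hK]
  have hc2 : ((univ.filter (fun p : κ × κ => 1 < z p.1 + z p.2)).card : ℝ) ≤
      A.card * K + ((K - A.card) * A.card + B.card * B.card) := by
    rw [← hAc, ← hK]; exact_mod_cast hcard
  refine hc2.trans_lt ?_
  rw [hgA, hgB] at hτg
  set x : ℝ := (A.card : ℝ)
  set y : ℝ := (B.card : ℝ)
  have hx : 0 ≤ x := by positivity
  have hy : 0 ≤ y := by positivity
  set θ : ℝ := (1 / 2 + δ) with hθd
  have hy2 : y * y ≤ (θ * K - 2 * x) * (θ * K - 2 * x) := by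
    apply mul_self_le_mul_self hy; linarith
  have hx2 : x * x ≤ (θ * K / 2) * (θ * K / 2) := by
    apply mul_self_le_mul_self hx; linarith
  have h1 : x * K + ((K - x) * x + y * y) ≤ 7 / 4 * θ ^ 2 * K ^ 2 := by
    have : 0 ≤ δ * K * x := by positivity
    have e : θ * K * x = (1 / 2 + δ) * K * x := by rw [hθd]
    nlinarith
  refine h1.trans_lt ?_
  have : 7 / 4 * θ ^ 2 < 7 / 16 + η := by rw [hθd]; nlinarith
  gcongr


noncomputable def dem {κ : Type} (q : κ × κ × κ) (x : κ) : ℕ :=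
  2 * (if q.1 = x then 1 else 0) + (if q.2.1 = x then 1 else 0) + (if q.2.2 = x then 1 else 0)

theorem dem_sum {κ : Type} [Fintype κ] (q : κ × κ × κ) (y : κ → ℝ) :
    ∑ x, (dem q x : ℝ) * y x = 2 * y q.1 + y q.2.1 + y q.2.2 := by
  simp only [dem]
  push_cast
  simp only [add_mul, sum_add_distrib, mul_assoc, ← mul_sum, ite_mul, one_mul, zero_mul,
    sum_ite_eq, mem_univ, if_true]

theorem fractional (η : ℝ) (hη : 0 < η) {κ : Type} [Fintype κ] (K : ℕ)
    (hK : Fintype.card κ = K) (hK0 : 0 < K) (D : κ → κ → κ → Prop)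
    (hD : ∀ i, (7 / 16 + η) * (K : ℝ) ^ 2 ≤
      ((univ.filter (fun p : κ × κ => D i p.1 p.2)).card : ℝ)) :
    ∃ (ι : Type) (_ : Fintype ι) (q : ι → κ × κ × κ) (w : ι → ℝ), Fintype.card ι ≤ K + 1 ∧
      (∀ i, 0 ≤ w i) ∧ ∑ i, w i = 1 ∧ (∀ i, D (q i).1 (q i).2.1 (q i).2.2) ∧
      ∀ x, ∑ i, w i * dem (q i) x = 4 / K := by
  have hKR : (0 : ℝ) < K := by exact_mod_cast hK0
  set vec : κ × κ × κ → (κ → ℝ) := fun q x => dem q x with hvec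
  set S : Set (κ → ℝ) := vec '' {q | D q.1 q.2.1 q.2.2} with hS
  have hfin : S.Finite := (Set.toFinite _).image _
  have hmem : (fun _ => 4 / (K : ℝ) : κ → ℝ) ∈ convexHull ℝ S := by
    by_contra hcon
    obtain ⟨f, u, hu, hfu⟩ := geometric_hahn_banach_point_closed (convex_convexHull ℝ S)
      (hfin.isClosed_convexHull ℝ) hcon
    set y : κ → ℝ := fun x => f (Pi.single x 1) with hy
    have hfv : ∀ v : κ → ℝ, f v = ∑ x, v x * y x := by
      intro v
      have := LinearMap.pi_apply_eq_sum_univ (f : (κ → ℝ) →ₗ[ℝ] ℝ) v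
      simp only [ContinuousLinearMap.coe_coe, smul_eq_mul] at this
      rw [this]
      apply sum_congr rfl
      intro x _
      simp only [hy]
      congr 2
      ext j
      simp [Pi.single_apply, eq_comm]
    have : Nonempty κ := Fintype.card_pos_iff.1 (by omega)
    obtain ⟨i0, hi0⟩ := Finite.exists_min y
    have h1 : ∀ j l, D i0 j l → 4 / (K : ℝ) * ∑ x, y x < 2 * y i0 + y j + y l := by
      intro j l hD
      have h2 := hfu (vec (i0, j, l)) (subset_convexHull ℝ S ⟨_, hD, rfl⟩)
      rw [hfv] at h2 hu
      rw [← mul_sum] at hu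
      simp only [hvec, dem_sum] at h2
      linarith
    have hsum0 : ∑ x, (y x - y i0) = ∑ x, y x - K * y i0 := by
      rw [sum_sub_distrib, sum_const, card_univ, hK, nsmul_eq_mul]
    set σ : ℝ := ∑ x, (y x - y i0) with hσ
    have h3 : ∀ j l, D i0 j l → 4 / (K : ℝ) * σ < (y j - y i0) + (y l - y i0) := by
      intro j l hD
      have := h1 j l hD
      rw [hsum0, mul_sub]
      have e : 4 / (K : ℝ) * (K * y i0) = 4 * y i0 := by field_simp
      rw [e]; linarith
    have hσ0 : 0 ≤ σ := sum_nonneg (fun x _ => sub_nonneg.2 (hi0 x))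
    have hpos : (0 : ℝ) < (7 / 16 + η) * (K : ℝ) ^ 2 := by positivity
    rcases hσ0.eq_or_lt with h0 | hσp
    · have hz : ∀ x, y x - y i0 = 0 := by
        intro x
        exact (sum_eq_zero_iff_of_nonneg (fun x _ => sub_nonneg.2 (hi0 x))).1 h0.symm x (mem_univ x)
      have : (univ.filter (fun p : κ × κ => D i0 p.1 p.2)) = ∅ := by
        rw [filter_eq_empty_iff]
        rintro ⟨j, l⟩ _ hD
        have := h3 j l hD
        rw [← h0, hz, hz] at this
        simp at this
      have h4 := hD i0
      rw [this] at h4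
      simp at h4
      linarith
    · have h5 := pair_count η hη (K : ℝ) (by exact_mod_cast hK) hKR
        (fun x => K / (4 * σ) * (y x - y i0))
        (fun x => mul_nonneg (by positivity) (sub_nonneg.2 (hi0 x)))
        (by rw [← mul_sum, ← hσ]; field_simp)
      have h6 : (univ.filter (fun p : κ × κ => D i0 p.1 p.2)).card ≤
          (univ.filter (fun p : κ × κ => 1 < K / (4 * σ) * (y p.1 - y i0) +
            K / (4 * σ) * (y p.2 - y i0))).card := by
        apply card_le_card
        rintro ⟨j, l⟩ h
        simp only [mem_filter, mem_univ, true_and] at h ⊢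
        have h7 := h3 j l h
        rw [← mul_add]
        have h8 : (0 : ℝ) < K / (4 * σ) := by positivity
        calc (1 : ℝ) = K / (4 * σ) * (4 / (K : ℝ) * σ) := by field_simp
          _ < _ := by gcongr
      have h7 : ((univ.filter (fun p : κ × κ => D i0 p.1 p.2)).card : ℝ) ≤
          ((univ.filter (fun p : κ × κ => 1 < K / (4 * σ) * (y p.1 - y i0) +
            K / (4 * σ) * (y p.2 - y i0))).card : ℝ) := by exact_mod_cast h6
      linarith [hD i0]
  obtain ⟨ι, hι, z, w, hz, haff, hw, hw1, hwz⟩ := eq_pos_convex_span_of_mem_convexHull hmem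
  have hzq : ∀ i, ∃ q : κ × κ × κ, D q.1 q.2.1 q.2.2 ∧ vec q = z i := fun i => hz ⟨i, rfl⟩
  choose q hq1 hq2 using hzq
  refine ⟨ι, hι, q, w, ?_, fun i => (hw i).le, hw1, hq1, ?_⟩
  · refine haff.card_le_finrank_succ.trans (Nat.add_le_add_right ?_ 1)
    refine (Submodule.finrank_le _).trans ?_
    rw [Module.finrank_fintype_fun_eq_card, hK]
  · intro x
    have := congrFun hwz x
    simp only [Finset.sum_apply, Pi.smul_apply, smul_eq_mul] at this
    rw [← this]
    apply sum_congr rfl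
    intro i _
    rw [← hq2 i]


def IsBit {V : Type} (E : V → V → V → Prop) (s : ℕ) (T : Finset V) : Prop :=
  ∃ A B C : Finset V, T = A ∪ B ∪ C ∧ A.card = s ∧ B.card = s ∧ C.card = 2 * s ∧
    ∀ a ∈ A, ∀ b ∈ B, ∀ c ∈ C, E a b c

inductive Tiled {V : Type} (E : V → V → V → Prop) (s : ℕ) : ℕ → Finset V → Prop
  | nil : Tiled E s 0 ∅
  | cons {k : ℕ} {T Z : Finset V} : IsBit E s T → Disjoint T Z → Tiled E s k Z →
      Tiled E s (k + 1) (T ∪ Z)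

theorem bit_disj {V : Type} {E : V → V → V → Prop} (hE : Sym3 E) {s : ℕ} (hs : 1 ≤ s)
    {A B C : Finset V} (hA : A.card = s) (hB : B.card = s) (hC : C.card = 2 * s)
    (h : ∀ a ∈ A, ∀ b ∈ B, ∀ c ∈ C, E a b c) :
    Disjoint A B ∧ Disjoint A C ∧ Disjoint B C := by
  obtain ⟨a0, ha0⟩ := card_pos.1 (show 0 < A.card by omega)
  obtain ⟨b0, hb0⟩ := card_pos.1 (show 0 < B.card by omega)
  obtain ⟨c0, hc0⟩ := card_pos.1 (show 0 < C.card by omega)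
  refine ⟨?_, ?_, ?_⟩ <;> rw [disjoint_left] <;> intro x hx hy
  · exact hE.ne (h x hx x hy c0 hc0) rfl
  · exact hE.ne13 (h x hx b0 hb0 x hy) rfl
  · exact hE.ne23 (h a0 ha0 x hx x hy) rfl

theorem IsBit.card {V : Type} {E : V → V → V → Prop} (hE : Sym3 E) {s : ℕ} (hs : 1 ≤ s)
    {T : Finset V} (h : IsBit E s T) : T.card = 4 * s := by
  obtain ⟨A, B, C, rfl, hA, hB, hC, h⟩ := h
  obtain ⟨h1, h2, h3⟩ := bit_disj hE hs hA hB hC h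
  rw [card_union_of_disjoint (disjoint_union_left.2 ⟨h2, h3⟩), card_union_of_disjoint h1]
  omega

theorem Tiled.card {V : Type} {E : V → V → V → Prop} (hE : Sym3 E) {s : ℕ} (hs : 1 ≤ s)
    {k : ℕ} {Z : Finset V} (h : Tiled E s k Z) : Z.card = 4 * s * k := by
  induction h with
  | nil => simp
  | cons hb hd _ ih =>
    rw [card_union_of_disjoint hd, ih, hb.card hE hs]; ring

theorem Tiled.union {V : Type} {E : V → V → V → Prop} {s : ℕ}
    {k l : ℕ} {Y Z : Finset V} (h : Tiled E s k Y) (h2 : Tiled E s l Z) (hd : Disjoint Y Z) :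
    Tiled E s (k + l) (Y ∪ Z) := by
  induction h with
  | nil => simpa using h2
  | @cons k T Y hb hd1 _ ih =>
    rw [disjoint_union_left] at hd
    have := Tiled.cons hb (disjoint_union_right.2 ⟨hd1, hd.1⟩) (ih hd.2)
    rw [union_assoc]
    convert this using 1
    omega

theorem bit_split {V : Type} {E : V → V → V → Prop} {s : ℕ} (q : ℕ) :
    ∀ A B C : Finset V, Disjoint A B → Disjoint A C → Disjoint B C →
    q * s ≤ A.card → q * s ≤ B.card → 2 * (q * s) ≤ C.card →
    (∀ a ∈ A, ∀ b ∈ B, ∀ c ∈ C, E a b c) →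
    ∃ Z ⊆ A ∪ B ∪ C, Tiled E s q Z := by
  induction q with
  | zero => intro A B C _ _ _ _ _ _ _; exact ⟨∅, by simp, Tiled.nil⟩
  | succ q ih =>
    intro A B C hAB hAC hBC hA hB hC h
    have e : (q + 1) * s = q * s + s := by ring
    rw [e] at hA hB hC
    obtain ⟨A0, hA0, cA⟩ := exists_subset_card_eq (show s ≤ A.card by omega)
    obtain ⟨B0, hB0, cB⟩ := exists_subset_card_eq (show s ≤ B.card by omega)
    obtain ⟨C0, hC0, cC⟩ := exists_subset_card_eq (show 2 * s ≤ C.card by omega)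
    obtain ⟨Z, hZ, hT⟩ := ih (A \ A0) (B \ B0) (C \ C0)
      (hAB.mono sdiff_subset sdiff_subset) (hAC.mono sdiff_subset sdiff_subset)
      (hBC.mono sdiff_subset sdiff_subset)
      (by rw [card_sdiff_of_subset hA0]; omega) (by rw [card_sdiff_of_subset hB0]; omega)
      (by rw [card_sdiff_of_subset hC0]; omega)
      (fun a ha b hb c hc => h a (sdiff_subset ha) b (sdiff_subset hb) c (sdiff_subset hc))
    refine ⟨(A0 ∪ B0 ∪ C0) ∪ Z, ?_, Tiled.cons ⟨A0, B0, C0, rfl, cA, cB, cC,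
      fun a ha b hb c hc => h a (hA0 ha) b (hB0 hb) c (hC0 hc)⟩ ?_ hT⟩
    · refine union_subset (union_subset_union (union_subset_union hA0 hB0) hC0) (hZ.trans ?_)
      exact union_subset_union (union_subset_union sdiff_subset sdiff_subset) sdiff_subset
    · rw [disjoint_left] at hAB hAC hBC ⊢
      intro x hx hxZ
      have := hZ hxZ
      simp only [mem_union, mem_sdiff] at hx this
      have a1 := @hA0 x; have a2 := @hB0 x; have a3 := @hC0 x
      have b1 := @hAB x; have b2 := @hAC x; have b3 := @hBC x
      tauto

theorem Tiled.extract {V : Type} {E : V → V → V → Prop} (hE : Sym3 E) {t : ℕ} (ht : 1 ≤ t)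
    {k : ℕ} {Z : Finset V} (h : Tiled E t k Z) : ∃ 𝒞 : Finset (Finset V),
      (∀ c ∈ 𝒞, c.card = t) ∧ (∀ c ∈ 𝒞, ∀ d ∈ 𝒞, c ≠ d → Disjoint c d) ∧
      𝒞.biUnion id = Z ∧ ∀ (W : Finset V) (s q : ℕ), (∀ c ∈ 𝒞, q * s ≤ (c \ W).card) →
        ∃ Z' ⊆ Z \ W, Tiled E s (k * q) Z' := by
  induction h with
  | nil => exact ⟨∅, by simp, by simp, by simp, fun W s q _ => ⟨∅, by simp, by
      rw [zero_mul]; exact Tiled.nil⟩⟩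
  | @cons k T Z hb hd _ ih =>
    obtain ⟨𝒞, h1, h2, h3, h4⟩ := ih
    obtain ⟨A, B, C, rfl, hA, hB, hC, h⟩ := hb
    obtain ⟨d1, d2, d3⟩ := bit_disj hE ht hA hB hC h
    obtain ⟨C1, hC1, cC1⟩ := exists_subset_card_eq (show t ≤ C.card by omega)
    have cC2 : (C \ C1).card = t := by rw [card_sdiff_of_subset hC1]; omega
    have hsub : ∀ c ∈ 𝒞, c ⊆ Z := fun c hc => h3 ▸ subset_biUnion_of_mem id hc
    rw [disjoint_union_left, disjoint_union_left] at hd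
    have dAC1 := d2.mono_right hC1
    have dBC1 := d3.mono_right hC1
    have dAC2 : Disjoint A (C \ C1) := d2.mono_right sdiff_subset
    have dBC2 : Disjoint B (C \ C1) := d3.mono_right sdiff_subset
    have d12 : Disjoint C1 (C \ C1) := disjoint_sdiff
    have zA := hd.1.1
    have zB := hd.1.2
    have zC1 := hd.2.mono_left hC1
    have zC2 : Disjoint (C \ C1) Z := hd.2.mono_left sdiff_subset
    have hCC : C1 ∪ (C \ C1) = C := union_sdiff_of_subset hC1
    refine ⟨insert A (insert B (insert C1 (insert (C \ C1) 𝒞))), ?_, ?_, ?_, ?_⟩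
    · intro c hc
      simp only [mem_insert] at hc
      rcases hc with rfl | rfl | rfl | rfl | hc
      · exact hA
      · exact hB
      · exact cC1
      · exact cC2
      · exact h1 c hc
    · have key : ∀ c ∈ 𝒞, ∀ X, Disjoint X Z → Disjoint X c := fun c hc X hX =>
        hX.mono_right (hsub c hc)
      intro c hc d hdd hne
      simp only [mem_insert] at hc hdd
      rcases hc with rfl | rfl | rfl | rfl | hc <;>
      rcases hdd with rfl | rfl | rfl | rfl | hdd <;>
      first
      | exact absurd rfl hne
      | assumption
      | (apply Disjoint.symm; assumption)
      | exact key _ hdd _ ‹_›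
      | exact (key _ hc _ ‹_›).symm
      | exact h2 _ hc _ hdd hne
    · simp only [biUnion_insert, id, h3]
      rw [show A ∪ B ∪ C = A ∪ B ∪ (C1 ∪ C \ C1) by rw [hCC]]
      simp only [union_assoc]
    · intro W s q hq
      obtain ⟨Z', hZ', hT⟩ := h4 W s q (fun c hc => hq c (by simp [hc]))
      have q1 := hq A (by simp)
      have q2 := hq B (by simp)
      have q3 := hq C1 (by simp)
      have q4 := hq (C \ C1) (by simp)
      obtain ⟨Y, hY, hTY⟩ := bit_split (E := E) (s := s) q (A \ W) (B \ W) (C \ W)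
        (d1.mono sdiff_subset sdiff_subset) (d2.mono sdiff_subset sdiff_subset)
        (d3.mono sdiff_subset sdiff_subset) q1 q2 (by
          have : C \ W = (C1 \ W) ∪ ((C \ C1) \ W) := by
            rw [← union_sdiff_distrib, hCC]
          rw [this, card_union_of_disjoint (d12.mono sdiff_subset sdiff_subset)]
          omega)
        (fun a ha b hb c hc => h a (sdiff_subset ha) b (sdiff_subset hb) c (sdiff_subset hc))
      have hdYZ : Disjoint Y Z' := by
        rw [disjoint_left]
        intro x hx hxZ
        have e1 := hY hx
        have e2 := hZ' hxZ
        have b1 : x ∈ A → x ∉ Z := fun h => disjoint_left.1 zA h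
        have b2 : x ∈ B → x ∉ Z := fun h => disjoint_left.1 zB h
        have b3 : x ∈ C → x ∉ Z := fun h => disjoint_left.1 hd.2 h
        simp only [mem_union, mem_sdiff] at e1 e2
        tauto
      refine ⟨Y ∪ Z', ?_, ?_⟩
      · intro x hx
        have e1 := @hY x
        have e2 := @hZ' x
        simp only [mem_union, mem_sdiff] at e1 e2 hx ⊢
        tauto
      · have := hTY.union hT hdYZ
        convert this using 1
        ring

theorem split_sets {V : Type} (t : ℕ) (ht : 1 ≤ t) (m : ℕ) : ∀ R : Finset V, R.card ≤ m →
    ∃ 𝒞 : Finset (Finset V), (∀ c ∈ 𝒞, c.card = t) ∧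
      (∀ c ∈ 𝒞, ∀ d ∈ 𝒞, c ≠ d → Disjoint c d) ∧ 𝒞.biUnion id ⊆ R ∧
      R.card < (𝒞.biUnion id).card + t := by
  induction m with
  | zero =>
    intro R hR
    exact ⟨∅, by simp, by simp, by simp, by simp; omega⟩
  | succ m ih =>
    intro R hR
    by_cases h : R.card < t
    · exact ⟨∅, by simp, by simp, by simp, by simpa using h⟩
    obtain ⟨A, hA, cA⟩ := exists_subset_card_eq (not_lt.1 h)
    obtain ⟨𝒞, h1, h2, h3, h4⟩ := ih (R \ A) (by rw [card_sdiff_of_subset hA]; omega)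
    have hd : ∀ c ∈ 𝒞, Disjoint A c := fun c hc =>
      disjoint_sdiff.mono_right ((subset_biUnion_of_mem id hc).trans h3)
    refine ⟨insert A 𝒞, ?_, ?_, ?_, ?_⟩
    · intro c hc
      rcases mem_insert.1 hc with rfl | hc
      · exact cA
      · exact h1 c hc
    · intro c hc d hdd hne
      rcases mem_insert.1 hc with rfl | hc <;> rcases mem_insert.1 hdd with rfl | hdd
      · exact absurd rfl hne
      · exact hd _ hdd
      · exact (hd _ ‹_›).symm
      · exact h2 _ hc _ hdd hne
    · rw [biUnion_insert]
      exact union_subset hA (h3.trans sdiff_subset)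
    · rw [biUnion_insert, id, card_union_of_disjoint (disjoint_sdiff.mono_right h3)]
      rw [card_sdiff_of_subset hA] at h4
      omega


theorem reduced_deg {V κ : Type} [Fintype V] [Fintype κ] {E : V → V → V → Prop} (hE : Sym3 E)
    (γ : ℝ) (hγ : 0 < γ) (n t K : ℕ) (ht : 1 ≤ t) (Cl : κ → Finset V)
    (hdisj : ∀ x y, x ≠ y → Disjoint (Cl x) (Cl y)) (hcard : ∀ x, (Cl x).card = t)
    (hV : Fintype.card V = n) (hK : Fintype.card κ = K) (hn : n < (K + 1) * t)
    (hnt : 4 * (t : ℝ) ≤ γ * n) (hdeg : Deg E (7 / 16 + γ) n) (i : κ) :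
    (7 / 16 + γ / 4) * (K : ℝ) ^ 2 ≤ ((univ.filter (fun p : κ × κ =>
      γ / 4 * (t : ℝ) ^ 3 ≤ ((edges3 E (Cl p.1) (Cl p.2) (Cl i)).card : ℝ))).card : ℝ) := by
  set Y : Finset V := univ.biUnion Cl with hY
  have hYc : Y.card = K * t := by
    rw [hY, card_biUnion (fun x _ y _ h => hdisj x y h)]
    simp [hcard, hK]
  have hKn : K * t ≤ n := by rw [← hYc, ← hV]; exact card_le_univ _
  have hLc : Yᶜ.card ≤ t := by
    rw [card_compl, hYc, hV]
    have : (K + 1) * t = K * t + t := by ring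
    omega
  set Q : Finset (V × V × V) := univ.filter (fun p => p.1 ∈ Cl i ∧ E p.1 p.2.1 p.2.2) with hQ
  have hQc : (t : ℝ) * ((7 / 16 + γ) * (n : ℝ) ^ 2) ≤ Q.card := by
    have : Q.card = ∑ v ∈ Cl i, (univ.filter (fun p : V × V => E v p.1 p.2)).card := by
      rw [hQ, card_filter, Fintype.sum_prod_type, ← sum_filter_add_sum_filter_not univ (· ∈ Cl i)]
      rw [filter_mem_eq_inter, univ_inter]
      rw [sum_eq_zero (s := filter _ _), add_zero]
      · apply sum_congr rfl
        intro v hv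
        rw [card_filter]
        simp [hv]
      · intro v hv
        simp only [mem_filter, mem_univ, true_and] at hv
        simp [hv]
    rw [this]
    push_cast
    rw [← nsmul_eq_mul, ← hcard i]
    apply card_nsmul_le_sum
    intro v _
    exact hdeg v
  have hsub : Q ⊆ ((univ : Finset (κ × κ)).biUnion (fun p =>
      (edges3 E (Cl p.1) (Cl p.2) (Cl i)).image (fun z => (z.2.2, z.1, z.2.1)))) ∪
      (Cl i ×ˢ Yᶜ ×ˢ univ ∪ Cl i ×ˢ univ ×ˢ Yᶜ) := by
    rintro ⟨v, a, b⟩ h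
    simp only [hQ, mem_filter, mem_univ, true_and] at h
    obtain ⟨hv, he⟩ := h
    by_cases ha : a ∈ Y
    · by_cases hb : b ∈ Y
      · obtain ⟨j, -, hj⟩ := mem_biUnion.1 ha
        obtain ⟨l, -, hl⟩ := mem_biUnion.1 hb
        refine mem_union_left _ (mem_biUnion.2 ⟨(j, l), mem_univ _, ?_⟩)
        refine mem_image.2 ⟨(a, b, v), ?_, rfl⟩
        simp only [edges3, mem_filter, mem_product]
        exact ⟨⟨hj, hl, hv⟩, hE.s23 (hE.s12 he)⟩
      · exact mem_union_right _ (mem_union_right _ (by simp [hv, hb]))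
    · exact mem_union_right _ (mem_union_left _ (by simp [hv, ha]))
  set G := univ.filter (fun p : κ × κ =>
      γ / 4 * (t : ℝ) ^ 3 ≤ ((edges3 E (Cl p.1) (Cl p.2) (Cl i)).card : ℝ)) with hG
  have hup : (Q.card : ℝ) ≤ ∑ p : κ × κ, ((edges3 E (Cl p.1) (Cl p.2) (Cl i)).card : ℝ)
      + 2 * (t * (t * n)) := by
    have h1 := (card_le_card hsub).trans (card_union_le _ _)
    have h2 := card_biUnion_le (s := (univ : Finset (κ × κ))) (t := fun p =>
      (edges3 E (Cl p.1) (Cl p.2) (Cl i)).image (fun z => (z.2.2, z.1, z.2.1)))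
    have h3 : ∑ p : κ × κ, ((edges3 E (Cl p.1) (Cl p.2) (Cl i)).image
        (fun z => (z.2.2, z.1, z.2.1))).card ≤
        ∑ p : κ × κ, (edges3 E (Cl p.1) (Cl p.2) (Cl i)).card :=
      sum_le_sum (fun p _ => card_image_le)
    have h4 : (Cl i ×ˢ Yᶜ ×ˢ univ ∪ Cl i ×ˢ univ ×ˢ Yᶜ).card ≤ 2 * (t * (t * n)) := by
      refine (card_union_le _ _).trans ?_
      simp only [card_product, hcard, card_univ, hV]
      have : t * (Yᶜ.card * n) ≤ t * (t * n) := by gcongr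
      have : t * (n * Yᶜ.card) ≤ t * (t * n) := by rw [mul_comm n]; gcongr
      omega
    have h5 : Q.card ≤ ∑ p : κ × κ, (edges3 E (Cl p.1) (Cl p.2) (Cl i)).card
        + 2 * (t * (t * n)) := by omega
    exact_mod_cast h5
  have hfull : ∀ p : κ × κ, ((edges3 E (Cl p.1) (Cl p.2) (Cl i)).card : ℝ) ≤
      γ / 4 * (t : ℝ) ^ 3 + (if p ∈ G then (t : ℝ) ^ 3 else 0) := by
    intro p
    split_ifs with h
    · have h1 : (edges3 E (Cl p.1) (Cl p.2) (Cl i)).card ≤ t ^ 3 := by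
        refine (card_filter_le _ _).trans ?_
        simp only [card_product, hcard]
        exact le_of_eq (by ring)
      have h2 : ((edges3 E (Cl p.1) (Cl p.2) (Cl i)).card : ℝ) ≤ (t : ℝ) ^ 3 := by
        exact_mod_cast h1
      have : 0 ≤ γ / 4 * (t : ℝ) ^ 3 := by positivity
      linarith
    · simp only [hG, mem_filter, mem_univ, true_and, not_le] at h
      linarith
  have hsum := sum_le_sum (fun p (_ : p ∈ (univ : Finset (κ × κ))) => hfull p)
  rw [sum_add_distrib, sum_const, card_univ, Fintype.card_prod, hK, ← sum_filter,
    filter_mem_eq_inter, univ_inter, sum_const, nsmul_eq_mul, nsmul_eq_mul] at hsum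
  push_cast at hsum
  have htR : (1 : ℝ) ≤ t := by exact_mod_cast ht
  have hKnR : (K : ℝ) * t ≤ n := by exact_mod_cast hKn
  have hfin : ((7 / 16 + γ / 4) * (K : ℝ) ^ 2) * (t : ℝ) ^ 3 ≤ G.card * (t : ℝ) ^ 3 := by
    have a1 : 2 * ((t : ℝ) * (t * n)) ≤ t * (γ / 2 * (n : ℝ) ^ 2) := by
      have : (4 * (t : ℝ)) * (t * n) ≤ (γ * n) * (t * n) := by gcongr
      nlinarith
    have a2 : (t : ℝ) * ((7 / 16 + γ / 2) * ((K : ℝ) * t) ^ 2) ≤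
        t * ((7 / 16 + γ / 2) * (n : ℝ) ^ 2) := by gcongr
    nlinarith
  exact le_of_mul_le_mul_right hfin (by positivity)

theorem embed {V κ τ : Type} {E : V → V → V → Prop}
    (d : ℝ) (hd : 0 < d) (lam : ℝ) (hl : 6 * lam ≤ d) (s t : ℕ)
    (hbit : ∀ (A B C : Finset V), A.card ≤ t → B.card ≤ t →
      C.card ≤ t → d / 2 * (t : ℝ) ^ 3 ≤ ((edges3 E A B C).card : ℝ) →
      ∃ A0 ⊆ A, ∃ B0 ⊆ B, ∃ C0 ⊆ C, A0.card = s ∧ B0.card = s ∧ C0.card = 2 * s ∧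
      ∀ a ∈ A0, ∀ b ∈ B0, ∀ c ∈ C0, E a b c)
    (Cl : κ → Finset V)
    (hdisj : ∀ x y, x ≠ y → Disjoint (Cl x) (Cl y)) (hcard : ∀ x, (Cl x).card = t)
    (q : τ → κ × κ × κ)
    (hq : ∀ j, d * (t : ℝ) ^ 3 ≤
      ((edges3 E (Cl (q j).2.1) (Cl (q j).2.2) (Cl (q j).1)).card : ℝ)) (J : Finset τ) :
    (∀ x, ((s * ∑ j ∈ J, dem (q j) x : ℕ) : ℝ) ≤ lam * t) →
    ∃ Z, Tiled E s J.card Z ∧ ∀ x, (Z ∩ Cl x).card ≤ s * ∑ j ∈ J, dem (q j) x := by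
  induction J using Finset.induction_on with
  | empty => intro _; exact ⟨∅, by rw [card_empty]; exact Tiled.nil, by simp⟩
  | insert j J hj ih =>
    intro hdem
    have hdem' : ∀ x, ((s * ∑ j ∈ J, dem (q j) x : ℕ) : ℝ) ≤ lam * t := by
      intro x
      refine le_trans ?_ (hdem x)
      rw [sum_insert hj]
      exact_mod_cast Nat.mul_le_mul_left s (Nat.le_add_left _ _)
    obtain ⟨Z, hZ, hZc⟩ := ih hdem'
    have hZl : ∀ x, ((Z ∩ Cl x).card : ℝ) ≤ lam * t := fun x =>
      le_trans (by exact_mod_cast hZc x) (hdem' x)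
    obtain ⟨⟨i, j1, j2⟩, hqj⟩ : ∃ z, q j = z := ⟨_, rfl⟩
    have hqj2 := hq j
    rw [hqj] at hqj2
    simp only at hqj2
    have hle : ∀ x, (Cl x \ Z).card ≤ t := fun x => hcard x ▸ card_le_card sdiff_subset
    have hsub : edges3 E (Cl j1) (Cl j2) (Cl i) ⊆
        edges3 E (Cl j1 \ Z) (Cl j2 \ Z) (Cl i \ Z) ∪
        ((Z ∩ Cl j1) ×ˢ Cl j2 ×ˢ Cl i ∪ (Cl j1 ×ˢ (Z ∩ Cl j2) ×ˢ Cl i ∪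
          Cl j1 ×ˢ Cl j2 ×ˢ (Z ∩ Cl i))) := by
      rintro ⟨a, b, c⟩ h
      simp only [edges3, mem_union, mem_filter, mem_product, mem_sdiff, mem_inter] at h ⊢
      tauto
    have hcount : ((edges3 E (Cl j1) (Cl j2) (Cl i)).card : ℝ) ≤
        (edges3 E (Cl j1 \ Z) (Cl j2 \ Z) (Cl i \ Z)).card + 3 * (lam * t) * t ^ 2 := by
      have h1 : (edges3 E (Cl j1) (Cl j2) (Cl i)).card ≤
        (edges3 E (Cl j1 \ Z) (Cl j2 \ Z) (Cl i \ Z)).card +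
          ((Z ∩ Cl j1).card * (t * t) + (t * ((Z ∩ Cl j2).card * t) +
            t * (t * (Z ∩ Cl i).card))) := by
        refine (card_le_card hsub).trans ((card_union_le _ _).trans (Nat.add_le_add_left ?_ _))
        refine (card_union_le _ _).trans ?_
        have := card_union_le (Cl j1 ×ˢ (Z ∩ Cl j2) ×ˢ Cl i) (Cl j1 ×ˢ Cl j2 ×ˢ (Z ∩ Cl i))
        simp only [card_product, hcard] at this ⊢
        omega
      have h2 : ((edges3 E (Cl j1) (Cl j2) (Cl i)).card : ℝ) ≤
        (edges3 E (Cl j1 \ Z) (Cl j2 \ Z) (Cl i \ Z)).card +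
          (((Z ∩ Cl j1).card : ℝ) * (t * t) + (t * (((Z ∩ Cl j2).card : ℝ) * t) +
            t * (t * ((Z ∩ Cl i).card : ℝ)))) := by exact_mod_cast h1
      have t2 : (0 : ℝ) ≤ (t : ℝ) ^ 2 := by positivity
      have k1 := mul_le_mul_of_nonneg_right (hZl j1) t2
      have k2 := mul_le_mul_of_nonneg_right (hZl j2) t2
      have k3 := mul_le_mul_of_nonneg_right (hZl i) t2
      nlinarith
    obtain ⟨A0, hA0, B0, hB0, C0, hC0, cA, cB, cC, hall⟩ := hbit (Cl j1 \ Z) (Cl j2 \ Z)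
      (Cl i \ Z) (hle _) (hle _) (hle _) (by
        have t3 : (0 : ℝ) ≤ (t : ℝ) ^ 3 := by positivity
        have := mul_le_mul_of_nonneg_right hl t3
        nlinarith)
    refine ⟨(A0 ∪ B0 ∪ C0) ∪ Z, ?_, ?_⟩
    · rw [card_insert_of_notMem hj]
      refine Tiled.cons ⟨A0, B0, C0, rfl, cA, cB, cC, hall⟩ ?_ hZ
      simp only [disjoint_union_left]
      exact ⟨⟨disjoint_sdiff_self_left.mono_left hA0, disjoint_sdiff_self_left.mono_left hB0⟩,
        disjoint_sdiff_self_left.mono_left hC0⟩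
    · intro x
      have key : ∀ (y : κ) (T : Finset V), T ⊆ Cl y \ Z →
          (T ∩ Cl x).card ≤ T.card * (if y = x then 1 else 0) := by
        intro y T hT
        split_ifs with h
        · rw [mul_one]; exact card_le_card inter_subset_left
        · rw [mul_zero, Nat.le_zero, card_eq_zero, ← disjoint_iff_inter_eq_empty]
          exact (hdisj y x h).mono_left (hT.trans sdiff_subset)
      rw [sum_insert hj, mul_add, union_inter_distrib_right]
      refine (card_union_le _ _).trans (Nat.add_le_add ?_ (hZc x))
      rw [union_inter_distrib_right, union_inter_distrib_right]
      have u1 := card_union_le (A0 ∩ Cl x ∪ B0 ∩ Cl x) (C0 ∩ Cl x)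
      have u2 := card_union_le (A0 ∩ Cl x) (B0 ∩ Cl x)
      have v1 := key j1 A0 hA0
      have v2 := key j2 B0 hB0
      have v3 := key i C0 hC0
      rw [hqj, dem]
      rw [cA] at v1; rw [cB] at v2; rw [cC] at v3
      simp only
      have e : s * (2 * (if i = x then 1 else 0) + (if j1 = x then 1 else 0) +
        (if j2 = x then 1 else 0)) = 2 * s * (if i = x then 1 else 0) +
        s * (if j1 = x then 1 else 0) + s * (if j2 = x then 1 else 0) := by ring
      rw [e]
      omega


def Cov (γ u : ℝ) : Prop := ∀ s : ℕ, 1 ≤ s → ∃ n0 : ℕ, ∀ (V : Type) [Fintype V]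
  (E : V → V → V → Prop) (n : ℕ), Sym3 E → Fintype.card V = n → n0 ≤ n →
  Deg E (7 / 16 + γ) n → ∃ k Z, Tiled E s k Z ∧ (n : ℝ) - 4 * s * k ≤ u * n

theorem cov_step0 (γ : ℝ) (hγ : 0 < γ) (hγ1 : γ ≤ 1) (s t : ℕ) (hs : 1 ≤ s) (ht : 1 ≤ t)
    {V : Type} [Fintype V] {E : V → V → V → Prop} {n : ℕ} (hE : Sym3 E)
    (hbit : ∀ (A B C : Finset V), A.card ≤ t → B.card ≤ t →
      C.card ≤ t → γ / 4 / 2 * (t : ℝ) ^ 3 ≤ ((edges3 E A B C).card : ℝ) →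
      ∃ A0 ⊆ A, ∃ B0 ⊆ B, ∃ C0 ⊆ C, A0.card = s ∧ B0.card = s ∧ C0.card = 2 * s ∧
      ∀ a ∈ A0, ∀ b ∈ B0, ∀ c ∈ C0, E a b c)
    (hV : Fintype.card V = n) (hnt : 4 * (t : ℝ) ≤ γ * n) (hdeg : Deg E (7 / 16 + γ) n)
    {k : ℕ} {Z : Finset V} (hT : Tiled E t k Z) : ∃ k' Z', Tiled E s k' Z' ∧
      (n : ℝ) - 4 * s * k' ≤ (1 - γ / 24) * (n - 4 * t * k) + γ / 24 * t + 5 * s * n / t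
        + 4 * s := by
  set lam : ℝ := γ / 24 with hlam
  have htR : (1 : ℝ) ≤ t := by exact_mod_cast ht
  have hsR : (1 : ℝ) ≤ s := by exact_mod_cast hs
  have hlam0 : 0 < lam := by positivity
  have hlam1 : lam ≤ 1 / 24 := by rw [hlam]; linarith
  obtain ⟨𝒞1, a1, a2, a3, a4⟩ := hT.extract hE ht
  obtain ⟨𝒞2, b1, b2, b3, b4⟩ := split_sets t ht (univ \ Z).card (univ \ Z) le_rfl
  have h12 : ∀ c ∈ 𝒞1, ∀ d ∈ 𝒞2, Disjoint c d := by
    intro c hc d hd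
    have e1 : c ⊆ Z := a3 ▸ subset_biUnion_of_mem id hc
    have e2 : d ⊆ univ \ Z := (subset_biUnion_of_mem id hd).trans b3
    exact disjoint_sdiff.mono e1 e2
  set κ : Type := {c : Finset V // c ∈ 𝒞1 ∪ 𝒞2} with hκ
  set K := Fintype.card κ with hK
  set Cl : κ → Finset V := fun c => c.1 with hCl
  have hcard : ∀ x, (Cl x).card = t := by
    intro x
    rcases mem_union.1 x.2 with h | h
    · exact a1 _ h
    · exact b1 _ h
  have hdisj : ∀ x y, x ≠ y → Disjoint (Cl x) (Cl y) := by
    intro x y hne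
    have hne' : x.1 ≠ y.1 := fun h => hne (Subtype.ext h)
    rcases mem_union.1 x.2 with h | h <;> rcases mem_union.1 y.2 with h' | h'
    · exact a2 _ h _ h' hne'
    · exact h12 _ h _ h'
    · exact (h12 _ h' _ h).symm
    · exact b2 _ h _ h' hne'
  have hU : (univ : Finset κ).biUnion Cl = Z ∪ 𝒞2.biUnion id := by
    rw [← a3, ← union_biUnion]
    ext v
    simp only [mem_biUnion, mem_univ, true_and, hCl, id]
    constructor
    · rintro ⟨c, hc⟩; exact ⟨c.1, c.2, hc⟩
    · rintro ⟨c, hc, hv⟩; exact ⟨⟨c, hc⟩, hv⟩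
  have hUc : K * t = Z.card + (𝒞2.biUnion id).card := by
    rw [← card_union_of_disjoint (disjoint_sdiff.mono_right b3), ← hU,
      card_biUnion (fun x _ y _ h => hdisj x y h)]
    simp [hcard, hK]
  have hZn : Z.card + (univ \ Z).card = n := by
    rw [← hV, ← card_univ, add_comm]
    exact card_sdiff_add_card_eq_card (subset_univ Z)
  have hn : n < (K + 1) * t := by
    have : (K + 1) * t = K * t + t := by ring
    omega
  have hKn : K * t ≤ n := by
    have := card_le_card b3
    omega
  have hZc := hT.card hE ht
  have hKnR : (K : ℝ) * t ≤ n := by exact_mod_cast hKn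
  have hnR : (n : ℝ) < (K + 1) * t := by exact_mod_cast hn
  have hK0 : 0 < K := by
    rcases Nat.eq_zero_or_pos K with h | h
    · rw [h] at hnR
      push_cast at hnR
      have : γ * n ≤ 1 * n := by gcongr
      linarith
    · exact h
  have hKR : (0 : ℝ) < K := by exact_mod_cast hK0
  obtain ⟨ι, _, q, w, w1, w2, w3, w4, w5⟩ := fractional (γ / 4) (by positivity) K rfl hK0
    (fun i j l : κ => γ / 4 * (t : ℝ) ^ 3 ≤ ((edges3 E (Cl j) (Cl l) (Cl i)).card : ℝ))
    (fun i => reduced_deg hE γ hγ n t K ht Cl hdisj hcard hV rfl hn hnt hdeg i)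
  set m : ι → ℕ := fun i => ⌊lam * t * K * w i / (4 * s)⌋₊ with hm
  have hmle : ∀ i, (m i : ℝ) ≤ lam * t * K * w i / (4 * s) := fun i =>
    Nat.floor_le (by have := w2 i; positivity)
  have hmge : ∀ i, lam * t * K * w i / (4 * s) - 1 ≤ m i := fun i =>
    (Nat.sub_one_lt_floor _).le
  have hdem : ∀ x : κ, ((s * ∑ j ∈ (univ : Finset (Σ i, Fin (m i))), dem (q j.1) x : ℕ) : ℝ)
      ≤ lam * t := by
    intro x
    rw [Fintype.sum_sigma]
    simp only [sum_const, card_univ, Fintype.card_fin, smul_eq_mul]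
    push_cast
    calc (s : ℝ) * ∑ i, (m i : ℝ) * dem (q i) x
        ≤ s * ∑ i, lam * t * K * w i / (4 * s) * dem (q i) x := by
          gcongr with i; exact hmle i
      _ = s * ∑ i, lam * t * K / (4 * s) * (w i * dem (q i) x) := by
          congr 1; apply sum_congr rfl; intro i _; ring
      _ = lam * t := by
          rw [← mul_sum, w5]; field_simp
  obtain ⟨W, hW, hWc⟩ := embed (γ / 4) (by positivity) lam (by rw [hlam]; linarith) s t hbit Cl
    hdisj hcard (fun j : Σ i, Fin (m i) => q j.1) (fun j => w4 j.1) univ hdem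
  rw [card_univ, Fintype.card_sigma] at hW
  simp only [Fintype.card_fin] at hW
  set k1 := ∑ i, m i with hk1
  have hk1R : lam * t * K / (4 * s) - (K + 1) ≤ (k1 : ℝ) := by
    rw [hk1]; push_cast
    calc lam * t * K / (4 * s) - (K + 1) ≤ lam * t * K / (4 * s) * ∑ i, w i - Fintype.card ι := by
          rw [w3, mul_one]
          have : (Fintype.card ι : ℝ) ≤ K + 1 := by exact_mod_cast w1
          linarith
      _ = ∑ i, (lam * t * K * w i / (4 * s) - 1) := by
          rw [sum_sub_distrib, mul_sum]
          simp only [sum_const, card_univ, nsmul_eq_mul, mul_one]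
          congr 1; apply sum_congr rfl; intro i _; ring
      _ ≤ _ := sum_le_sum (fun i _ => hmge i)
  set q' := ⌊(1 - lam) * t / s⌋₊ with hq'
  have hq1 : (q' : ℝ) ≤ (1 - lam) * t / s := Nat.floor_le (by
    have : 0 ≤ 1 - lam := by linarith
    positivity)
  have hq2 : (1 - lam) * t / s - 1 ≤ (q' : ℝ) := (Nat.sub_one_lt_floor _).le
  obtain ⟨Z', hZ', hTZ⟩ := a4 W s q' (by
    intro c hc
    have h1 := hWc ⟨c, mem_union_left _ hc⟩
    have h2 := hdem ⟨c, mem_union_left _ hc⟩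
    have h3 : ((W ∩ c).card : ℝ) ≤ lam * t := le_trans (by exact_mod_cast h1) h2
    have h4 : (c \ W).card + (W ∩ c).card = t := by
      rw [inter_comm, card_sdiff_add_card_inter]; exact a1 c hc
    have h5 : ((c \ W).card : ℝ) + (W ∩ c).card = t := by exact_mod_cast h4
    have h6 : (q' : ℝ) * s ≤ (1 - lam) * t := by
      rw [← le_div_iff₀ (by positivity)]; exact hq1
    have : ((q' * s : ℕ) : ℝ) ≤ (c \ W).card := by push_cast; linarith
    exact_mod_cast this)
  refine ⟨k1 + k * q', W ∪ Z', hW.union hTZ (disjoint_sdiff.mono_right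
    (hZ'.trans (sdiff_subset_sdiff (subset_univ _) le_rfl))), ?_⟩
  push_cast
  have f1 : lam * t * K - 4 * s * (K + 1) ≤ 4 * s * (k1 : ℝ) := by
    have := mul_le_mul_of_nonneg_left hk1R (show (0 : ℝ) ≤ 4 * s by positivity)
    have e : 4 * (s : ℝ) * (lam * t * K / (4 * s) - (K + 1)) =
      lam * t * K - 4 * s * (K + 1) := by field_simp
    linarith
  have f2 : 4 * (k : ℝ) * ((1 - lam) * t - s) ≤ 4 * s * (k * (q' : ℝ)) := by
    have := mul_le_mul_of_nonneg_left hq2 (show (0 : ℝ) ≤ 4 * k * s by positivity)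
    have e : 4 * (k : ℝ) * s * ((1 - lam) * t / s - 1) = 4 * k * ((1 - lam) * t - s) := by
      field_simp
    linarith
  have f3 : (K : ℝ) ≤ n / t := by rw [le_div_iff₀ (by positivity)]; exact hKnR
  have f4 : 4 * (k : ℝ) ≤ n / t := by
    rw [le_div_iff₀ (by positivity)]
    have : 4 * t * k ≤ n := by rw [← hZc]; omega
    have : 4 * (t : ℝ) * k ≤ n := by exact_mod_cast this
    linarith
  have f5 : 4 * (s : ℝ) * K + 4 * k * s ≤ 5 * s * n / t := by
    have g1 := mul_le_mul_of_nonneg_left f3 (show (0 : ℝ) ≤ 4 * s by positivity)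
    have g2 := mul_le_mul_of_nonneg_left f4 (show (0 : ℝ) ≤ s by positivity)
    have e : 5 * (s : ℝ) * n / t = 4 * s * (n / t) + s * (n / t) := by ring
    rw [e]; linarith
  have f6 : lam * n ≤ lam * ((K + 1) * t) := by gcongr
  nlinarith

theorem cov_step (γ : ℝ) (hγ : 0 < γ) (hγ1 : γ ≤ 1) (u ξ : ℝ) (hξ : 0 < ξ) (h : Cov γ u) :
    Cov γ ((1 - γ / 24) * u + ξ) := by
  intro s hs
  obtain ⟨t0, ht0⟩ := bit_exists (γ / 4 / 2) (by positivity) s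
  obtain ⟨t1, ht1⟩ := exists_nat_ge (10 * s / ξ)
  set t := max (max t0 t1) 1 with htdef
  have ht : 1 ≤ t := le_max_right _ _
  have htt0 : t0 ≤ t := (le_max_left _ _).trans (le_max_left _ _)
  have htt1 : t1 ≤ t := (le_max_right _ _).trans (le_max_left _ _)
  obtain ⟨n1, hn1⟩ := h t ht
  obtain ⟨n2, hn2⟩ := exists_nat_ge (4 * t / γ)
  obtain ⟨n3, hn3⟩ := exists_nat_ge ((γ / 24 * t + 4 * s) / (ξ / 2))
  refine ⟨max n1 (max n2 n3), ?_⟩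
  intro V _ E n hE hV hn hdeg
  have g1 : n1 ≤ n := (le_max_left _ _).trans hn
  have g2 : n2 ≤ n := ((le_max_left _ _).trans (le_max_right _ _)).trans hn
  have g3 : n3 ≤ n := ((le_max_right _ _).trans (le_max_right _ _)).trans hn
  obtain ⟨k, Z, hT, hk⟩ := hn1 V E n hE hV g1 hdeg
  have htR : (1 : ℝ) ≤ t := by exact_mod_cast ht
  have g2R : (n2 : ℝ) ≤ n := by exact_mod_cast g2
  have g3R : (n3 : ℝ) ≤ n := by exact_mod_cast g3
  have t1R : (t1 : ℝ) ≤ t := by exact_mod_cast htt1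
  have c1 : 4 * (t : ℝ) ≤ γ * n := by
    have := hn2.trans g2R
    rw [div_le_iff₀ hγ] at this
    linarith
  have c2 : γ / 24 * t + 4 * s ≤ ξ / 2 * n := by
    have := hn3.trans g3R
    rw [div_le_iff₀ (by positivity)] at this
    linarith
  have c3 : 5 * s * n / t ≤ ξ / 2 * n := by
    have := ht1.trans t1R
    rw [div_le_iff₀ hξ] at this
    rw [div_le_iff₀ (by positivity)]
    have h2 := mul_le_mul_of_nonneg_right this (show (0 : ℝ) ≤ n by positivity)
    linarith
  obtain ⟨k', Z', hT', hk'⟩ := cov_step0 γ hγ hγ1 s t hs ht hE (fun A B C => ht0 t htt0 E A B C)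
    hV c1 hdeg hT
  refine ⟨k', Z', hT', hk'.trans ?_⟩
  have : (1 - γ / 24) * (n - 4 * t * k) ≤ (1 - γ / 24) * (u * n) :=
    mul_le_mul_of_nonneg_left hk (by linarith)
  linarith

theorem cov_all (γ : ℝ) (hγ : 0 < γ) (hγ1 : γ ≤ 1) (ε : ℝ) (hε : 0 < ε) : Cov γ ε := by
  have key : ∀ j : ℕ, Cov γ (ε / 2 + (1 - γ / 24) ^ j) := by
    intro j
    induction j with
    | zero =>
      intro s hs
      refine ⟨0, fun V _ E n hE hV hn hdeg => ⟨0, ∅, Tiled.nil, ?_⟩⟩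
      have : (0 : ℝ) ≤ n := by positivity
      simp
      nlinarith
    | succ j ih =>
      have := cov_step γ hγ hγ1 _ (γ / 24 * (ε / 2)) (by positivity) ih
      convert this using 1
      ring
  obtain ⟨j, hj⟩ := exists_pow_lt_of_lt_one (show 0 < ε / 2 by positivity)
    (show 1 - γ / 24 < 1 by linarith)
  intro s hs
  obtain ⟨n0, h0⟩ := key j s hs
  refine ⟨n0, fun V _ E n hE hV hn hdeg => ?_⟩
  obtain ⟨k, Z, hT, hk⟩ := h0 V E n hE hV hn hdeg
  refine ⟨k, Z, hT, hk.trans ?_⟩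
  gcongr
  linarith


theorem bit_path {V : Type} {E : V → V → V → Prop} (hE : Sym3 E) (s : ℕ) :
    ∀ A B C : Finset V, Disjoint A B → Disjoint A C → Disjoint B C →
    A.card = s + 1 → B.card = s + 1 → 2 * s + 1 ≤ C.card →
    (∀ a ∈ A, ∀ b ∈ B, ∀ c ∈ C, E a b c) →
    ∃ u ∈ A, ∃ v, ∃ S ⊆ A ∪ B ∪ C, S.card = 4 * s + 3 ∧ LPath E u v S := by
  induction s with
  | zero =>
    intro A B C d1 d2 d3 hA hB hC h
    obtain ⟨a, ha⟩ := card_pos.1 (show 0 < A.card by omega)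
    obtain ⟨b, hb⟩ := card_pos.1 (show 0 < B.card by omega)
    obtain ⟨c, hc⟩ := card_pos.1 (show 0 < C.card by omega)
    have e := h a ha b hb c hc
    refine ⟨a, ha, b, {a, c, b}, ?_, ?_, LPath.edge hE (hE.s23 e)⟩
    · intro x hx
      simp only [mem_insert, mem_singleton] at hx
      simp only [mem_union]
      rcases hx with rfl | rfl | rfl <;> tauto
    · exact card_eq_three.2 ⟨a, c, b, hE.ne13 e, hE.ne e, (hE.ne23 e).symm, rfl⟩
  | succ s ih =>
    intro A B C d1 d2 d3 hA hB hC h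
    obtain ⟨a, ha⟩ := card_pos.1 (show 0 < A.card by omega)
    obtain ⟨b, hb⟩ := card_pos.1 (show 0 < B.card by omega)
    obtain ⟨c, hc, c', hc', hne⟩ := one_lt_card.1 (show 1 < C.card by omega)
    have cC : ((C.erase c).erase c').card + 2 = C.card := by
      rw [card_erase_of_mem (by simp [hc', hne.symm]), card_erase_of_mem hc]; omega
    obtain ⟨u, hu, v, S, hS, hSc, hp⟩ := ih (A.erase a) (B.erase b) ((C.erase c).erase c')
      (d1.mono (erase_subset _ _) (erase_subset _ _))
      (d2.mono (erase_subset _ _) ((erase_subset _ _).trans (erase_subset _ _)))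
      (d3.mono (erase_subset _ _) ((erase_subset _ _).trans (erase_subset _ _)))
      (by rw [card_erase_of_mem ha]; omega) (by rw [card_erase_of_mem hb]; omega) (by omega)
      (fun x hx y hy z hz => h x (mem_of_mem_erase hx) y (mem_of_mem_erase hy) z
        (mem_of_mem_erase (mem_of_mem_erase hz)))
    have hmem : ∀ x ∈ S, (x ≠ a ∧ x ∈ A) ∨ (x ≠ b ∧ x ∈ B) ∨ (x ≠ c' ∧ x ≠ c ∧ x ∈ C) := by
      intro x hx
      have := hS hx
      simp only [mem_union, mem_erase] at this
      tauto
    have D1 : ∀ x, x ∈ A → x ∉ B := fun x hx => disjoint_left.1 d1 hx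
    have D2 : ∀ x, x ∈ A → x ∉ C := fun x hx => disjoint_left.1 d2 hx
    have D3 : ∀ x, x ∈ B → x ∉ C := fun x hx => disjoint_left.1 d3 hx
    have na : a ∉ S := fun hx => by
      have := hmem a hx; have := D1 a ha; have := D2 a ha; tauto
    have nb : b ∉ S := fun hx => by
      have := hmem b hx; have := D1 b; have := D3 b hb; tauto
    have nc : c ∉ S := fun hx => by
      have := hmem c hx; have := D2 c; have := D3 c; tauto
    have nc' : c' ∉ S := fun hx => by
      have := hmem c' hx; have := D2 c'; have := D3 c'; tauto
    have ab : a ≠ b := fun e => D1 a ha (e ▸ hb)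
    have ac : a ≠ c := fun e => D2 a ha (e ▸ hc)
    have ac' : a ≠ c' := fun e => D2 a ha (e ▸ hc')
    have bc : b ≠ c := fun e => D3 b hb (e ▸ hc)
    have bc' : b ≠ c' := fun e => D3 b hb (e ▸ hc')
    have huA := mem_of_mem_erase hu
    have p1 : LPath E b v (insert b (insert c' S)) :=
      LPath.cons (hE.s23 (hE.s12 (h u huA b hb c' hc'))) nb nc' hp
    have n1 : a ∉ insert b (insert c' S) := by simp [ab, ac', na]
    have n2 : c ∉ insert b (insert c' S) := by simp [bc.symm, hne, nc]
    refine ⟨a, ha, v, insert a (insert c (insert b (insert c' S))), ?_, ?_,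
      LPath.cons (hE.s23 (h a ha b hb c hc)) n1 n2 p1⟩
    · intro x hx
      simp only [mem_insert] at hx
      simp only [mem_union]
      rcases hx with rfl | rfl | rfl | rfl | hx
      · tauto
      · tauto
      · tauto
      · tauto
      · have := hmem x hx; tauto
    · rw [card_insert_of_notMem (by simp only [mem_insert] at n1 ⊢; tauto),
        card_insert_of_notMem n2, card_insert_of_notMem (by simp [bc', nb]),
        card_insert_of_notMem nc', hSc]
      omega

theorem tiled_paths {V : Type} [Nonempty V] {E : V → V → V → Prop} (hE : Sym3 E) {s k : ℕ}
    (hs : 1 ≤ s) {Z : Finset V} (h : Tiled E s k Z) : ∃ (u v : ℕ → V) (S : ℕ → Finset V),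
      (∀ i < k, LPath E (u i) (v i) (S i) ∧ S i ⊆ Z ∧ (S i).card = 4 * s - 1) ∧
      ∀ i < k, ∀ j < k, i ≠ j → Disjoint (S i) (S j) := by
  induction h with
  | nil =>
    inhabit V
    exact ⟨fun _ => default, fun _ => default, fun _ => ∅, by simp, by simp⟩
  | @cons k T Z hb hd _ ih =>
    obtain ⟨u, v, S, h1, h2⟩ := ih
    obtain ⟨A, B, C, rfl, hA, hB, hC, h⟩ := hb
    obtain ⟨d1, d2, d3⟩ := bit_disj hE hs hA hB hC h
    obtain ⟨r, rfl⟩ : ∃ r, s = r + 1 := ⟨s - 1, by omega⟩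
    obtain ⟨u0, -, v0, S0, hS0, cS0, hp⟩ := bit_path hE r A B C d1 d2 d3 hA hB (by omega) h
    refine ⟨fun i => if i = k then u0 else u i, fun i => if i = k then v0 else v i,
      fun i => if i = k then S0 else S i, ?_, ?_⟩
    · intro i hi
      by_cases hik : i = k
      · simp only [hik, if_true]
        exact ⟨hp, hS0.trans subset_union_left, by omega⟩
      · simp only [hik, if_false]
        obtain ⟨g1, g2, g3⟩ := h1 i (by omega)
        exact ⟨g1, g2.trans subset_union_right, g3⟩
    · intro i hi j hj hij
      by_cases hik : i = k
      · have hjk : j ≠ k := fun e => hij (hik.trans e.symm)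
        simp only [hik, hjk, if_true, if_false]
        exact hd.mono hS0 (h1 j (by omega)).2.1
      · by_cases hjk : j = k
        · simp only [hik, hjk, if_true, if_false]
          exact (hd.mono hS0 (h1 i (by omega)).2.1).symm
        · simp only [hik, hjk, if_false]
          exact h2 i (by omega) j (by omega) hij

theorem Tiled.map {V V' : Type} {E : V → V → V → Prop} (f : V' ↪ V) {s k : ℕ} {Z : Finset V'}
    (h : Tiled (fun a b c => E (f a) (f b) (f c)) s k Z) : Tiled E s k (Z.map f) := by
  induction h with
  | nil => exact Tiled.nil
  | @cons k T Z hb hd _ ih =>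
    obtain ⟨A, B, C, rfl, hA, hB, hC, h⟩ := hb
    rw [map_union]
    refine Tiled.cons ⟨A.map f, B.map f, C.map f, ?_, by simpa, by simpa, by simpa, ?_⟩ ?_ ih
    · rw [map_union, map_union]
    · intro a ha b hb c hc
      obtain ⟨a, ha2, rfl⟩ := mem_map.1 ha
      obtain ⟨b, hb2, rfl⟩ := mem_map.1 hb
      obtain ⟨c, hc2, rfl⟩ := mem_map.1 hc
      exact h a ha2 b hb2 c hc2
    · exact (disjoint_map f).2 hd

theorem deg_sub {V : Type} [Fintype V] {E : V → V → V → Prop} {n : ℕ} (hV : Fintype.card V = n)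
    (X : Finset V) (γ : ℝ) (hγ : 0 < γ) (hX : 4 * (X.card : ℝ) ≤ γ * n)
    (hdeg : Deg E (7 / 16 + γ) n) (n' : ℕ) (hn' : n' ≤ n) :
    Deg (fun a b c : {v // v ∉ X} => E a b c) (7 / 16 + γ / 2) n' := by
  intro v
  have h1 := hdeg v.1
  have hsub : univ.filter (fun p : V × V => E v p.1 p.2) ⊆
      ((univ.filter (fun p : {v // v ∉ X} × {v // v ∉ X} => E v p.1 p.2)).image
        (fun p => (p.1.1, p.2.1))) ∪ (X ×ˢ univ ∪ univ ×ˢ X) := by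
    rintro ⟨a, b⟩ h
    simp only [mem_filter, mem_univ, true_and] at h
    by_cases ha : a ∈ X
    · simp [ha]
    by_cases hb : b ∈ X
    · simp [hb]
    refine mem_union_left _ (mem_image.2 ⟨(⟨a, ha⟩, ⟨b, hb⟩), ?_, rfl⟩)
    simpa using h
  have h2 := (card_le_card hsub).trans ((card_union_le _ _).trans
    (Nat.add_le_add card_image_le (card_union_le _ _)))
  simp only [card_product, card_univ, hV] at h2
  have h3 : ((univ.filter (fun p : V × V => E v p.1 p.2)).card : ℝ) ≤
    (univ.filter (fun p : {v // v ∉ X} × {v // v ∉ X} => E v p.1 p.2)).card +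
      ((X.card : ℝ) * n + n * X.card) := by exact_mod_cast h2
  have h4 := mul_le_mul_of_nonneg_right hX (show (0 : ℝ) ≤ n by positivity)
  have h5 : (7 / 16 + γ / 2) * (n' : ℝ) ^ 2 ≤ (7 / 16 + γ / 2) * (n : ℝ) ^ 2 := by gcongr
  show (7 / 16 + γ / 2) * (n' : ℝ) ^ 2 ≤ _
  nlinarith


theorem finish {V : Type} [Fintype V] {E : V → V → V → Prop} {n : ℕ} (hE : Sym3 E)
    (hV : Fintype.card V = n) (hev : Even n) {p q : V} {P R : Finset V} {B : ℝ} (hB : 0 ≤ B)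
    (habs : ∀ U : Finset V, Disjoint U P → Even U.card → (U.card : ℝ) ≤ B →
      LPath E p q (P ∪ U)) (hRP : Disjoint R P) {M : ℕ} (hsup : Supply E R M) {k c : ℕ}
    (u v : ℕ → V) (S : ℕ → Finset V) (hS : ∀ i < k, LPath E (u i) (v i) (S i))
    (hSP : ∀ i < k, Disjoint (S i) (P ∪ R)) (hSc : ∀ i < k, (S i).card = c)
    (hSd : ∀ i < k, ∀ j < k, i ≠ j → Disjoint (S i) (S j)) (hM : 3 * (k + 1) ≤ M)
    (hcov : (n : ℝ) - P.card - k * c ≤ B) :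
    ∃ f : ZMod n → V, Function.Bijective f ∧ ∀ j : ℕ, j < n / 2 →
      E (f ((2 * j : ℕ) : ZMod n)) (f ((2 * j + 1 : ℕ) : ZMod n))
        (f ((2 * j + 2 : ℕ) : ZMod n)) := by
  obtain ⟨C, p', q', hCR, hCc, hchain⟩ := chain hE hsup
    (fun i => if i = k then p else u i) (fun i => if i = k then q else v i) (range (k + 1))
    (by simp) (by simpa using hM)
  rw [card_range] at hCc
  obtain ⟨a, x, b, haR, hxR, hbR, haC, hxC, hbC, hab, e1, e2⟩ := hsup q' p' C (hCc.trans hM)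
  have hax := hE.ne23 e1
  have hxb := hE.ne e2
  set Y : Finset V := (range k).biUnion S with hY
  have hYP : Disjoint Y (P ∪ R) := by
    rw [hY, disjoint_biUnion_left]
    intro i hi
    exact hSP i (mem_range.1 hi)
  have hYc : Y.card = k * c := by
    rw [hY, card_biUnion (fun i hi j hj h => hSd i (mem_range.1 hi) j (mem_range.1 hj) h),
      sum_congr rfl (fun i hi => hSc i (mem_range.1 hi))]
    simp
  rw [disjoint_union_right] at hYP
  -- the long path, for every admissible absorbed set
  have hlong : ∀ U : Finset V, Disjoint U P → Even U.card → (U.card : ℝ) ≤ B → Disjoint U C →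
      Disjoint U Y → LPath E p' q' (C ∪ ((P ∪ U) ∪ Y)) := by
    intro U h1 h2 h3 h4 h5
    have := hchain (fun i => if i = k then P ∪ U else S i) ?_ ?_ ?_
    · convert this using 2
      rw [range_add_one, biUnion_insert, if_pos rfl]
      congr 1
      rw [hY]
      apply biUnion_congr rfl
      intro i hi
      rw [if_neg (mem_range.1 hi).ne]
    · intro i hi
      rw [mem_range] at hi
      by_cases h : i = k
      · simp only [h, if_true]; exact habs U h1 h2 h3
      · simp only [h, if_false]; exact hS i (by omega)
    · have key : ∀ i < k, Disjoint (P ∪ U) (S i) := by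
        intro i hi
        rw [disjoint_union_left]
        have hsub : S i ⊆ Y := subset_biUnion_of_mem S (mem_range.2 hi)
        exact ⟨hYP.1.symm.mono_right hsub, h5.mono_right hsub⟩
      intro i hi j hj hij
      rw [mem_range] at hi hj
      by_cases h : i = k
      · have hjk : j ≠ k := fun e => hij (h.trans e.symm)
        simp only [h, hjk, if_true, if_false]
        exact key j (by omega)
      · by_cases hjk : j = k
        · simp only [h, hjk, if_true, if_false]
          exact (key i (by omega)).symm
        · simp only [h, hjk, if_false]
          exact hSd i (by omega) j (by omega) hij
    · intro i hi
      rw [mem_range] at hi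
      by_cases h : i = k
      · simp only [h, if_true]
        exact disjoint_union_left.2 ⟨hRP.symm.mono_right hCR, h4⟩
      · simp only [h, if_false]
        exact (disjoint_union_right.1 (hSP i (by omega))).2.mono_right hCR
  have h0 := hlong ∅ (by simp) (by simp) (by simpa using hB) (by simp) (by simp)
  rw [union_empty] at h0
  have hodd := h0.odd_card hE
  set S0 : Finset V := C ∪ (P ∪ Y) with hS0
  have hnot : ∀ y ∈ R, y ∉ C → y ∉ S0 := by
    intro y hy hyC h
    simp only [hS0, mem_union] at h
    rcases h with h | h | h
    · exact hyC h
    · exact disjoint_left.1 hRP hy h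
    · exact disjoint_left.1 hYP.2 h hy
  have na := hnot a haR haC
  have nx := hnot x hxR hxC
  have nb := hnot b hbR hbC
  set T : Finset V := {a, x, b} with hT
  have hTc : T.card = 3 := card_eq_three.2 ⟨a, x, b, hax, hab, hxb, rfl⟩
  have hTS : Disjoint S0 T := by
    rw [hT]; simp [na, nx, nb]
  set U : Finset V := (S0 ∪ T)ᶜ with hU
  have hUc : U.card + S0.card + 3 = n := by
    have h1 := card_compl_add_card (S0 ∪ T)
    rw [card_union_of_disjoint hTS, hTc, hV] at h1
    rw [hU]; omega
  have hUS : Disjoint U S0 := by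
    rw [hU]; exact disjoint_compl_left.mono_right subset_union_left
  have hUT : Disjoint U T := by
    rw [hU]; exact disjoint_compl_left.mono_right subset_union_right
  have hUev : Even U.card := by
    rcases hodd with ⟨r, hr⟩
    rcases hev with ⟨l, hl⟩
    exact ⟨l - r - 2, by omega⟩
  have hUB : (U.card : ℝ) ≤ B := by
    have h1 : P.card + k * c ≤ S0.card := by
      rw [← hYc, ← card_union_of_disjoint hYP.1.symm]
      exact card_le_card subset_union_right
    have h2 : (P.card : ℝ) + k * c ≤ S0.card := by exact_mod_cast h1
    have h3 : (U.card : ℝ) + S0.card + 3 = n := by exact_mod_cast hUc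
    linarith
  have hUS' := hUS
  rw [hS0, disjoint_union_right, disjoint_union_right] at hUS'
  have hfull := hlong U hUS'.2.1 hUev hUB hUS'.1 hUS'.2.2
  have hset : C ∪ ((P ∪ U) ∪ Y) = Tᶜ := by
    ext y
    have d1 : y ∈ S0 → y ∉ T := fun h => disjoint_left.1 hTS h
    simp only [hU, mem_union, mem_compl, hS0] at d1 ⊢
    tauto
  rw [hset] at hfull
  have hq := hfull.right_mem
  have hq' : q' ∉ T := by simpa using hq
  simp only [hT, mem_insert, mem_singleton, not_or] at hq'
  have hext := hfull.trans (LPath.edge hE e1) (by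
    intro y hy hy2
    simp only [hT, mem_insert, mem_singleton, mem_compl, not_or] at hy hy2
    tauto)
  refine cycle_of_path hE hext (m := b) ?_ e2 ?_ hV
  · simp only [hT, mem_union, mem_compl, mem_insert, mem_singleton, not_or]
    refine ⟨by simp, Ne.symm hq'.2.2, hab.symm, hxb.symm⟩
  · ext y
    simp only [hT, mem_union, mem_compl, mem_insert, mem_singleton, mem_univ, iff_true]
    tauto

theorem core (γ : ℝ) (hγ : 0 < γ) (hγ1 : γ ≤ 1) : ∃ n0 : ℕ, ∀ (V : Type) [Fintype V]
    (E : V → V → V → Prop) (n : ℕ), Sym3 E → Fintype.card V = n → n0 ≤ n → Even n →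
    Deg E (7 / 16 + γ) n → ∃ f : ZMod n → V, Function.Bijective f ∧ ∀ j : ℕ, j < n / 2 →
      E (f ((2 * j : ℕ) : ZMod n)) (f ((2 * j + 1 : ℕ) : ZMod n))
        (f ((2 * j + 2 : ℕ) : ZMod n)) := by
  obtain ⟨a, ha, n1, habs⟩ := absorbing_path (min (γ / 16) (1 / 10 ^ 6)) (by positivity)
  obtain ⟨κ, hκ, n2, hres⟩ := reservoir (min (γ / 16) (a / 4)) (by positivity)
  obtain ⟨s0, hs0⟩ := exists_nat_ge (max (3 / κ) (1 / a))
  set s := max s0 1 with hsdef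
  have hs : 1 ≤ s := le_max_right _ _
  obtain ⟨n3, hcov⟩ := cov_all (γ / 2) (by positivity) (by linarith) (a / 4) (by positivity) s hs
  obtain ⟨n4, hn4⟩ := exists_nat_ge (6 / κ)
  refine ⟨max (max n1 n2) (max (2 * n3) n4), ?_⟩
  intro V _ E n hE hV hn hev hdeg
  have g1 : n1 ≤ n := by omega
  have g2 : n2 ≤ n := by omega
  have g3 : 2 * n3 ≤ n := by omega
  have g4 : n4 ≤ n := by omega
  have hnR : (0 : ℝ) ≤ n := by positivity
  have hdeg0 : Deg E (7 / 16) n := by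
    intro v
    refine le_trans ?_ (hdeg v)
    gcongr
    linarith
  obtain ⟨p, q, P, hPc, hP⟩ := habs V E n hE hV g1 hdeg0
  have hP1 : (P.card : ℝ) ≤ γ / 16 * n :=
    hPc.trans (mul_le_mul_of_nonneg_right (min_le_left _ _) hnR)
  have hP2 : (P.card : ℝ) ≤ 1 / 10 ^ 6 * n :=
    hPc.trans (mul_le_mul_of_nonneg_right (min_le_right _ _) hnR)
  obtain ⟨R, M, hRP, hRc, hM, hsup⟩ := hres V E n hE hV g2 hdeg0 P (by linarith)
  have hR1 : (R.card : ℝ) ≤ γ / 16 * n :=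
    hRc.trans (mul_le_mul_of_nonneg_right (min_le_left _ _) hnR)
  have hR2 : (R.card : ℝ) ≤ a / 4 * n :=
    hRc.trans (mul_le_mul_of_nonneg_right (min_le_right _ _) hnR)
  set X := P ∪ R with hX
  have hXc : X.card = P.card + R.card := card_union_of_disjoint hRP.symm
  have hXR : (X.card : ℝ) = P.card + R.card := by exact_mod_cast hXc
  have hXn : X.card ≤ n := hV ▸ card_le_univ X
  have hV' : Fintype.card {v // v ∉ X} = n - X.card := by
    rw [Fintype.card_subtype_compl, hV, Fintype.card_coe]
  have hn'R : ((n - X.card : ℕ) : ℝ) = n - X.card := by push_cast [hXn]; ring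
  have hγn : γ * n ≤ 1 * n := by gcongr
  have hXh : 2 * (X.card : ℝ) ≤ n := by rw [hXR]; linarith
  have hXh' : 2 * X.card ≤ n := by exact_mod_cast hXh
  have hE' : Sym3 (fun a b c : {v // v ∉ X} => E a b c) :=
    ⟨fun h => hE.s12 h, fun h => hE.s23 h, fun h e => hE.ne h (congrArg Subtype.val e)⟩
  obtain ⟨k, Z, hZ, hk⟩ := hcov {v // v ∉ X} (fun a b c => E a b c) (n - X.card) hE' hV'
    (by omega) (deg_sub hV X γ hγ (by rw [hXR]; linarith) hdeg _ (Nat.sub_le _ _))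
  have hZc := hZ.card hE' hs
  have hkn : 4 * s * k ≤ n := by
    rw [← hZc]
    exact (card_le_univ Z).trans (by rw [hV']; omega)
  have hZ2 : Tiled E s k (Z.map (Function.Embedding.subtype _)) := Tiled.map _ hZ
  have : Nonempty V := ⟨p⟩
  obtain ⟨u, v, S, hS, hSd⟩ := tiled_paths hE hs hZ2
  have hsR : max (3 / κ) (1 / a) ≤ (s : ℝ) := hs0.trans (by exact_mod_cast le_max_left _ _)
  have hs1 : 3 ≤ s * κ := by
    rw [← div_le_iff₀ hκ]; exact (le_max_left _ _).trans hsR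
  have hs2 : 1 ≤ s * a := by
    rw [← div_le_iff₀ ha]; exact (le_max_right _ _).trans hsR
  have hknR : 4 * (s : ℝ) * k ≤ n := by exact_mod_cast hkn
  have hk0 : (0 : ℝ) ≤ k := by positivity
  have hkκ : 3 * (k : ℝ) ≤ κ / 4 * n := by nlinarith
  have hka : (k : ℝ) ≤ a / 4 * n := by nlinarith
  have hnκ : 6 ≤ n * κ := by
    rw [← div_le_iff₀ hκ]; exact hn4.trans (by exact_mod_cast g4)
  refine finish hE hV hev (B := a * n) (by positivity) hP hRP hsup (k := k) (c := 4 * s - 1)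
    u v S (fun i hi => (hS i hi).1) ?_ (fun i hi => (hS i hi).2.2) hSd ?_ ?_
  · intro i hi
    rw [disjoint_left]
    intro y hy
    obtain ⟨z, -, rfl⟩ := mem_map.1 ((hS i hi).2.1 hy)
    exact z.2
  · have : ((3 * (k + 1) : ℕ) : ℝ) ≤ M := by push_cast; nlinarith
    exact_mod_cast this
  · rw [hn'R] at hk
    have e : ((4 * s - 1 : ℕ) : ℝ) = 4 * s - 1 := by
      rw [Nat.cast_sub (by omega)]; push_cast; ring
    rw [e]
    have : a / 4 * ((n : ℝ) - X.card) ≤ a / 4 * n := by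
      gcongr; linarith [show (0 : ℝ) ≤ X.card by positivity]
    rw [hXR] at hk this
    linarith

end

theorem deg_of_hyper {V : Type} [Fintype V] [DecidableEq V] (H : Finset (Finset V))
    (h3 : ∀ e ∈ H, e.card = 3) (v : V) (R : V × V → Prop) [DecidablePred R]
    (hR : ∀ p, R p ↔ ({v, p.1, p.2} : Finset V) ∈ H) :
    2 * (H.filter (fun e => v ∈ e)).card ≤ (univ.filter R).card := by
  rw [card_eq_sum_card_fiberwise (f := fun p : V × V => ({v, p.1, p.2} : Finset V))
    (s := univ.filter R) (t := H.filter (fun e => v ∈ e))]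
  · rw [mul_comm, ← smul_eq_mul]
    apply card_nsmul_le_sum
    intro e he
    obtain ⟨heH, hve⟩ := mem_filter.1 he
    have h2 : (e.erase v).card = 2 := by rw [card_erase_of_mem hve, h3 e heH]
    obtain ⟨a, b, hab, heq⟩ := card_eq_two.1 h2
    have e1 : ({v, a, b} : Finset V) = e := by rw [← heq, insert_erase hve]
    have e2 : ({v, b, a} : Finset V) = e := by rw [pair_comm b a]; exact e1
    refine one_lt_card.2 ⟨(a, b), ?_, (b, a), ?_, ?_⟩
    · simp only [mem_filter, mem_univ, true_and, hR]
      exact ⟨e1 ▸ heH, e1⟩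
    · simp only [mem_filter, mem_univ, true_and, hR]
      exact ⟨e2 ▸ heH, e2⟩
    · intro h
      exact hab (Prod.ext_iff.1 h).1
  · intro p hp
    simp only [coe_filter, mem_univ, true_and, Set.mem_setOf_eq, hR] at hp ⊢
    exact ⟨hp, by simp⟩

theorem loose_hamilton_cycle_min_vertex_degree (γ : ℝ) (hγ : 0 < γ) :
    ∃ n₀ : ℕ, ∀ (V : Type) [Fintype V] [DecidableEq V], ∀ (H : Finset (Finset V)) (n : ℕ),
      n₀ < n → Even n → Fintype.card V = n →
      (∀ e ∈ H, e.card = 3) →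
      (∀ v : V, (7 / 16 + γ) * (n.choose 2 : ℝ) <
        (((H.filter (fun e => v ∈ e)).card : ℕ) : ℝ)) →
      HasLooseHamCycle H n := by
  set g : ℝ := min γ 1 with hg
  have hg0 : 0 < g := by positivity
  have hgγ : g ≤ γ := min_le_left _ _
  have hg1 : g ≤ 1 := min_le_right _ _
  obtain ⟨n0, hcore⟩ := core (g / 2) (by positivity) (by linarith)
  obtain ⟨n1, hn1⟩ := exists_nat_ge ((7 / 16 + g) / (g / 2))
  refine ⟨max n0 n1, ?_⟩
  intro V _ _ H n hn hev hV h3 hdeg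
  have b0 : n0 ≤ n := by omega
  have b1 : n1 ≤ n := by omega
  have hE : Sym3 (fun a b c : V => ({a, b, c} : Finset V) ∈ H) := by
    refine ⟨?_, ?_, ?_⟩
    · intro a b c h
      rwa [insert_comm] at h
    · intro a b c h
      rwa [pair_comm] at h
    · rintro a b c h rfl
      have h4 := h3 _ h
      rw [insert_eq_of_mem (by simp)] at h4
      have := card_le_two (a := a) (b := c)
      omega
  have hb : (7 / 16 + g) ≤ g / 2 * n := by
    have : (n1 : ℝ) ≤ n := by exact_mod_cast b1
    have := hn1.trans this
    rw [div_le_iff₀ (by positivity)] at this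
    linarith
  obtain ⟨f, hf, hfe⟩ := hcore V _ n hE hV b0 hev (by
    intro v
    have h1 := hdeg v
    have h2 := deg_of_hyper H h3 v (fun p : V × V => ({v, p.1, p.2} : Finset V) ∈ H)
      (fun p => Iff.rfl)
    have h3 : 2 * ((H.filter (fun e => v ∈ e)).card : ℝ) ≤
      ((univ.filter (fun p : V × V => ({v, p.1, p.2} : Finset V) ∈ H)).card : ℝ) := by
      exact_mod_cast h2
    rw [Nat.cast_choose_two] at h1
    have h4 : (7 / 16 + g / 2) * (n : ℝ) ^ 2 ≤ 2 * ((7 / 16 + γ) * ((n : ℝ) * (n - 1) / 2)) := by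
      have hn1 : (1 : ℝ) ≤ n := by exact_mod_cast (by omega : 1 ≤ n)
      have k1 : 0 ≤ (γ - g) * ((n : ℝ) * (n - 1)) :=
        mul_nonneg (by linarith) (mul_nonneg (by linarith) (by linarith))
      have k2 := mul_le_mul_of_nonneg_right hb (show (0 : ℝ) ≤ n by linarith)
      nlinarith
    have h5 : (7 / 16 + g / 2) * (n : ℝ) ^ 2 ≤
      ((univ.filter (fun p : V × V => ({v, p.1, p.2} : Finset V) ∈ H)).card : ℝ) := by linarith
    convert h5)
  exact ⟨f, hf, hfe⟩
end

section
/- For every even n there exists a 3-uniform hypergraph H₃ on n vertices with minimum vertex degree δ₁(H₃) ≥ C(⌊n/4⌋−1, 2) + (⌊n/4⌋−1)·(n − ⌊n/4⌋) which contains no loose Hamilton cycle. (In particular δ₁(H₃) ≥ (7/16)·C(n,2) − 2n.) -/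
open Finset

lemma aux_choose (a b : ℕ) : (a + b).choose 2 = a.choose 2 + a * b + b.choose 2 := by
  induction a with
  | zero => simp
  | succ a ih =>
    have h1 : a + 1 + b = (a + b) + 1 := by ring
    rw [h1, Nat.choose_succ_succ' (a + b) 1, ih, Nat.choose_succ_succ' a 1]
    simp
    ring

lemma aux_nocycle (n a : ℕ) (h0 : 0 < n) (hn : Even n) (ha : 2 * a < n / 2)
    (A : Finset (Fin n)) (hA : A.card = a) (H : Finset (Finset (Fin n)))
    (hH : ∀ e ∈ H, ∃ x ∈ e, x ∈ A) : ¬ HasLooseHamCycle H n := by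
  rintro ⟨f, hf, hE⟩
  haveI : NeZero n := ⟨h0.ne'⟩
  have key : ∀ j : ℕ, ∃ x : Fin n, j < n / 2 → x ∈ A ∧
      ∃ k < 3, x = f ((2 * j + k : ℕ) : ZMod n) := by
    intro j
    by_cases hj : j < n / 2
    · obtain ⟨x, hx, hxA⟩ := hH _ (hE j hj)
      refine ⟨x, fun _ => ⟨hxA, ?_⟩⟩
      simp only [mem_insert, mem_singleton] at hx
      rcases hx with h | h | h
      · exact ⟨0, by norm_num, h⟩
      · exact ⟨1, by norm_num, h⟩
      · exact ⟨2, by norm_num, h⟩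
    · exact ⟨⟨0, h0⟩, fun h => absurd h hj⟩
  choose g hg using key
  have hcard := Finset.card_le_mul_card_image_of_maps_to (s := range (n / 2)) (t := A) (f := g)
    (fun j hj => (hg j (mem_range.1 hj)).1) 2 ?_
  · rw [card_range, hA] at hcard
    omega
  · intro x hx
    obtain ⟨t, rfl⟩ := hf.2 x
    refine (card_le_card (t := {t.val / 2, if t.val = 0 then n / 2 - 1 else t.val / 2 - 1})
      ?_).trans (card_le_two)
    intro j hj
    rw [mem_filter, mem_range] at hj
    obtain ⟨hj, hgj⟩ := hj
    obtain ⟨-, k, hk, h⟩ := hg j hj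
    have ht : t = ((2 * j + k : ℕ) : ZMod n) := hf.1 (hgj.symm.trans h)
    have hv : t.val = (2 * j + k) % n := by rw [ht, ZMod.val_natCast]
    rw [mem_insert, mem_singleton]
    obtain ⟨m, rfl⟩ := hn
    by_cases hlt : 2 * j + k < m + m
    · rw [Nat.mod_eq_of_lt hlt] at hv
      split_ifs <;> omega
    · have : 2 * j + k = m + m := by omega
      rw [this, Nat.mod_self] at hv
      rw [if_pos hv]
      omega

lemma aux_deg (n : ℕ) (v : Fin n) (H : Finset (Finset (Fin n))) (S : Finset (Finset (Fin n)))
    (hS : ∀ p ∈ S, v ∉ p ∧ insert v p ∈ H) : S.card ≤ (H.filter (fun e => v ∈ e)).card := by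
  refine card_le_card_of_injOn (fun p => insert v p) ?_ ?_
  · intro p hp
    simp [(hS p hp).2]
  · intro p hp q hq h
    have := congrArg (fun s => s.erase v) h
    simpa [erase_insert (hS p hp).1, erase_insert (hS q hq).1] using this

theorem lower_bound_construction (n : ℕ) (hn : Even n) :
    ∃ H : Finset (Finset (Fin n)),
      (∀ e ∈ H, e.card = 3) ∧
      (∀ v : Fin n,
        (n / 4 - 1).choose 2 + (n / 4 - 1) * (n - n / 4) ≤
          (H.filter (fun e => v ∈ e)).card) ∧
      ¬ HasLooseHamCycle H n := by
  rcases Nat.eq_zero_or_pos n with rfl | h0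
  · refine ⟨∅, by simp, fun v => v.elim0, ?_⟩
    rintro ⟨f, -⟩
    exact (f 0).elim0
  obtain ⟨A, -, hA⟩ := exists_subset_card_eq (s := (univ : Finset (Fin n))) (n := n / 4 - 1)
    (by simp; omega)
  refine ⟨(powersetCard 3 univ).filter (fun e => ∃ x ∈ e, x ∈ A), ?_, ?_, ?_⟩
  · intro e he
    exact (mem_powersetCard.1 (mem_filter.1 he).1).2
  · intro v
    by_cases h4 : n / 4 - 1 = 0
    · simp [h4]
    have e1 : n - 1 = (n / 4 - 1) + (n - n / 4) := by omega
    have hc := aux_choose (n / 4 - 1) (n - n / 4)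
    rw [← e1] at hc
    have hW : (univ.erase v : Finset (Fin n)).card = n - 1 := by simp
    have h3 : ∀ p ∈ powersetCard 2 (univ.erase v), v ∉ p ∧ (insert v p).card = 3 := by
      intro p hp
      rw [mem_powersetCard] at hp
      have : v ∉ p := fun h => by simpa using hp.1 h
      exact ⟨this, by rw [card_insert_of_notMem this, hp.2]⟩
    by_cases hv : v ∈ A
    · refine le_trans ?_ (aux_deg n v _ (powersetCard 2 (univ.erase v)) ?_)
      · rw [card_powersetCard, hW]; omega
      · intro p hp
        refine ⟨(h3 p hp).1, mem_filter.2 ⟨mem_powersetCard.2 ⟨subset_univ _, (h3 p hp).2⟩, v, ?_, hv⟩⟩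
        simp
    · refine le_trans ?_ (aux_deg n v _
        (powersetCard 2 (univ.erase v) \ powersetCard 2 (univ.erase v \ A)) ?_)
      · refine le_trans ?_ (le_card_sdiff _ _)
        have hs : A ⊆ univ.erase v := fun x hx => by
          simp only [mem_erase, mem_univ, and_true]
          rintro rfl; exact hv hx
        rw [card_powersetCard, card_powersetCard, card_sdiff_of_subset hs, hW, hA]
        have : n - 1 - (n / 4 - 1) = n - n / 4 := by omega
        rw [this]; omega
      · intro p hp
        rw [mem_sdiff] at hp
        obtain ⟨hp, hq⟩ := hp
        refine ⟨(h3 p hp).1, mem_filter.2 ⟨mem_powersetCard.2 ⟨subset_univ _, (h3 p hp).2⟩, ?_⟩⟩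
        by_contra hcon
        push Not at hcon
        apply hq
        rw [mem_powersetCard] at hp ⊢
        refine ⟨fun x hx => mem_sdiff.2 ⟨hp.1 hx, hcon x (mem_insert_of_mem hx)⟩, hp.2⟩
  · refine aux_nocycle n (n / 4 - 1) h0 hn ?_ A hA _ (fun e he => (mem_filter.1 he).2)
    obtain ⟨m, rfl⟩ := hn
    omega
end

section
/- Let γ > 0 and let m ≥ 1 be an integer, and let H=(V,E) be a 3-uniform hypergraph on n vertices with δ₁(H) ≥ (1/4 + γ)·C(n,2) and m ≤ γn/12. Then for every system (a_i,b_i)_{i∈[m]} of mutually disjoint pairs of distinct vertices of H, there exists a set of triples (x_i,y_i,z_i)_{i∈[m]} connecting (a_i,b_i)_{i∈[m]}. -/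
open Finset

/-- The triples `(x i, y i, z i)` connect the mutually disjoint pairs `(a i, b i)`:
all `5m` vertices involved are distinct and `{a i, x i, y i}` and `{y i, z i, b i}`
are edges of `H` for every `i`. -/
def Connects {V : Type} [DecidableEq V] (H : Finset (Finset V)) (m : ℕ)
    (a b x y z : Fin m → V) : Prop :=
  Function.Injective (fun p : Fin m × Fin 5 => ![a p.1, b p.1, x p.1, y p.1, z p.1] p.2) ∧
  ∀ i : Fin m, ({a i, x i, y i} : Finset V) ∈ H ∧ ({y i, z i, b i} : Finset V) ∈ H

lemma link_count {V : Type} [Fintype V] [DecidableEq V] (H : Finset (Finset V))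
    (huniform : ∀ e ∈ H, e.card = 3) (a : V) :
    2 * (H.filter (fun e => a ∈ e)).card ≤
      ((univ : Finset (V × V)).filter (fun p => ({a, p.1, p.2} : Finset V) ∈ H)).card := by
  have hmaps : ∀ p ∈ ((univ : Finset (V × V)).filter (fun p => ({a, p.1, p.2} : Finset V) ∈ H)),
      ({a, p.1, p.2} : Finset V) ∈ H.filter (fun e => a ∈ e) := by
    intro p hp
    simp only [mem_filter, mem_univ, true_and] at hp ⊢
    exact ⟨hp, by simp⟩
  rw [Finset.card_eq_sum_card_fiberwise hmaps, mul_comm, ← smul_eq_mul]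
  apply Finset.card_nsmul_le_sum
  intro e he
  simp only [mem_filter] at he
  have h2 : (e.erase a).card = 2 := by
    rw [card_erase_of_mem he.2, huniform e he.1]
  obtain ⟨x, y, hxy, hE⟩ := Finset.card_eq_two.1 h2
  have h1 : ({a, x, y} : Finset V) = e := by
    rw [← hE, insert_erase he.2]
  have h3 : ({a, y, x} : Finset V) = e := by
    rw [← h1, Finset.pair_comm]
  have : 1 < (filter (fun p : V × V => ({a, p.1, p.2} : Finset V) = e)
      ((univ : Finset (V × V)).filter (fun p => ({a, p.1, p.2} : Finset V) ∈ H))).card := by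
    rw [Finset.one_lt_card]
    refine ⟨(x, y), ?_, (y, x), ?_, ?_⟩
    · simp [h1, he.1]
    · simp [h3, he.1]
    · simp [hxy]
  exact this

/-- pair counting after deletion of `U` -/
lemma link_count_del {V : Type} [Fintype V] [DecidableEq V] (H : Finset (Finset V))
    (huniform : ∀ e ∈ H, e.card = 3) (a : V) (U : Finset V) :
    2 * (H.filter (fun e => a ∈ e)).card ≤
      ((univ : Finset (V × V)).filter
        (fun p => p.1 ∉ U ∧ p.2 ∉ U ∧ ({a, p.1, p.2} : Finset V) ∈ H)).card
      + 2 * (U.card * Fintype.card V) := by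
  refine (link_count H huniform a).trans ?_
  have hsub : ((univ : Finset (V × V)).filter (fun p => ({a, p.1, p.2} : Finset V) ∈ H)) ⊆
      ((univ : Finset (V × V)).filter
        (fun p => p.1 ∉ U ∧ p.2 ∉ U ∧ ({a, p.1, p.2} : Finset V) ∈ H)) ∪
      (U ×ˢ univ ∪ univ ×ˢ U) := by
    intro p hp
    simp only [mem_filter, mem_univ, true_and, mem_union, mem_product, and_true] at hp ⊢
    tauto
  refine (card_le_card hsub).trans ((card_union_le _ _).trans ?_)
  have := card_union_le (U ×ˢ (univ : Finset V)) (univ ×ˢ U)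
  simp only [card_product, card_univ] at this
  nlinarith

/-- number of pairs bounded through the set of vertices of degree at least two -/
lemma pairs_bound {V : Type} [Fintype V] [DecidableEq V] (R : V → V → Prop) [DecidableRel R]
    (hs : ∀ x y, R x y → R y x) (S : Finset V)
    (hS : ∀ y, y ∉ S → ∀ x x', R y x → R y x' → x = x') :
    ((univ : Finset (V × V)).filter (fun p => R p.1 p.2)).card + 2 * S.card ≤
      S.card * S.card + 2 * Fintype.card V := by
  have hsub : ((univ : Finset (V × V)).filter (fun p => R p.1 p.2)) ⊆
      S ×ˢ S ∪ (((univ : Finset (V × V)).filter (fun p => R p.1 p.2 ∧ p.1 ∉ S)) ∪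
       ((univ : Finset (V × V)).filter (fun p => R p.1 p.2 ∧ p.2 ∉ S))) := by
    intro p hp
    simp only [mem_filter, mem_univ, true_and, mem_union, mem_product] at hp ⊢
    tauto
  have h1 : ((univ : Finset (V × V)).filter (fun p => R p.1 p.2 ∧ p.1 ∉ S)).card ≤ Sᶜ.card := by
    apply Finset.card_le_card_of_injOn Prod.fst
    · intro p hp
      simp at hp ⊢
      exact hp.2
    · rintro ⟨p, q⟩ hp ⟨p', q'⟩ hp' h
      simp at hp hp' h ⊢
      subst h
      exact ⟨rfl, hS _ hp.2 _ _ hp.1 hp'.1⟩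
  have h2 : ((univ : Finset (V × V)).filter (fun p => R p.1 p.2 ∧ p.2 ∉ S)).card ≤ Sᶜ.card := by
    apply Finset.card_le_card_of_injOn Prod.snd
    · intro p hp
      simp at hp ⊢
      exact hp.2
    · rintro ⟨p, q⟩ hp ⟨p', q'⟩ hp' h
      simp at hp hp' h ⊢
      subst h
      exact ⟨hS _ hp.2 _ _ (hs _ _ hp.1) (hs _ _ hp'.1), rfl⟩
  have h3 := Finset.card_add_card_compl S
  have h4 := (card_le_card hsub).trans ((card_union_le _ _).trans
    (Nat.add_le_add_left (card_union_le _ _) _))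
  rw [card_product] at h4
  omega

lemma path_exists {V : Type} [Fintype V] [DecidableEq V] (Ra Rb : V → V → Prop)
    [DecidableRel Ra] [DecidableRel Rb]
    (hsa : ∀ x y, Ra x y → Ra y x) (hsb : ∀ x y, Rb x y → Rb y x)
    (hn : 8 ≤ Fintype.card V)
    (ha : Fintype.card V * Fintype.card V + 4 * Fintype.card V <
      4 * ((univ : Finset (V × V)).filter (fun p => Ra p.1 p.2)).card)
    (hb : Fintype.card V * Fintype.card V + 4 * Fintype.card V <
      4 * ((univ : Finset (V × V)).filter (fun p => Rb p.1 p.2)).card) :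
    ∃ x y z, Ra x y ∧ Rb y z ∧ x ≠ z := by
  by_contra! hcon
  have key : ∀ (R : V → V → Prop) [DecidableRel R], (∀ x y, R x y → R y x) →
      Fintype.card V * Fintype.card V + 4 * Fintype.card V <
        4 * ((univ : Finset (V × V)).filter (fun p => R p.1 p.2)).card →
      Fintype.card V < 2 * ((univ : Finset V).filter
        (fun y => ∃ x x', R y x ∧ R y x' ∧ x ≠ x')).card := by
    intro R _ hs h
    have := pairs_bound R hs ((univ : Finset V).filter
        (fun y => ∃ x x', R y x ∧ R y x' ∧ x ≠ x')) (by
      intro y hy x x' h1 h2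
      simp only [mem_filter, mem_univ, true_and] at hy
      by_contra hne
      exact hy ⟨x, x', h1, h2, hne⟩)
    generalize (filter (fun y => ∃ x x', R y x ∧ R y x' ∧ x ≠ x') univ).card = p at *
    generalize (filter (fun p : V × V => R p.1 p.2) univ).card = q at *
    generalize Fintype.card V = n at *
    by_contra! hp
    zify at *
    nlinarith [mul_nonneg (sub_nonneg.2 hp) (by linarith : (0:ℤ) ≤ n + 2 * p - 4)]
  have k1 := key Ra hsa ha
  have k2 := key Rb hsb hb
  have hdis : Disjoint ((univ : Finset V).filter (fun y => ∃ x x', Ra y x ∧ Ra y x' ∧ x ≠ x'))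
      ((univ : Finset V).filter (fun y => ∃ x x', Rb y x ∧ Rb y x' ∧ x ≠ x')) := by
    rw [Finset.disjoint_left]
    intro y h1 h2
    simp only [mem_filter, mem_univ, true_and] at h1 h2
    obtain ⟨x, x', hx, hx', hne⟩ := h1
    obtain ⟨z, z', hz, hz', hne'⟩ := h2
    exact hne ((hcon x y z (hsa _ _ hx) hz).trans (hcon x' y z (hsa _ _ hx') hz).symm)
  have := card_union_of_disjoint hdis
  have h' := card_le_univ ((univ : Finset V).filter (fun y => ∃ x x', Ra y x ∧ Ra y x' ∧ x ≠ x') ∪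
      ((univ : Finset V).filter (fun y => ∃ x x', Rb y x ∧ Rb y x' ∧ x ≠ x')))
  omega

lemma step_exists (γ : ℝ) (hγ : 0 < γ) (m : ℕ) (hm : 1 ≤ m)
    (V : Type) [Fintype V] [DecidableEq V] (H : Finset (Finset V)) (n : ℕ)
    (hcard : Fintype.card V = n) (huniform : ∀ e ∈ H, e.card = 3)
    (hdeg : ∀ v : V, (1 / 4 + γ) * (n.choose 2 : ℝ) ≤
      ((H.filter (fun e => v ∈ e)).card : ℝ))
    (hmn : (m : ℝ) ≤ γ * n / 12) (h2n : 2 ≤ n) (a b : V) (U : Finset V)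
    (hU : U.card + 3 ≤ 5 * m) :
    ∃ x y z : V, x ∉ U ∧ y ∉ U ∧ z ∉ U ∧ x ≠ y ∧ y ≠ z ∧ x ≠ z ∧
      ({a, x, y} : Finset V) ∈ H ∧ ({y, z, b} : Finset V) ∈ H := by
  have hch : ((n.choose 2 : ℕ) : ℝ) = n * (n - 1) / 2 := Nat.cast_choose_two ℝ n
  have h2n' : (2:ℝ) ≤ n := by exact_mod_cast h2n
  have hm' : (1:ℝ) ≤ m := by exact_mod_cast hm
  have hU' : (U.card : ℝ) + 3 ≤ 5 * m := by exact_mod_cast hU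
  -- γ ≤ 3/4
  have hγ1 : γ ≤ 3 / 4 := by
    have h1 := link_count H huniform a
    have h2 : ((univ : Finset (V × V)).filter (fun p => ({a, p.1, p.2} : Finset V) ∈ H)).card ≤
        n * n - n := by
      have : ((univ : Finset (V × V)).filter (fun p => ({a, p.1, p.2} : Finset V) ∈ H)) ⊆
          (univ : Finset V).offDiag := by
        intro p hp
        simp only [mem_filter, mem_univ, true_and, mem_offDiag] at hp ⊢
        intro h
        have h3 := huniform _ hp
        rw [h] at h3
        have h4 := card_le_two (a := a) (b := p.2)
        simp only [mem_singleton, insert_eq_of_mem] at h3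
        omega
      have h4 := card_le_card this
      rwa [offDiag_card, card_univ, hcard] at h4
    have h3 : 2 * (H.filter (fun e => a ∈ e)).card + n ≤ n * n := by
      have : n ≤ n * n := Nat.le_mul_self n
      omega
    have h3' : 2 * ((H.filter (fun e => a ∈ e)).card : ℝ) + n ≤ n * n := by exact_mod_cast h3
    have h4 := hdeg a
    rw [hch] at h4
    by_contra! hc
    nlinarith [mul_pos (sub_pos.2 hc) (by nlinarith : (0:ℝ) < n * (n - 1))]
  have hn16 : (16:ℝ) * m ≤ n := by nlinarith
  have hn16' : 16 ≤ n := by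
    have : (16:ℝ) ≤ n := by linarith
    exact_mod_cast this
  have big : ∀ v : V, Fintype.card V * Fintype.card V + 4 * Fintype.card V <
      4 * ((univ : Finset (V × V)).filter
        (fun p => p.1 ∉ U ∧ p.2 ∉ U ∧ ({v, p.1, p.2} : Finset V) ∈ H)).card := by
    intro v
    have h1 := link_count_del H huniform v U
    have h2 := hdeg v
    rw [hch] at h2
    rw [hcard] at h1 ⊢
    generalize (filter (fun p : V × V => p.1 ∉ U ∧ p.2 ∉ U ∧ ({v, p.1, p.2} : Finset V) ∈ H)
      univ).card = q at *
    generalize (filter (fun e => v ∈ e) H).card = d at *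
    have h1' : 2 * (d:ℝ) ≤ q + 2 * (U.card * n) := by exact_mod_cast h1
    have h3 : (U.card : ℝ) * n ≤ (5 * m - 3) * n := by
      apply mul_le_mul_of_nonneg_right <;> linarith
    have h4 : (12 * m : ℝ) * (n - 1) ≤ γ * n * (n - 1) := by
      apply mul_le_mul_of_nonneg_right <;> linarith
    have h5 : (n:ℝ) ≤ m * n := by nlinarith
    have : (n:ℝ) * n + 4 * n < 4 * q := by nlinarith
    exact_mod_cast this
  have sym : ∀ v x y : V, ({v, x, y} : Finset V) = {v, y, x} := by
    intro v x y
    rw [Finset.pair_comm]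
  obtain ⟨x, y, z, hxy, hyz, hne⟩ := path_exists
    (fun x y => x ∉ U ∧ y ∉ U ∧ ({a, x, y} : Finset V) ∈ H)
    (fun x y => x ∉ U ∧ y ∉ U ∧ ({b, x, y} : Finset V) ∈ H)
    (fun x y h => ⟨h.2.1, h.1, sym a x y ▸ h.2.2⟩)
    (fun x y h => ⟨h.2.1, h.1, sym b x y ▸ h.2.2⟩)
    (by omega) (big a) (big b)
  have ne : ∀ v x y : V, ({v, x, y} : Finset V) ∈ H → x ≠ y := by
    rintro v x y h rfl
    have h3 := huniform _ h
    have h4 := card_le_two (a := v) (b := x)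
    simp only [mem_singleton, insert_eq_of_mem] at h3
    omega
  refine ⟨x, y, z, hxy.1, hxy.2.1, hyz.2.1, ne _ _ _ hxy.2.2, ne _ _ _ hyz.2.2, hne, hxy.2.2, ?_⟩
  have : ({y, z, b} : Finset V) = {b, y, z} := by
    ext w
    simp only [mem_insert, mem_singleton]
    tauto
  rw [this]
  exact hyz.2.2

theorem connecting_lemma (γ : ℝ) (hγ : 0 < γ) (m : ℕ) (hm : 1 ≤ m)
    (V : Type) [Fintype V] [DecidableEq V] (H : Finset (Finset V)) (n : ℕ)
    (hcard : Fintype.card V = n) (huniform : ∀ e ∈ H, e.card = 3)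
    (hdeg : ∀ v : V, (1 / 4 + γ) * (n.choose 2 : ℝ) ≤
      ((H.filter (fun e => v ∈ e)).card : ℝ))
    (hmn : (m : ℝ) ≤ γ * n / 12)
    (a b : Fin m → V)
    (hpairs : Function.Injective (fun p : Fin m × Fin 2 => ![a p.1, b p.1] p.2)) :
    ∃ x y z : Fin m → V, Connects H m a b x y z := by
  have haa : ∀ i j, a i = a j → i = j := fun i j h =>
    congrArg Prod.fst (@hpairs (i, 0) (j, 0) (by simpa using h))
  have hbb : ∀ i j, b i = b j → i = j := fun i j h =>
    congrArg Prod.fst (@hpairs (i, 1) (j, 1) (by simpa using h))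
  have hab : ∀ i j, a i ≠ b j := fun i j h => by
    have := congrArg Prod.snd (@hpairs (i, 0) (j, 1) (by simpa using h))
    simp at this
  have h2n : 2 ≤ n := by
    have := Fintype.card_le_of_injective _ hpairs
    simp only [Fintype.card_prod, Fintype.card_fin] at this
    omega
  let P : Finset V := univ.image a ∪ univ.image b
  have hP : P.card ≤ 2 * m := by
    have h1 := card_union_le (univ.image a) (univ.image b)
    have h2 : (univ.image a).card ≤ m := by simpa using card_image_le (s := univ) (f := a)
    have h3 : (univ.image b).card ≤ m := by simpa using card_image_le (s := univ) (f := b)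
    exact h1.trans (by omega)
  have haP : ∀ i, a i ∈ P := fun i => by simp [P]
  have hbP : ∀ i, b i ∈ P := fun i => by simp [P]
  have main : ∀ S : Finset (Fin m), ∃ x y z : Fin m → V,
      (∀ i ∈ S, x i ∉ P ∧ y i ∉ P ∧ z i ∉ P ∧ x i ≠ y i ∧ y i ≠ z i ∧ x i ≠ z i ∧
        ({a i, x i, y i} : Finset V) ∈ H ∧ ({y i, z i, b i} : Finset V) ∈ H) ∧
      (∀ i ∈ S, ∀ j ∈ S, i ≠ j →
        Disjoint ({x i, y i, z i} : Finset V) {x j, y j, z j}) := by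
    intro S
    induction S using Finset.induction_on with
    | empty => exact ⟨a, a, a, by simp, by simp⟩
    | insert k S hk ih =>
      obtain ⟨x, y, z, h1, h2⟩ := ih
      have hS : S.card + 1 ≤ m := by
        have := card_le_univ (insert k S)
        rwa [card_insert_of_notMem hk, Fintype.card_fin] at this
      have hB : (S.biUnion (fun i => ({x i, y i, z i} : Finset V))).card ≤ S.card * 3 :=
        card_biUnion_le_card_mul _ _ _ (fun i _ => card_le_three)
      have hU := card_union_le P (S.biUnion (fun i => ({x i, y i, z i} : Finset V)))
      obtain ⟨x', y', z', hx, hy, hz, g⟩ := step_exists γ hγ m hm V H n hcard huniform hdeg hmn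
        h2n (a k) (b k) (P ∪ S.biUnion (fun i => ({x i, y i, z i} : Finset V))) (by omega)
      rw [mem_union, not_or] at hx hy hz
      have hnew : ∀ j ∈ S, Disjoint ({x', y', z'} : Finset V) {x j, y j, z j} := by
        intro j hj
        rw [disjoint_left]
        intro w hw hw'
        have hw2 : w ∈ S.biUnion (fun i => ({x i, y i, z i} : Finset V)) :=
          mem_biUnion.2 ⟨j, hj, hw'⟩
        simp only [mem_insert, mem_singleton] at hw
        rcases hw with rfl | rfl | rfl
        · exact hx.2 hw2
        · exact hy.2 hw2
        · exact hz.2 hw2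
      have hne : ∀ j ∈ S, j ≠ k := fun j hj h => hk (h ▸ hj)
      refine ⟨Function.update x k x', Function.update y k y', Function.update z k z', ?_, ?_⟩
      · intro i hi
        rcases mem_insert.1 hi with rfl | hi
        · simp only [Function.update_self]
          exact ⟨hx.1, hy.1, hz.1, g⟩
        · simp only [Function.update_of_ne (hne i hi)]
          exact h1 i hi
      · intro i hi j hj hij
        rcases mem_insert.1 hi with rfl | hi' <;> rcases mem_insert.1 hj with rfl | hj'
        · exact absurd rfl hij
        · simp only [Function.update_self, Function.update_of_ne (hne j hj')]
          exact hnew j hj'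
        · simp only [Function.update_self, Function.update_of_ne (hne i hi')]
          exact (hnew i hi').symm
        · simp only [Function.update_of_ne (hne i hi'), Function.update_of_ne (hne j hj')]
          exact h2 i hi' j hj' hij
  obtain ⟨x, y, z, h1, h2⟩ := main univ
  refine ⟨x, y, z, ?_, fun i => ⟨(h1 i (mem_univ i)).2.2.2.2.2.2.1, (h1 i (mem_univ i)).2.2.2.2.2.2.2⟩⟩
  have d : ∀ i j, ∀ v, v ∈ ({x i, y i, z i} : Finset V) → v ∈ ({x j, y j, z j} : Finset V) →
      i = j := by
    intro i j v hv hv'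
    by_contra hne
    exact disjoint_left.1 (h2 i (mem_univ i) j (mem_univ j) hne) hv hv'
  have hx : ∀ i, x i ∈ ({x i, y i, z i} : Finset V) := fun i => by simp
  have hy : ∀ i, y i ∈ ({x i, y i, z i} : Finset V) := fun i => by simp
  have hz : ∀ i, z i ∈ ({x i, y i, z i} : Finset V) := fun i => by simp
  have hT : ∀ i v, v ∈ ({x i, y i, z i} : Finset V) → v ∉ P := by
    intro i v hv
    obtain ⟨p, q, r, -⟩ := h1 i (mem_univ i)
    simp only [mem_insert, mem_singleton] at hv
    rcases hv with rfl | rfl | rfl <;> assumption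
  have hxy : ∀ i, x i ≠ y i := fun i => (h1 i (mem_univ i)).2.2.2.1
  have hyz : ∀ i, y i ≠ z i := fun i => (h1 i (mem_univ i)).2.2.2.2.1
  have hxz : ∀ i, x i ≠ z i := fun i => (h1 i (mem_univ i)).2.2.2.2.2.1
  clear main h1 h2 hdeg huniform hpairs
  clear_value P
  rintro ⟨i, p⟩ ⟨j, q⟩ h
  fin_cases p <;> fin_cases q <;> simp at h ⊢ <;> grind
end
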